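/- Let (ρ, u) be a very weak solution of the stationary barotropic Navier–Stokes system on ℝ³ with pressure p and potential G = 0, where p : [0,∞) → ℝ is continuous, p(0) = 0, p(s) ≥ 0 for all s ≥ 0, and p is continuously differentiable on (0,∞). Assume ρ ∈ L¹(ℝ³) ∩ L^∞(ℝ³) and u ∈ L^∞(ℝ³;ℝ³). Then there exists a constant vector u_∞ ∈ ℝ³ such that u = u_∞ almost everywhere; moreover, either u_∞ = 0 or ρ = 0 almost everywhere. -/

import Mathlib

noncomputable section

open MeasureTheory Metric Filter Topology Set

/-- Three-dimensional Euclidean space. -/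
abbrev E3 : Type := EuclideanSpace ℝ (Fin 3)

/-- Partial derivative of a scalar function in the `i`-th coordinate direction. -/
def pd (f : E3 → ℝ) (i : Fin 3) : E3 → ℝ :=
  fun x => fderiv ℝ f x (EuclideanSpace.single i 1)

/-- Classical gradient matrix of a vector field: `(tgrad φ x) i j = ∂_j φ_i (x)`. -/
def tgrad (φ : E3 → Fin 3 → ℝ) (x : E3) : Fin 3 → Fin 3 → ℝ :=
  fun i j => pd (fun y => φ y i) j x

/-- Smooth compactly supported scalar test function with support in `Ω`. -/
def IsTest (Ω : Set E3) (φ : E3 → ℝ) : Prop :=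
  ContDiff ℝ ((⊤ : ℕ∞) : WithTop ℕ∞) φ ∧ HasCompactSupport φ ∧ tsupport φ ⊆ Ω

/-- `C^n` compactly supported vector-valued test function with support in `Ω`. -/
def IsTestVec (n : WithTop ℕ∞) (Ω : Set E3) (φ : E3 → Fin 3 → ℝ) : Prop :=
  ContDiff ℝ n φ ∧ HasCompactSupport φ ∧ tsupport φ ⊆ Ω

/-- The Newtonian viscous stress tensor
`S(M) = μ (M + Mᵗ - (2/3) (tr M) I) + η (tr M) I`. -/
def Smat (μ η : ℝ) (M : Fin 3 → Fin 3 → ℝ) : Fin 3 → Fin 3 → ℝ :=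
  fun i j =>
    μ * (M i j + M j i - (2 / 3) * (∑ k, M k k) * (if i = j then (1 : ℝ) else 0))
      + η * (∑ k, M k k) * (if i = j then (1 : ℝ) else 0)

/-- `dG` is the weak gradient of the scalar function `G` on `Ω`. -/
def HasWeakGradOn (Ω : Set E3) (G : E3 → ℝ) (dG : E3 → Fin 3 → ℝ) : Prop :=
  ∀ φ : E3 → ℝ, IsTest Ω φ → ∀ i : Fin 3,
    ∫ x in Ω, G x * pd φ i x = - ∫ x in Ω, dG x i * φ x

/-- `du` is the weak gradient (Jacobian) of the vector field `u` on `Ω`. -/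
def HasWeakGradVecOn (Ω : Set E3) (u : E3 → Fin 3 → ℝ) (du : E3 → Fin 3 → Fin 3 → ℝ) : Prop :=
  ∀ φ : E3 → ℝ, IsTest Ω φ → ∀ i j : Fin 3,
    ∫ x in Ω, u x i * pd φ j x = - ∫ x in Ω, du x i j * φ x

/-- `u ∈ D₀^{1,2}(Ω; ℝ³)` with weak gradient `du`: `u` is locally integrable on `Ω`, its weak
gradient belongs to `L²(Ω)`, and `u` can be approximated by smooth compactly supported fields
`uₙ` with `∇uₙ → ∇u` in `L²(Ω)` and `uₙ → u` in `L⁶(Ω)`. -/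
def MemD012 (Ω : Set E3) (u : E3 → Fin 3 → ℝ) (du : E3 → Fin 3 → Fin 3 → ℝ) : Prop :=
  LocallyIntegrableOn u Ω volume ∧
  HasWeakGradVecOn Ω u du ∧
  MemLp du 2 (volume.restrict Ω) ∧
  ∃ un : ℕ → E3 → Fin 3 → ℝ,
    (∀ n, IsTestVec ((⊤ : ℕ∞) : WithTop ℕ∞) Ω (un n)) ∧
    Tendsto (fun n => eLpNorm (fun x => tgrad (un n) x - du x) 2 (volume.restrict Ω))
      atTop (𝓝 0) ∧
    Tendsto (fun n => eLpNorm (fun x => un n x - u x) 6 (volume.restrict Ω)) atTop (𝓝 0)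

/-- `G ∈ D₀^{1,q}(Ω)` with weak gradient `dG`. -/
def MemD01q (Ω : Set E3) (G : E3 → ℝ) (dG : E3 → Fin 3 → ℝ) (q : ℝ) : Prop :=
  HasWeakGradOn Ω G dG ∧
  MemLp dG (ENNReal.ofReal q) (volume.restrict Ω) ∧
  ∃ Gn : ℕ → E3 → ℝ,
    (∀ n, IsTest Ω (Gn n)) ∧
    Tendsto (fun n =>
        eLpNorm (fun x => (fun i => pd (Gn n) i x) - dG x) (ENNReal.ofReal q)
          (volume.restrict Ω)) atTop (𝓝 0) ∧
    ∀ K : Set E3, IsCompact K → K ⊆ Ω →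
      Tendsto (fun n => ∫ x in K, |Gn n x - G x|) atTop (𝓝 0)

/-- `G ∈ W^{1,∞}(Ω)` with weak gradient `dG`: both `G` and `∇G` are essentially bounded. -/
def MemW1inf (Ω : Set E3) (G : E3 → ℝ) (dG : E3 → Fin 3 → ℝ) : Prop :=
  HasWeakGradOn Ω G dG ∧
  MemLp G ⊤ (volume.restrict Ω) ∧ MemLp dG ⊤ (volume.restrict Ω)

/-- Weak solution `(ρ, u)` (with weak gradient `du` of `u` and weak gradient `dG` of `G`) of the
stationary barotropic Navier–Stokes system
`div(ρu) = 0`, `div(ρ u⊗u) + ∇p(ρ) − div S(∇u) = ρ∇G` on `Ω` with no-slip boundary condition. -/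
structure WeakSolution (Ω : Set E3) (μ η : ℝ) (p : ℝ → ℝ)
    (G : E3 → ℝ) (dG : E3 → Fin 3 → ℝ)
    (ρ : E3 → ℝ) (u : E3 → Fin 3 → ℝ) (du : E3 → Fin 3 → Fin 3 → ℝ) : Prop where
  aemeas_ρ : AEMeasurable ρ volume
  aemeas_u : AEMeasurable u volume
  weakGrad_G : HasWeakGradOn Ω G dG
  ρ_nonneg : ∀ᵐ x ∂(volume.restrict Ω), 0 ≤ ρ x
  ρu_locInt : LocallyIntegrableOn (fun x => fun i => ρ x * u x i) (closure Ω) volume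
  mass : ∀ φ : E3 → ℝ, ContDiff ℝ ((⊤ : ℕ∞) : WithTop ℕ∞) φ → HasCompactSupport φ →
    ∫ x in Ω, ρ x * (∑ i, u x i * pd φ i x) = 0
  ρ_locInt : LocallyIntegrableOn ρ Ω volume
  ρu2_locInt : LocallyIntegrableOn (fun x => ρ x * (∑ i, (u x i) ^ 2)) Ω volume
  pρ_locInt : LocallyIntegrableOn (fun x => p (ρ x)) Ω volume
  ρdG_locInt : LocallyIntegrableOn (fun x => fun i => ρ x * dG x i) Ω volume
  u_D012 : MemD012 Ω u du
  momentum : ∀ φ : E3 → Fin 3 → ℝ, IsTestVec 1 Ω φ →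
    ∫ x in Ω, ((∑ i, ∑ j, ρ x * u x i * u x j * tgrad φ x i j)
        + p (ρ x) * (∑ i, tgrad φ x i i))
      = (∫ x in Ω, ∑ i, ∑ j, Smat μ η (du x) i j * tgrad φ x i j)
        - ∫ x in Ω, ∑ i, ρ x * dG x i * φ x i

/-- Componentwise Laplacian of a vector field: `lap φ i x = Δφ_i(x)`. -/
def lap (φ : E3 → Fin 3 → ℝ) (i : Fin 3) : E3 → ℝ :=
  fun x => ∑ j, pd (pd (fun y => φ y i) j) j x

/-- `i`-th component of the gradient of the divergence: `∂_i (div φ)(x)`. -/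
def gradDivg (φ : E3 → Fin 3 → ℝ) (i : Fin 3) : E3 → ℝ :=
  pd (fun y => ∑ j, pd (fun z => φ z j) j y) i

/-- Euclidean norm of a vector in `ℝ³` (represented as `Fin 3 → ℝ`). -/
def vnorm (v : Fin 3 → ℝ) : ℝ := Real.sqrt (∑ i, (v i) ^ 2)

/-- Very weak solution `(ρ, u)` of the stationary barotropic Navier–Stokes system
`div(ρu) = 0`, `div(ρ u⊗u) + ∇p(ρ) − div S(∇u) = ρ∇G` on `ℝ³`, where the viscous term is
tested using `div S(∇φ) = μΔφ + (μ/3 + η)∇(div φ)` for `C²` test functions `φ`. -/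
structure VeryWeakSolution (μ η : ℝ) (p : ℝ → ℝ) (G : E3 → ℝ) (dG : E3 → Fin 3 → ℝ)
    (ρ : E3 → ℝ) (u : E3 → Fin 3 → ℝ) : Prop where
  aemeas_ρ : AEMeasurable ρ volume
  aemeas_u : AEMeasurable u volume
  weakGrad_G : HasWeakGradOn univ G dG
  ρ_nonneg : ∀ᵐ x, 0 ≤ ρ x
  ρu_locInt : LocallyIntegrable (fun x => fun i => ρ x * u x i) volume
  mass : ∀ φ : E3 → ℝ, ContDiff ℝ ((⊤ : ℕ∞) : WithTop ℕ∞) φ → HasCompactSupport φ →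
    ∫ x, ρ x * (∑ i, u x i * pd φ i x) = 0
  ρ_locInt : LocallyIntegrable ρ volume
  ρu2_locInt : LocallyIntegrable (fun x => ρ x * (∑ i, (u x i) ^ 2)) volume
  pρ_locInt : LocallyIntegrable (fun x => p (ρ x)) volume
  ρdG_locInt : LocallyIntegrable (fun x => fun i => ρ x * dG x i) volume
  u_locInt : LocallyIntegrable u volume
  momentum : ∀ φ : E3 → Fin 3 → ℝ, ContDiff ℝ 2 φ → HasCompactSupport φ →
    ∫ x, ((∑ i, ∑ j, ρ x * u x i * u x j * tgrad φ x i j)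
        + p (ρ x) * (∑ i, tgrad φ x i i))
      = - (∫ x, ∑ i, (μ * lap φ i x + (μ / 3 + η) * gradDivg φ i x) * u x i)
        - ∫ x, ∑ i, ρ x * dG x i * φ x i

/-- Test functions: smooth with compact support. -/
structure TF (χ : E3 → ℝ) : Prop where
  smooth : ContDiff ℝ ((⊤ : ℕ∞) : WithTop ℕ∞) χ
  cpt : HasCompactSupport χ

abbrev SM (f : E3 → ℝ) : Prop := ContDiff ℝ ((⊤ : ℕ∞) : WithTop ℕ∞) f

lemma SM.pd {f : E3 → ℝ} (hf : SM f) (i : Fin 3) : SM (pd f i) := by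
  have : ContDiff ℝ ((⊤ : ℕ∞) : WithTop ℕ∞) (fderiv ℝ f) := hf.fderiv_right (by norm_cast)
  exact this.clm_apply contDiff_const

lemma SM.diff {f : E3 → ℝ} (hf : SM f) : Differentiable ℝ f := hf.differentiable (by simp)

lemma SM.one {f : E3 → ℝ} (hf : SM f) : ContDiff ℝ 1 f := hf.of_le (by norm_cast)

lemma hcs_pd {f : E3 → ℝ} (hf : HasCompactSupport f) (i : Fin 3) : HasCompactSupport (pd f i) := by
  have := hf.fderiv (𝕜 := ℝ)
  exact this.comp_left (g := fun L : E3 →L[ℝ] ℝ => L (EuclideanSpace.single i 1)) (by simp)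

lemma TF.pd {f : E3 → ℝ} (hf : TF f) (i : Fin 3) : TF (pd f i) :=
  ⟨SM.pd hf.smooth i, hcs_pd hf.cpt i⟩

lemma TF.diff {f : E3 → ℝ} (hf : TF f) : Differentiable ℝ f := SM.diff hf.smooth
lemma TF.cont {f : E3 → ℝ} (hf : TF f) : Continuous f := hf.smooth.continuous

lemma TF.mul_left {f g : E3 → ℝ} (hf : SM f) (hg : TF g) : TF (fun x => f x * g x) :=
  ⟨hf.mul hg.smooth, hg.cpt.mul_left⟩
lemma TF.mul_right {f g : E3 → ℝ} (hf : TF f) (hg : SM g) : TF (fun x => f x * g x) :=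
  ⟨hf.smooth.mul hg, hf.cpt.mul_right⟩
lemma TF.const_mul {g : E3 → ℝ} (c : ℝ) (hg : TF g) : TF (fun x => c * g x) :=
  TF.mul_left contDiff_const hg
lemma TF.add {f g : E3 → ℝ} (hf : TF f) (hg : TF g) : TF (fun x => f x + g x) :=
  ⟨hf.smooth.add hg.smooth, hf.cpt.add hg.cpt⟩
lemma TF.neg {f : E3 → ℝ} (hf : TF f) : TF (fun x => - f x) := by
  simpa using TF.const_mul (-1) hf
lemma TF.sub {f g : E3 → ℝ} (hf : TF f) (hg : TF g) : TF (fun x => f x - g x) := by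
  simpa [sub_eq_add_neg] using hf.add hg.neg
lemma TF.zero : TF (fun _ => (0:ℝ)) := ⟨contDiff_const, HasCompactSupport.zero⟩
lemma TF.sum {f : Fin 3 → E3 → ℝ} (hf : ∀ i, TF (f i)) : TF (fun x => ∑ i, f i x) := by
  simp only [Fin.sum_univ_three]
  exact ((hf 0).add (hf 1)).add (hf 2)

lemma TF.comp_sub {j : E3 → ℝ} (hj : TF j) (x : E3) : TF (fun t => j (x - t)) := by
  refine ⟨hj.smooth.comp (contDiff_const.sub contDiff_id), ?_⟩
  exact hj.cpt.comp_homeomorph (Homeomorph.subLeft x)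

lemma TF.comp_add {j : E3 → ℝ} (hj : TF j) (x : E3) : TF (fun t => j (t + x)) := by
  refine ⟨hj.smooth.comp (contDiff_id.add contDiff_const), ?_⟩
  exact hj.cpt.comp_homeomorph (Homeomorph.addRight x)

lemma TF.comp_smul {j : E3 → ℝ} (hj : TF j) {c : ℝ} (hc : c ≠ 0) : TF (fun t => j (c • t)) := by
  refine ⟨hj.smooth.comp (contDiff_id.const_smul c), ?_⟩
  exact hj.cpt.comp_homeomorph (Homeomorph.smulOfNeZero c hc)

lemma pd_add {f g : E3 → ℝ} (hf : Differentiable ℝ f) (hg : Differentiable ℝ g) (i : Fin 3) :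
    pd (fun x => f x + g x) i = fun x => pd f i x + pd g i x := by
  ext x; simp only [pd]; rw [fderiv_fun_add (hf x) (hg x)]; rfl
lemma pd_sub {f g : E3 → ℝ} (hf : Differentiable ℝ f) (hg : Differentiable ℝ g) (i : Fin 3) :
    pd (fun x => f x - g x) i = fun x => pd f i x - pd g i x := by
  ext x; simp only [pd]; rw [fderiv_fun_sub (hf x) (hg x)]; rfl
lemma pd_mul {f g : E3 → ℝ} (hf : Differentiable ℝ f) (hg : Differentiable ℝ g) (i : Fin 3) :
    pd (fun x => f x * g x) i = fun x => pd f i x * g x + f x * pd g i x := by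
  ext x; simp only [pd]; rw [fderiv_fun_mul (hf x) (hg x)]; simp; ring
lemma pd_const_mul {g : E3 → ℝ} (c : ℝ) (hg : Differentiable ℝ g) (i : Fin 3) :
    pd (fun x => c * g x) i = fun x => c * pd g i x := by
  ext x; simp only [pd]; rw [fderiv_const_mul (hg x)]; rfl
lemma pd_neg (g : E3 → ℝ) (i : Fin 3) :
    pd (fun x => - g x) i = fun x => - pd g i x := by
  ext x; simp only [pd]; rw [fderiv_fun_neg]; rfl
lemma pd_zero (i : Fin 3) : pd (fun _ => (0:ℝ)) i = fun _ => 0 := by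
  ext x; simp [pd]
lemma pd_sum {f : Fin 3 → E3 → ℝ} (hf : ∀ k, Differentiable ℝ (f k)) (i : Fin 3) :
    pd (fun x => ∑ k, f k x) i = fun x => ∑ k, pd (f k) i x := by
  ext x; simp only [pd]; rw [fderiv_fun_sum (fun k _ => hf k x)]; simp
lemma pd_comp_sub {j : E3 → ℝ} (hj : Differentiable ℝ j) (x : E3) (i : Fin 3) :
    pd (fun t => j (x - t)) i = fun t => - pd j i (x - t) := by
  ext t; simp only [pd]
  have h : HasFDerivAt (fun t : E3 => x - t) (-ContinuousLinearMap.id ℝ E3) t := by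
    simpa using (hasFDerivAt_id (𝕜 := ℝ) t).const_sub x
  have := (hj (x - t)).hasFDerivAt.comp t h
  rw [HasFDerivAt.fderiv (f := fun t => j (x - t)) this]; simp
lemma pd_comp_add {j : E3 → ℝ} (x : E3) (i : Fin 3) :
    pd (fun t => j (t + x)) i = fun t => pd j i (t + x) := by
  ext t; simp only [pd]
  rw [fderiv_comp_add_right]
lemma pd_comp_smul {j : E3 → ℝ} (hj : Differentiable ℝ j) (c : ℝ) (i : Fin 3) :
    pd (fun t => j (c • t)) i = fun t => c * pd j i (c • t) := by
  ext t; simp only [pd]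
  have h : HasFDerivAt (fun t : E3 => c • t) (c • ContinuousLinearMap.id ℝ E3) t :=
    (hasFDerivAt_id (𝕜 := ℝ) t).const_smul c
  have := (hj (c • t)).hasFDerivAt.comp t h
  rw [HasFDerivAt.fderiv (f := fun t => j (c • t)) this]; simp

lemma pd_comm {f : E3 → ℝ} (hf : SM f) (i j : Fin 3) : pd (pd f i) j = pd (pd f j) i := by
  ext x
  have h2 : Differentiable ℝ (fderiv ℝ f) := (hf.fderiv_right (m := 1) (by norm_cast)).differentiable (by simp)
  have key : ∀ a b : Fin 3, pd (pd f a) b x = fderiv ℝ (fderiv ℝ f) x (EuclideanSpace.single b 1) (EuclideanSpace.single a 1) := by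
    intro a b
    have : HasFDerivAt (fun y => fderiv ℝ f y (EuclideanSpace.single a 1)) _ x :=
      (h2 x).hasFDerivAt.clm_apply (hasFDerivAt_const _ _)
    unfold pd
    rw [this.fderiv]; simp
  rw [key, key]
  have : IsSymmSndFDerivAt ℝ f x := by
    apply ContDiffAt.isSymmSndFDerivAt (n := ((⊤ : ℕ∞) : WithTop ℕ∞)) hf.contDiffAt
    simp only [minSmoothness_of_isRCLikeNormedField]; norm_cast
  exact this.eq _ _

lemma cont_pd {f : E3 → ℝ} (hf : ContDiff ℝ 1 f) (i : Fin 3) : Continuous (pd f i) :=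
  (hf.continuous_fderiv (by simp)).clm_apply continuous_const

lemma TF.integrable {f : E3 → ℝ} (hf : TF f) : Integrable f volume :=
  hf.cont.integrable_of_hasCompactSupport hf.cpt

lemma li_mul {f g : E3 → ℝ} (hf : LocallyIntegrable f volume) (hg : Continuous g)
    (hc : HasCompactSupport g) : Integrable (fun x => f x * g x) volume := by
  have := hf.integrable_smul_left_of_hasCompactSupport hg hc
  refine this.congr (Eventually.of_forall fun x => ?_)
  simp [mul_comm]

lemma li_mul_tf {f g : E3 → ℝ} (hf : LocallyIntegrable f volume) (hg : TF g) :
   Integrable (fun x => f x * g x) volume := li_mul hf hg.cont hg.cpt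

/-- integration by parts -/
lemma ibp {f g : E3 → ℝ} (hf : ContDiff ℝ 1 f) (hg : ContDiff ℝ 1 g) (hc : HasCompactSupport g)
    (i : Fin 3) : ∫ x, f x * pd g i x = - ∫ x, pd f i x * g x := by
  apply integral_mul_fderiv_eq_neg_fderiv_mul_of_integrable
  · exact li_mul (cont_pd hf i).locallyIntegrable hg.continuous hc
  · exact li_mul hf.continuous.locallyIntegrable (cont_pd hg i) (hcs_pd hc i)
  · exact li_mul hf.continuous.locallyIntegrable hg.continuous hc
  · exact fun x _ => hf.differentiable (by simp) x
  · exact fun x _ => hg.differentiable (by simp) x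

/-- Laplacian -/
def Lap (f : E3 → ℝ) : E3 → ℝ := fun x => ∑ j, pd (pd f j) j x

lemma TF.lap {f : E3 → ℝ} (hf : TF f) : TF (Lap f) := TF.sum fun j => (hf.pd j).pd j

lemma pd_lap {f : E3 → ℝ} (hf : SM f) (i : Fin 3) : pd (Lap f) i = Lap (pd f i) := by
  unfold Lap
  rw [pd_sum (fun k => (SM.pd (hf.pd k) k).diff)]
  ext x
  refine Finset.sum_congr rfl fun j _ => ?_
  rw [pd_comm (hf.pd j) j i, pd_comm hf j i]

lemma lap_comp_sub {j : E3 → ℝ} (hj : SM j) (x : E3) :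
    Lap (fun t => j (x - t)) = fun t => Lap j (x - t) := by
  ext t
  unfold Lap
  refine Finset.sum_congr rfl fun k _ => ?_
  rw [pd_comp_sub hj.diff, pd_neg, pd_comp_sub (hj.pd k).diff]; simp

/-- convolution -/
def Cv (f j : E3 → ℝ) : E3 → ℝ := fun x => ∫ t, f t * j (x - t)

lemma Cv_eq (f j : E3 → ℝ) : Cv f j = convolution f j (ContinuousLinearMap.lsmul ℝ ℝ) volume := by
  ext x; simp [Cv, convolution]

lemma Cv_smooth {f j : E3 → ℝ} (hf : LocallyIntegrable f volume) (hj : TF j) : SM (Cv f j) := by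
  rw [Cv_eq]; exact hj.cpt.contDiff_convolution_right _ hf hj.smooth

lemma pd_Cv {f j : E3 → ℝ} (hf : LocallyIntegrable f volume) (hj : TF j) (i : Fin 3) :
    pd (Cv f j) i = Cv f (pd j i) := by
  ext x
  rw [Cv_eq, pd, (hj.cpt.hasFDerivAt_convolution_right _ hf (SM.one hj.smooth) x).fderiv]
  rw [convolution_precompR_apply _ hf (hj.cpt.fderiv (𝕜 := ℝ)) ((SM.one hj.smooth).continuous_fderiv (by simp))]
  rw [Cv_eq]; rfl

/-- weak derivative -/
def WD (f g : E3 → ℝ) (i : Fin 3) : Prop := ∀ χ, TF χ → ∫ x, f x * pd χ i x = - ∫ x, g x * χ x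

lemma pd_Cv_WD {f g j : E3 → ℝ} {i : Fin 3} (hf : LocallyIntegrable f volume) (hj : TF j)
    (h : WD f g i) : pd (Cv f j) i = Cv g j := by
  rw [pd_Cv hf hj]
  ext x
  have := h _ (hj.comp_sub x)
  rw [pd_comp_sub hj.diff] at this
  simp only [Cv]
  simp only [mul_neg, integral_neg, neg_inj] at this
  exact this

/-- base bump -/
def bmp : ContDiffBump (0 : E3) := ⟨1, 2, by norm_num, by norm_num⟩

def sg : E3 → ℝ := fun x => bmp x
lemma sg_tf : TF sg := ⟨bmp.contDiff, bmp.hasCompactSupport⟩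
lemma sg_nonneg (x : E3) : 0 ≤ sg x := bmp.nonneg
lemma sg_le_one (x : E3) : sg x ≤ 1 := bmp.le_one
lemma sg_one {x : E3} (hx : ‖x‖ ≤ 1) : sg x = 1 :=
  bmp.one_of_mem_closedBall (by simpa [bmp] using hx)
lemma sg_zero {x : E3} (hx : 2 ≤ ‖x‖) : sg x = 0 :=
  bmp.zero_of_le_dist (by simpa [bmp] using hx)

/-- scaled cutoff -/
def ct (R : ℝ) : E3 → ℝ := fun x => sg (R⁻¹ • x)

lemma ct_tf {R : ℝ} (hR : 0 < R) : TF (ct R) := sg_tf.comp_smul (inv_ne_zero hR.ne')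
lemma ct_nonneg (R : ℝ) (x : E3) : 0 ≤ ct R x := sg_nonneg _
lemma ct_le_one (R : ℝ) (x : E3) : ct R x ≤ 1 := sg_le_one _
lemma ct_one {R : ℝ} (hR : 0 < R) {x : E3} (hx : ‖x‖ ≤ R) : ct R x = 1 := by
  apply sg_one
  rw [norm_smul, norm_inv, Real.norm_of_nonneg hR.le, inv_mul_le_iff₀ hR]; simpa using hx
lemma ct_zero {R : ℝ} (hR : 0 < R) {x : E3} (hx : 2 * R ≤ ‖x‖) : ct R x = 0 := by
  apply sg_zero
  rw [norm_smul, norm_inv, Real.norm_of_nonneg hR.le, le_inv_mul_iff₀ hR]; linarith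

lemma pd_ct (R : ℝ) (i : Fin 3) (x : E3) : pd (ct R) i x = R⁻¹ * pd sg i (R⁻¹ • x) := by
  unfold ct; rw [pd_comp_smul sg_tf.diff]

lemma exists_bd_pd_sg : ∃ K : ℝ, 0 ≤ K ∧ ∀ i x, |pd sg i x| ≤ K := by
  have : ∀ i, ∃ K : ℝ, ∀ x, ‖pd sg i x‖ ≤ K := fun i =>
    (sg_tf.pd i).cont.bounded_above_of_compact_support (sg_tf.pd i).cpt
  choose K hK using this
  refine ⟨∑ i, |K i|, Finset.sum_nonneg fun _ _ => abs_nonneg _, fun i x => ?_⟩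
  calc |pd sg i x| ≤ K i := hK i x
    _ ≤ |K i| := le_abs_self _
    _ ≤ _ := Finset.single_le_sum (f := fun i => |K i|) (fun _ _ => abs_nonneg _) (Finset.mem_univ i)

lemma exists_bd_pd_ct : ∃ K : ℝ, 0 ≤ K ∧ ∀ R : ℝ, 0 < R → ∀ i x, |pd (ct R) i x| ≤ K / R := by
  obtain ⟨K, hK0, hK⟩ := exists_bd_pd_sg
  refine ⟨K, hK0, fun R hR i x => ?_⟩
  rw [pd_ct, abs_mul, abs_of_pos (inv_pos.2 hR), div_eq_inv_mul]
  gcongr; exact hK _ _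

lemma pd_ct_zero {R : ℝ} (hR : 0 < R) {x : E3} (hx : 2 * R < ‖x‖) (i : Fin 3) :
    pd (ct R) i x = 0 := by
  have : ct R =ᶠ[𝓝 x] fun _ => 0 := by
    have : ∀ᶠ y in 𝓝 x, 2 * R < ‖y‖ := continuous_norm.continuousAt.eventually (lt_mem_nhds hx)
    filter_upwards [this] with y hy using ct_zero hR hy.le
  simp [pd, this.fderiv_eq]

lemma integral_scale (f : E3 → ℝ) {R : ℝ} (hR : 0 < R) :
    ∫ x, f (R⁻¹ • x) = R ^ 3 * ∫ x, f x := by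
  have := Measure.integral_comp_smul (volume : Measure E3) f R⁻¹
  rw [this]; simp [abs_of_pos hR]

lemma int_ct {R : ℝ} (hR : 0 < R) : ∫ x, ct R x = R ^ 3 * ∫ x, sg x := integral_scale sg hR
lemma int_ct_sq {R : ℝ} (hR : 0 < R) : ∫ x, ct R x ^ 2 = R ^ 3 * ∫ x, sg x ^ 2 :=
  integral_scale (fun x => sg x ^ 2) hR
lemma int_pd_ct {R : ℝ} (hR : 0 < R) (i : Fin 3) :
    ∫ x, |pd (ct R) i x| = R ^ 2 * ∫ x, |pd sg i x| := by
  simp only [pd_ct, abs_mul, abs_of_pos (inv_pos.2 hR), integral_const_mul]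
  rw [integral_scale (fun x => |pd sg i x|) hR]; field_simp
lemma int_pd_ct_sq {R : ℝ} (hR : 0 < R) (i : Fin 3) :
    ∫ x, (pd (ct R) i x) ^ 2 = R * ∫ x, (pd sg i x) ^ 2 := by
  simp only [pd_ct, mul_pow, integral_const_mul]
  rw [integral_scale (fun x => (pd sg i x) ^ 2) hR]; field_simp

lemma cont_zero_of_integral {f : E3 → ℝ} (hf : Continuous f) (hc : HasCompactSupport f)
    (h0 : ∀ x, 0 ≤ f x) (h : ∫ x, f x ≤ 0) (x : E3) : f x = 0 := by
  have h1 : ∫ x, f x = 0 := le_antisymm h (integral_nonneg h0)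
  rw [integral_eq_zero_iff_of_nonneg h0 (hf.integrable_of_hasCompactSupport hc)] at h1
  exact congrFun ((Continuous.ae_eq_iff_eq volume hf continuous_const).1 h1) x

lemma int_sg_pos : 0 < ∫ x, sg x := by
  by_contra h
  have := cont_zero_of_integral sg_tf.cont sg_tf.cpt sg_nonneg (not_lt.1 h) 0
  rw [sg_one (by simp)] at this; norm_num at this
lemma int_sg_sq_pos : 0 < ∫ x, sg x ^ 2 := by
  by_contra h
  have hc := sg_tf.cont
  have h1 : Continuous (fun x => sg x ^ 2) := by fun_prop
  have h2 : HasCompactSupport (fun x => sg x ^ 2) :=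
    sg_tf.cpt.comp_left (g := fun t : ℝ => t ^ 2) (by simp)
  have := cont_zero_of_integral (f := fun x => sg x ^ 2) h1 h2
     (fun x => sq_nonneg _) (not_lt.1 h) 0
  rw [sg_one (by simp)] at this; norm_num at this

lemma fderiv_zero_of_pd {f : E3 → ℝ} {x : E3} (h : ∀ i, pd f i x = 0) : fderiv ℝ f x = 0 := by
  apply ContinuousLinearMap.coe_injective
  apply (EuclideanSpace.basisFun (Fin 3) ℝ).toBasis.ext
  intro i
  simpa [pd] using h i

lemma const_of_pd {f : E3 → ℝ} (hf : Differentiable ℝ f) (h : ∀ i x, pd f i x = 0) (x y : E3) :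
    f x = f y :=
  is_const_of_fderiv_eq_zero hf (fun x => fderiv_zero_of_pd fun i => h i x) x y

lemma int_tf_mul {f g : E3 → ℝ} (hf : Continuous f) (hg : TF g) :
    Integrable (fun x => f x * g x) volume := li_mul_tf hf.locallyIntegrable hg

lemma caccioppoli {W s : E3 → ℝ} (hW : SM W) (hL : ∀ x, Lap W x = 0) (hs : TF s) :
    ∑ i, ∫ x, (s x) ^ 2 * (pd W i x) ^ 2 ≤ 4 * ∑ i, ∫ x, (W x) ^ 2 * (pd s i x) ^ 2 := by
  have hI1 : ∀ i, Integrable (fun x => (s x) ^ 2 * (pd W i x) ^ 2) volume := fun i => by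
    have := int_tf_mul (f := fun x => s x * (pd W i x) ^ 2) (hs.cont.mul ((hW.pd i).continuous.pow 2)) hs
    refine this.congr (Eventually.of_forall fun x => by simp; ring)
  have hI2 : ∀ i, Integrable (fun x => (W x) ^ 2 * (pd s i x) ^ 2) volume := fun i => by
    have := int_tf_mul (f := fun x => (W x) ^ 2 * pd s i x) ((hW.continuous.pow 2).mul (hs.pd i).cont) (hs.pd i)
    refine this.congr (Eventually.of_forall fun x => by simp; ring)
  have hI3 : ∀ i, Integrable (fun x => 2 * s x * pd s i x * W x * pd W i x) volume := fun i => by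
    have := int_tf_mul (f := fun x => 2 * pd s i x * W x * pd W i x) (by
      have := (hs.pd i).cont; have := hW.continuous; have := (hW.pd i).continuous; fun_prop) hs
    refine this.congr (Eventually.of_forall fun x => by simp; ring)
  have hT : TF (fun x => s x * (s x * W x)) := TF.mul_right hs (hs.smooth.mul hW)
  have h1 : ∀ i, ∫ x, pd (pd W i) i x * (s x * (s x * W x)) =
      - ((∫ x, (s x) ^ 2 * (pd W i x) ^ 2) + ∫ x, 2 * s x * pd s i x * W x * pd W i x) := by
    intro i
    have := ibp (SM.one (hW.pd i)) (SM.one hT.smooth) hT.cpt i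
    rw [← integral_add (hI1 i) (hI3 i)]
    rw [eq_neg_iff_add_eq_zero, add_comm, ← eq_neg_iff_add_eq_zero, ← this]
    congr 1; ext x
    have hd : Differentiable ℝ (fun x => s x * W x) := hs.diff.mul hW.diff
    rw [pd_mul (f := s) (g := fun x => s x * W x) hs.diff hd i, pd_mul hs.diff hW.diff i]
    simp only; ring
  have h2 : ∑ i, ∫ x, pd (pd W i) i x * (s x * (s x * W x)) = 0 := by
    rw [← integral_finsetSum]
    · rw [← integral_zero E3 ℝ (μ := volume)]
      congr 1; ext x
      rw [← Finset.sum_mul]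
      have := hL x
      unfold Lap at this
      rw [this]; simp
    · intro i _
      exact int_tf_mul (SM.pd (hW.pd i) i).continuous hT
  have h3 : ∀ i, (∫ x, (s x) ^ 2 * (pd W i x) ^ 2) ≤ 4 * (∫ x, (W x) ^ 2 * (pd s i x) ^ 2)
     + 2 * ((∫ x, (s x) ^ 2 * (pd W i x) ^ 2) + ∫ x, 2 * s x * pd s i x * W x * pd W i x) := by
    intro i
    rw [← integral_add (hI1 i) (hI3 i), ← integral_const_mul, ← integral_const_mul, ← integral_add]
    · apply integral_mono (hI1 i)
      · exact ((hI2 i).const_mul 4).add (((hI1 i).add (hI3 i)).const_mul 2)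
      · intro x; simp only
        nlinarith [sq_nonneg (s x * pd W i x + 2 * W x * pd s i x)]
    · exact (hI2 i).const_mul 4
    · exact ((hI1 i).add (hI3 i)).const_mul 2
  simp only [Fin.sum_univ_three] at *
  simp only [h1] at h2
  linarith [h3 0, h3 1, h3 2]

set_option maxHeartbeats 1000000 in
lemma liouville_smooth {W : E3 → ℝ} (hW : SM W) (hL : ∀ x, Lap W x = 0) {M : ℝ}
    (hM : ∀ x, |W x| ≤ M) (x y : E3) : W x = W y := by
  have hM0 : 0 ≤ M := (abs_nonneg _).trans (hM 0)
  obtain ⟨K, hK0, hK⟩ := exists_bd_pd_ct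
  set c2 := ∑ i, ∫ x, (pd sg i x) ^ 2 with hc2
  have hc2n : 0 ≤ c2 := Finset.sum_nonneg fun i _ => integral_nonneg fun x => sq_nonneg _
  have hI1 : ∀ R : ℝ, 0 < R → ∀ V, SM V → Integrable (fun x => (ct R x) ^ 2 * (V x) ^ 2) volume := by
    intro R hR V hV
    have := int_tf_mul (f := fun x => ct R x * (V x) ^ 2) ((ct_tf hR).cont.mul (hV.continuous.pow 2)) (ct_tf hR)
    refine this.congr (Eventually.of_forall fun x => by simp; ring)
  have hI2 : ∀ R : ℝ, 0 < R → ∀ V, SM V → ∀ i, Integrable (fun x => (V x) ^ 2 * (pd (ct R) i x) ^ 2) volume := by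
    intro R hR V hV i
    have := int_tf_mul (f := fun x => pd (ct R) i x * (V x) ^ 2) (((ct_tf hR).pd i).cont.mul (hV.continuous.pow 2)) ((ct_tf hR).pd i)
    refine this.congr (Eventually.of_forall fun x => by simp; ring)
  have hA : ∀ R : ℝ, 0 < R → ∑ i, ∫ x, (ct R x) ^ 2 * (pd W i x) ^ 2 ≤ 4 * (M ^ 2 * (R * c2)) := by
    intro R hR
    refine (caccioppoli hW hL (ct_tf hR)).trans ?_
    gcongr
    rw [hc2, Finset.mul_sum, Finset.mul_sum]
    refine Finset.sum_le_sum fun i _ => ?_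
    rw [← int_pd_ct_sq hR, ← integral_const_mul]
    refine integral_mono (hI2 R hR W hW i) ?_ ?_
    · have := hI2 R hR (fun _ => 1) contDiff_const i
      simp only [one_pow, one_mul] at this
      exact this.const_mul _
    · intro x; simp only
      exact mul_le_mul_of_nonneg_right
        (sq_le_sq' (by linarith [abs_le.1 (hM x)]) (abs_le.1 (hM x)).2) (sq_nonneg _)
  have hAi : ∀ R : ℝ, 0 < R → ∀ i, ∫ x, (ct R x) ^ 2 * (pd W i x) ^ 2 ≤ 4 * (M ^ 2 * (R * c2)) := by
    intro R hR i
    refine le_trans ?_ (hA R hR)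
    exact Finset.single_le_sum (f := fun i => ∫ x, (ct R x) ^ 2 * (pd W i x) ^ 2)
      (fun i _ => integral_nonneg fun x => by positivity) (Finset.mem_univ i)
  -- second derivatives vanish
  have hV : ∀ k i x, pd (pd W k) i x = 0 := by
    intro k i x
    have hVs := hW.pd k
    have hVL : ∀ x, Lap (pd W k) x = 0 := fun x => by
      rw [← pd_lap hW, show Lap W = fun _ => 0 from funext hL, pd_zero]
    have hB : ∀ R : ℝ, 0 < R → ∫ x, (ct R x) ^ 2 * (pd (pd W k) i x) ^ 2 ≤
        4 * (3 * ((K / R) ^ 2 * (4 * (M ^ 2 * ((2 * R) * c2))))) := by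
      intro R hR
      have h1 := caccioppoli hVs hVL (ct_tf hR)
      have h2 : ∫ x, (ct R x) ^ 2 * (pd (pd W k) i x) ^ 2 ≤ ∑ i, ∫ x, (ct R x) ^ 2 * (pd (pd W k) i x) ^ 2 :=
        Finset.single_le_sum (f := fun i => ∫ x, (ct R x) ^ 2 * (pd (pd W k) i x) ^ 2)
          (fun i _ => integral_nonneg fun x => by positivity) (Finset.mem_univ i)
      have h3 : ∀ i, ∫ x, (pd W k x) ^ 2 * (pd (ct R) i x) ^ 2 ≤ (K / R) ^ 2 * (4 * (M ^ 2 * ((2 * R) * c2))) := by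
        intro i
        calc ∫ x, (pd W k x) ^ 2 * (pd (ct R) i x) ^ 2 
            ≤ ∫ x, (K / R) ^ 2 * ((ct (2 * R) x) ^ 2 * (pd W k x) ^ 2) := by
              refine integral_mono (hI2 R hR _ hVs i) ((hI1 (2 * R) (by positivity) _ hVs).const_mul _) fun x => ?_
              simp only
              by_cases hx : 2 * R < ‖x‖
              · rw [pd_ct_zero hR hx]; simp; positivity
              · rw [ct_one (by positivity) (not_lt.1 hx)]
                have : (pd (ct R) i x) ^ 2 ≤ (K / R) ^ 2 := by
                  have := hK R hR i x
                  exact sq_le_sq' (by linarith [abs_le.1 this]) (abs_le.1 this).2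
                nlinarith [sq_nonneg (pd W k x)]
          _ ≤ _ := by
              rw [integral_const_mul]
              gcongr
              exact hAi (2 * R) (by positivity) k
      refine h2.trans (h1.trans ?_)
      gcongr
      rw [Fin.sum_univ_three]
      linarith [h3 0, h3 1, h3 2]
    -- fixed r
    have hr : 0 < ‖x‖ + 1 := by positivity
    set r := ‖x‖ + 1
    have hC : ∀ R : ℝ, 2 * r ≤ R → ∫ x, (ct r x) ^ 2 * (pd (pd W k) i x) ^ 2 ≤ (96 * K ^ 2 * M ^ 2 * c2) * R⁻¹ := by
      intro R hR
      have hR0 : 0 < R := by linarith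
      refine le_trans (integral_mono (hI1 r hr _ (hVs.pd i)) (hI1 R hR0 _ (hVs.pd i)) ?_) ((hB R hR0).trans (le_of_eq ?_))
      · intro x; simp only
        by_cases hx : 2 * r ≤ ‖x‖
        · rw [ct_zero hr hx]; simp; positivity
        · rw [ct_one hR0 (by linarith)]
          have := ct_le_one r x
          have := ct_nonneg r x
          gcongr
      · field_simp; ring
    have hD : ∫ x, (ct r x) ^ 2 * (pd (pd W k) i x) ^ 2 ≤ 0 := by
      have ht : Tendsto (fun R : ℝ => (96 * K ^ 2 * M ^ 2 * c2) * R⁻¹) atTop (𝓝 0) := by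
        have := (tendsto_inv_atTop_zero (𝕜 := ℝ)).const_mul (96 * K ^ 2 * M ^ 2 * c2)
        rw [mul_zero] at this; exact this
      exact ge_of_tendsto ht ((eventually_ge_atTop (2 * r)).mono hC)
    have hcc : Continuous (fun x => (ct r x) ^ 2 * (pd (pd W k) i x) ^ 2) := by
      have := (ct_tf hr).cont
      have := (hVs.pd i).continuous
      fun_prop
    have hcs2 : HasCompactSupport (fun x => (ct r x) ^ 2) :=
      (ct_tf hr).cpt.comp_left (g := fun t : ℝ => t ^ 2) (by simp)
    have hcs : HasCompactSupport (fun x => (ct r x) ^ 2 * (pd (pd W k) i x) ^ 2) := hcs2.mul_right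
    have := cont_zero_of_integral (f := fun x => (ct r x) ^ 2 * (pd (pd W k) i x) ^ 2) hcc hcs
      (fun x => by positivity) hD x
    rw [ct_one hr (by simp [r])] at this
    simpa using this
  have hW1 : ∀ k x, pd W k x = 0 := by
    intro k x
    have hcst : ∀ y, pd W k y = pd W k x := fun y => const_of_pd (hW.pd k).diff (hV k) y x
    have h1 : ∀ R : ℝ, 0 < R → (pd W k x) ^ 2 * (∫ x, sg x ^ 2) ≤ (4 * M ^ 2 * c2) * (R⁻¹) ^ 2 := by
      intro R hR
      have := hAi R hR k
      simp only [hcst, integral_mul_const] at this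
      rw [int_ct_sq hR] at this
      rw [inv_pow, ← div_eq_mul_inv, le_div_iff₀ (by positivity)]
      have h2 : R * ((pd W k x) ^ 2 * (∫ x, sg x ^ 2) * R ^ 2) ≤ R * (4 * M ^ 2 * c2) := by linarith
      exact le_of_mul_le_mul_left h2 hR
    have h2 : (pd W k x) ^ 2 * (∫ x, sg x ^ 2) ≤ 0 := by
      have ht : Tendsto (fun R : ℝ => (4 * M ^ 2 * c2) * R⁻¹ ^ 2) atTop (𝓝 0) := by
        have := ((tendsto_inv_atTop_zero (𝕜 := ℝ)).pow 2).const_mul (4 * M ^ 2 * c2)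
        rw [zero_pow two_ne_zero, mul_zero] at this; exact this
      exact ge_of_tendsto ht ((eventually_gt_atTop 0).mono h1)
    have := int_sg_sq_pos
    by_contra hne
    have : 0 < (pd W k x) ^ 2 := by positivity
    nlinarith
  exact const_of_pd hW.diff hW1 x y

structure BM (f : E3 → ℝ) (M : ℝ) : Prop where
  meas : Measurable f
  bd : ∀ x, |f x| ≤ M

lemma BM.nonneg {f : E3 → ℝ} {M : ℝ} (h : BM f M) : 0 ≤ M := (abs_nonneg _).trans (h.bd 0)
lemma BM.ae {f : E3 → ℝ} {M : ℝ} (h : BM f M) : AEStronglyMeasurable f volume :=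
  h.meas.aestronglyMeasurable
lemma BM.mul_int {f g : E3 → ℝ} {M : ℝ} (h : BM f M) (hg : Integrable g volume) :
    Integrable (fun x => f x * g x) volume :=
  hg.bdd_mul h.ae (Eventually.of_forall fun x => h.bd x)
lemma BM.li {f : E3 → ℝ} {M : ℝ} (h : BM f M) : LocallyIntegrable f volume := by
  have h1 : LocallyIntegrable (fun _ : E3 => M) volume := locallyIntegrable_const M
  refine h1.mono h.ae (Eventually.of_forall fun x => ?_)
  exact (h.bd x).trans (le_abs_self _)

/-- locally integrable and vanishing at infinity in a weak sense -/
structure VV (f : E3 → ℝ) : Prop where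
  li : LocallyIntegrable f volume
  small : ∀ ε > 0, ∃ g : E3 → ℝ, Integrable g volume ∧ ∀ᵐ x, |f x| ≤ ε + g x

lemma VV.zero : VV (fun _ => 0) :=
  ⟨locallyIntegrable_const 0, fun ε hε => ⟨fun _ => 0, integrable_zero _ _ _, by simp [hε.le]⟩⟩

lemma VV.add {f g : E3 → ℝ} (hf : VV f) (hg : VV g) : VV (fun x => f x + g x) := by
  refine ⟨hf.li.add hg.li, fun ε hε => ?_⟩
  obtain ⟨a, ha, h1⟩ := hf.small (ε / 2) (by positivity)
  obtain ⟨b, hb, h2⟩ := hg.small (ε / 2) (by positivity)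
  refine ⟨fun x => a x + b x, ha.add hb, ?_⟩
  filter_upwards [h1, h2] with x h1 h2
  linarith [abs_add_le (f x) (g x)]

lemma VV.const_mul {f : E3 → ℝ} (c : ℝ) (hf : VV f) : VV (fun x => c * f x) := by
  refine ⟨hf.li.smul c, fun ε hε => ?_⟩
  obtain ⟨a, ha, h1⟩ := hf.small (ε / (|c| + 1)) (by positivity)
  refine ⟨fun x => |c| * a x, ha.const_mul _, ?_⟩
  filter_upwards [h1] with x h1
  rw [abs_mul]
  have h2 : |c| * (ε / (|c| + 1)) ≤ ε := by
    rw [mul_div_assoc', div_le_iff₀ (by positivity)]; nlinarith [abs_nonneg c]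
  nlinarith [abs_nonneg c]

lemma VV.of_L2 {f : E3 → ℝ} (hf : MemLp f 2 volume) : VV f := by
  refine ⟨hf.locallyIntegrable (by norm_num), fun ε hε => ?_⟩
  refine ⟨fun x => (4 * ε)⁻¹ * (f x) ^ 2, hf.integrable_sq.const_mul _, Eventually.of_forall fun x => ?_⟩
  have : (ε + (4 * ε)⁻¹ * (f x) ^ 2) - |f x| = (4 * ε)⁻¹ * (|f x| - 2 * ε) ^ 2 := by
    rw [← sq_abs (f x)]; field_simp; ring
  have h2 : 0 ≤ (4 * ε)⁻¹ * (|f x| - 2 * ε) ^ 2 := by positivity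
  linarith

lemma cv_shift_int {j : E3 → ℝ} (hj : Integrable j volume) (x : E3) :
    Integrable (fun t => j (x - t)) volume := hj.comp_sub_left x

lemma int_shift (j : E3 → ℝ) (x : E3) : ∫ t, j (x - t) = ∫ t, j t := integral_sub_left_eq_self j volume x

lemma Cv_bd_BM {f j : E3 → ℝ} {M : ℝ} (hf : BM f M) (hj : TF j) (x : E3) :
    |Cv f j x| ≤ M * ∫ t, |j t| := by
  have h1 : ‖∫ t, f t * j (x - t)‖ ≤ ∫ t, M * |j (x - t)| := by
    apply norm_integral_le_of_norm_le ((cv_shift_int hj.integrable.abs x).const_mul M)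
    refine Eventually.of_forall fun t => ?_
    rw [Real.norm_eq_abs, abs_mul]
    exact mul_le_mul_of_nonneg_right (hf.bd t) (abs_nonneg _)
  rw [integral_const_mul, int_shift (fun t => |j t|)] at h1
  exact h1

lemma TF.abs_cpt {j : E3 → ℝ} (hj : TF j) : HasCompactSupport (fun x => |j x|) :=
  hj.cpt.comp_left (g := fun t : ℝ => |t|) (by simp)

lemma TF.bdd {j : E3 → ℝ} (hj : TF j) : ∃ J : ℝ, 0 ≤ J ∧ ∀ x, |j x| ≤ J := by
  obtain ⟨J, hJ⟩ := hj.cont.bounded_above_of_compact_support hj.cpt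
  exact ⟨J, (norm_nonneg _).trans (hJ 0), hJ⟩

lemma Cv_bd_VV {f g j : E3 → ℝ} {ε : ℝ} (hg : Integrable g volume)
    (h : ∀ᵐ x, |f x| ≤ ε + g x) (hj : TF j) (x : E3) :
    |Cv f j x| ≤ ε * (∫ t, |j t|) + Cv (fun t => |g t|) (fun t => |j t|) x := by
  have hi2 : Integrable (fun t => |g t| * |j (x - t)|) volume := by
    refine li_mul hg.abs.locallyIntegrable ?_ ?_
    · have := hj.cont; fun_prop
    · exact (hj.comp_sub x).abs_cpt
  have hi1 := (cv_shift_int hj.integrable.abs x).const_mul ε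
  have h1 : ‖∫ t, f t * j (x - t)‖ ≤ ∫ t, (ε * |j (x - t)| + |g t| * |j (x - t)|) := by
    apply norm_integral_le_of_norm_le (hi1.add hi2)
    filter_upwards [h] with t ht
    show _ ≤ ε * |j (x - t)| + |g t| * |j (x - t)|
    rw [Real.norm_eq_abs, abs_mul, ← add_mul]
    exact mul_le_mul_of_nonneg_right (ht.trans (by linarith [le_abs_self (g t)])) (abs_nonneg _)
  rw [integral_add hi1 hi2, integral_const_mul, int_shift (fun t => |j t|)] at h1
  exact h1

lemma Cv_abs_integrable {g j : E3 → ℝ} (hg : Integrable g volume) (hj : TF j) :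
    Integrable (Cv (fun t => |g t|) (fun t => |j t|)) volume := by
  rw [Cv_eq]
  exact hg.abs.integrable_convolution _ hj.integrable.abs

lemma Cv_abs_bd {g j : E3 → ℝ} (hg : Integrable g volume) (hj : TF j) :
    ∃ C : ℝ, ∀ x, Cv (fun t => |g t|) (fun t => |j t|) x ≤ C := by
  obtain ⟨J, hJ0, hJ⟩ := hj.bdd
  refine ⟨∫ t, J * |g t|, fun x => ?_⟩
  refine integral_mono_of_nonneg (Eventually.of_forall fun t => by positivity) (hg.abs.const_mul J)
    (Eventually.of_forall fun t => ?_)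
  simp only
  rw [mul_comm]
  exact mul_le_mul_of_nonneg_right (hJ _) (abs_nonneg _)

lemma Lap_Cv {f j : E3 → ℝ} (hf : LocallyIntegrable f volume) (hj : TF j) :
    Lap (Cv f j) = Cv f (Lap j) := by
  ext x
  unfold Lap
  have : ∀ i, pd (pd (Cv f j) i) i x = ∫ t, f t * pd (pd j i) i (x - t) := fun i => by
    rw [pd_Cv hf hj, pd_Cv hf (hj.pd i)]; rfl
  simp only [this]
  rw [← integral_finsetSum]
  · unfold Cv; congr 1; ext t; rw [Finset.mul_sum]
  · intro i _
    exact li_mul_tf hf (((hj.pd i).pd i).comp_sub x)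

lemma Lap_sub {f g : E3 → ℝ} (hf : SM f) (hg : SM g) : Lap (fun x => f x - g x) = fun x => Lap f x - Lap g x := by
  ext x; unfold Lap
  rw [← Finset.sum_sub_distrib]
  refine Finset.sum_congr rfl fun i _ => ?_
  rw [pd_sub hf.diff hg.diff, pd_sub (hf.pd i).diff (hg.pd i).diff]

lemma Lap_sum {f : Fin 3 → E3 → ℝ} (hf : ∀ k, SM (f k)) :
    Lap (fun x => ∑ k, f k x) = fun x => ∑ k, Lap (f k) x := by
  ext x; unfold Lap
  rw [Finset.sum_comm]
  refine Finset.sum_congr rfl fun i _ => ?_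
  rw [pd_sum (fun k => (hf k).diff), pd_sum (fun k => ((hf k).pd i).diff)]

lemma SM.sum {f : Fin 3 → E3 → ℝ} (hf : ∀ k, SM (f k)) : SM (fun x => ∑ k, f k x) := by
  simp only [Fin.sum_univ_three]; exact ((hf 0).add (hf 1)).add (hf 2)

set_option maxHeartbeats 1000000 in
theorem liou {f : E3 → ℝ} {v : Fin 3 → E3 → ℝ} {M : ℝ} (hf : VV f) (hv : ∀ i, BM (v i) M)
    (h : ∀ χ, TF χ → (∫ x, f x * Lap χ x) + ∑ i, ∫ x, v i x * pd (Lap χ) i x = 0) :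
    ∀ χ, TF χ → (∫ x, f x * χ x) + ∑ i, ∫ x, v i x * pd χ i x = 0 := by
  have hM0 := (hv 0).nonneg
  -- the mollified function
  have key : ∀ j, TF j → ∀ x, Cv f j x - ∑ i, Cv (v i) (pd j i) x = 0 := by
    intro j hj
    set W : E3 → ℝ := fun x => Cv f j x - ∑ i, Cv (v i) (pd j i) x with hW
    have hs1 : SM (Cv f j) := Cv_smooth hf.li hj
    have hs2 : ∀ i, SM (Cv (v i) (pd j i)) := fun i => Cv_smooth (hv i).li (hj.pd i)
    have hWs : SM W := hs1.sub (SM.sum hs2)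
    have hL : ∀ x, Lap W x = 0 := by
      intro x
      rw [hW, Lap_sub hs1 (SM.sum hs2), Lap_sum hs2, Lap_Cv hf.li hj]
      simp only [Lap_Cv (hv _).li (hj.pd _), ← pd_lap hj.smooth]
      have := h _ (hj.comp_sub x)
      rw [lap_comp_sub hj.smooth] at this
      simp only [pd_comp_sub hj.lap.diff, mul_neg, integral_neg, Finset.sum_neg_distrib] at this
      unfold Cv; linarith
    set D := ∑ i, ∫ t, |pd j i t| with hD
    have hv2 : ∀ x, |∑ i, Cv (v i) (pd j i) x| ≤ M * D := fun x => by
      refine (Finset.abs_sum_le_sum_abs _ _).trans ?_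
      rw [hD, Finset.mul_sum]
      exact Finset.sum_le_sum fun i _ => Cv_bd_BM (hv i) (hj.pd i) x
    obtain ⟨g1, hg1, hfg1⟩ := hf.small 1 one_pos
    obtain ⟨C1, hC1⟩ := Cv_abs_bd hg1 hj
    have hWb : ∀ x, |W x| ≤ 1 * (∫ t, |j t|) + C1 + M * D := fun x => by
      refine (abs_sub _ _).trans ?_
      linarith [Cv_bd_VV hg1 hfg1 hj x, hC1 x, hv2 x]
    have hc := liouville_smooth hWs hL hWb
    set A := ∫ t, |j t| with hA
    have hA0 : 0 ≤ A := integral_nonneg fun _ => abs_nonneg _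
    set I := ∫ x, sg x with hI
    have hIpos : 0 < I := int_sg_pos
    set B := ∑ i, ∫ x, |pd sg i x| with hB
    have hWi : ∀ R : ℝ, 0 < R → W 0 * (R ^ 3 * I) = (∫ x, Cv f j x * ct R x) + ∑ i, ∫ x, Cv (v i) j x * pd (ct R) i x := by
      intro R hR
      have hct := ct_tf hR
      have e1 : ∀ i, ∫ x, Cv (v i) j x * pd (ct R) i x = - ∫ x, Cv (v i) (pd j i) x * ct R x := fun i => by
        rw [ibp (SM.one (Cv_smooth (hv i).li hj)) (SM.one hct.smooth) hct.cpt, pd_Cv (hv i).li hj]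
      simp only [e1, Finset.sum_neg_distrib]
      rw [← int_ct hR, ← integral_const_mul, ← sub_eq_add_neg, ← integral_finsetSum, ← integral_sub]
      · congr 1; ext x
        rw [← Finset.sum_mul, ← sub_mul, hc 0 x]
      · exact int_tf_mul hs1.continuous hct
      · exact integrable_finset_sum _ fun i _ => int_tf_mul (hs2 i).continuous hct
      · intro i _; exact int_tf_mul (hs2 i).continuous hct
    -- estimate
    have hest : ∀ ε > 0, ∃ C : ℝ, ∀ R : ℝ, 0 < R → |W 0| * (R ^ 3 * I) ≤ ε * A * (R ^ 3 * I) + C + (M * A * B) * R ^ 2 := by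
      intro ε hε
      obtain ⟨g, hg, hfg⟩ := hf.small ε hε
      have hgi := Cv_abs_integrable hg hj
      refine ⟨∫ x, Cv (fun t => |g t|) (fun t => |j t|) x, fun R hR => ?_⟩
      have hct := ct_tf hR
      have h1 : |∫ x, Cv f j x * ct R x| ≤ ε * A * (R ^ 3 * I) + ∫ x, Cv (fun t => |g t|) (fun t => |j t|) x := by
        have : ‖∫ x, Cv f j x * ct R x‖ ≤ ∫ x, (ε * A * ct R x + Cv (fun t => |g t|) (fun t => |j t|) x) := by
          apply norm_integral_le_of_norm_le ((hct.integrable.const_mul _).add hgi)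
          refine Eventually.of_forall fun x => ?_
          show _ ≤ ε * A * ct R x + Cv (fun t => |g t|) (fun t => |j t|) x
          rw [Real.norm_eq_abs, abs_mul, abs_of_nonneg (ct_nonneg R x)]
          have h2 := Cv_bd_VV hg hfg hj x
          have h3 := ct_le_one R x
          have h4 := ct_nonneg R x
          have h5 : 0 ≤ Cv (fun t => |g t|) (fun t => |j t|) x := integral_nonneg fun t => by positivity
          nlinarith
        rw [integral_add (hct.integrable.const_mul _) hgi, integral_const_mul, int_ct hR] at this
        exact this
      have h2 : ∀ i, |∫ x, Cv (v i) j x * pd (ct R) i x| ≤ M * A * (R ^ 2 * ∫ x, |pd sg i x|) := by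
        intro i
        rw [← int_pd_ct hR, ← integral_const_mul, ← Real.norm_eq_abs]
        apply norm_integral_le_of_norm_le ((hct.pd i).integrable.abs.const_mul _)
        refine Eventually.of_forall fun x => ?_
        rw [Real.norm_eq_abs, abs_mul]
        exact mul_le_mul_of_nonneg_right (Cv_bd_BM (hv i) hj x) (abs_nonneg _)
      have h3 : |∑ i, ∫ x, Cv (v i) j x * pd (ct R) i x| ≤ (M * A * B) * R ^ 2 := by
        refine (Finset.abs_sum_le_sum_abs _ _).trans ((Finset.sum_le_sum fun i _ => h2 i).trans (le_of_eq ?_))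
        rw [← Finset.mul_sum, ← Finset.mul_sum, hB]; ring
      have h4 : |W 0| * (R ^ 3 * I) = |W 0 * (R ^ 3 * I)| := by
        rw [abs_mul, abs_of_pos (by positivity : 0 < R ^ 3 * I)]
      rw [h4, hWi R hR]
      refine (abs_add_le _ _).trans ?_
      linarith
    have hest2 : ∀ ε > 0, |W 0| ≤ ε * A := by
      intro ε hε
      obtain ⟨C, hC⟩ := hest ε hε
      have ht : Tendsto (fun R : ℝ => ε * A + C / I * R⁻¹ ^ 3 + (M * A * B) / I * R⁻¹) atTop (𝓝 (ε * A)) := by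
        have t0 := tendsto_inv_atTop_zero (𝕜 := ℝ)
        have := ((t0.pow 3).const_mul (C / I)).const_add (ε * A) |>.add (t0.const_mul ((M * A * B) / I))
        rw [zero_pow three_ne_zero, mul_zero, mul_zero, add_zero, add_zero] at this; exact this
      refine ge_of_tendsto ht ((eventually_gt_atTop 0).mono fun R hR => ?_)
      have := hC R hR
      have h2 : (ε * A + C / I * R⁻¹ ^ 3 + (M * A * B) / I * R⁻¹) * (R ^ 3 * I) =
         ε * A * (R ^ 3 * I) + C + (M * A * B) * R ^ 2 := by field_simp
      rw [← h2] at this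
      exact le_of_mul_le_mul_right this (by positivity)
    have hW0 : |W 0| ≤ 0 := by
      have ht : Tendsto (fun ε : ℝ => ε * A) (𝓝[>] 0) (𝓝 0) := by
        have : Tendsto (fun ε : ℝ => ε * A) (𝓝 0) (𝓝 (0 * A)) := (continuous_mul_const A).tendsto 0
        rw [zero_mul] at this
        exact this.mono_left nhdsWithin_le_nhds
      exact ge_of_tendsto ht (eventually_mem_nhdsWithin.mono hest2)
    intro x
    have : W x = 0 := by rw [hc x 0]; exact abs_nonpos_iff.1 hW0
    exact this
  intro χ hχ
  have hj := hχ.comp_sub 0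
  have := key _ hj 0
  unfold Cv at this
  simp only [pd_comp_sub hχ.diff] at this
  simp only [zero_sub, neg_neg, mul_neg, integral_neg, Finset.sum_neg_distrib, sub_neg_eq_add,
    zero_add] at this
  exact this

lemma riesz_abs {V H : Type*} [AddCommGroup V] [Module ℝ V] [NormedAddCommGroup H]
    [InnerProductSpace ℝ H] [CompleteSpace H] (A : V →ₗ[ℝ] H) (l : V →ₗ[ℝ] ℝ) (C : ℝ)
    (hC : 0 ≤ C)
    (hl : ∀ x, |l x| ≤ C * ‖A x‖) : ∃ h : H, ‖h‖ ≤ C ∧ ∀ x, l x = inner ℝ h (A x) := by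
  have hle : LinearMap.ker A ≤ LinearMap.ker l := by
    intro x hx
    rw [LinearMap.mem_ker] at *
    have := hl x
    rw [hx, norm_zero, mul_zero] at this
    exact abs_nonpos_iff.1 this
  let f0 : LinearMap.range A →ₗ[ℝ] ℝ :=
    ((LinearMap.ker A).liftQ l hle).comp A.quotKerEquivRange.symm.toLinearMap
  have hf0 : ∀ x, f0 ⟨A x, LinearMap.mem_range_self A x⟩ = l x := by
    intro x
    have : A.quotKerEquivRange.symm ⟨A x, LinearMap.mem_range_self A x⟩ = (LinearMap.ker A).mkQ x := by
      rw [LinearEquiv.symm_apply_eq]; rfl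
    simp only [f0, LinearMap.comp_apply, LinearEquiv.coe_coe, this]
    simp
  have hb : ∀ y, ‖f0 y‖ ≤ C * ‖y‖ := by
    rintro ⟨y, x, rfl⟩
    rw [hf0]; exact hl x
  obtain ⟨g, hg, hgn⟩ := exists_extension_norm_eq (LinearMap.range A) (f0.mkContinuous C hb)
  refine ⟨(InnerProductSpace.toDual ℝ H).symm g, ?_, fun x => ?_⟩
  · rw [LinearIsometryEquiv.norm_map, hgn]
    exact LinearMap.mkContinuous_norm_le _ hC _
  rw [InnerProductSpace.toDual_symm_apply]
  have := hg ⟨A x, LinearMap.mem_range_self A x⟩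
  rw [LinearMap.mkContinuous_apply, hf0] at this
  exact this.symm

/-- square root of the integral of the square -/
def n2 (f : E3 → ℝ) : ℝ := Real.sqrt (∫ x, (f x) ^ 2)

abbrev L2 (f : E3 → ℝ) : Prop := MemLp f 2 (volume : Measure E3)

lemma inner_toLp {f g : E3 → ℝ} (hf : L2 f) (hg : L2 g) :
    inner ℝ (hf.toLp f) (hg.toLp g) = ∫ x, f x * g x := by
  rw [L2.inner_def]
  apply integral_congr_ae
  filter_upwards [hf.coeFn_toLp, hg.coeFn_toLp] with x h1 h2
  rw [h1, h2]; simp [mul_comm]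

lemma norm_toLp {f : E3 → ℝ} (hf : L2 f) : ‖hf.toLp f‖ = n2 f := by
  have : ‖hf.toLp f‖ ^ 2 = ∫ x, (f x) ^ 2 := by
    rw [← real_inner_self_eq_norm_sq, inner_toLp]; congr 1; ext x; ring
  rw [n2, ← this, Real.sqrt_sq (norm_nonneg _)]

lemma n2_nonneg (f : E3 → ℝ) : 0 ≤ n2 f := Real.sqrt_nonneg _
lemma n2_sq (f : E3 → ℝ) : n2 f ^ 2 = ∫ x, (f x) ^ 2 :=
  Real.sq_sqrt (integral_nonneg fun _ => sq_nonneg _)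

lemma cs {f g : E3 → ℝ} (hf : L2 f) (hg : L2 g) : |∫ x, f x * g x| ≤ n2 f * n2 g := by
  rw [← inner_toLp hf hg, ← norm_toLp hf, ← norm_toLp hg]
  exact abs_real_inner_le_norm _ _

lemma L2.mul_int {f g : E3 → ℝ} (hf : L2 f) (hg : L2 g) : Integrable (fun x => f x * g x) volume :=
  hf.integrable_mul hg

lemma TF.L2 {f : E3 → ℝ} (hf : TF f) : L2 f := hf.cont.memLp_of_hasCompactSupport hf.cpt

lemma ibp2 {f : E3 → ℝ} (hf : TF f) (j k : Fin 3) :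
    ∫ x, (pd (pd f j) k x) ^ 2 = ∫ x, pd (pd f j) j x * pd (pd f k) k x := by
  have e1 := ibp (SM.one ((hf.pd j).pd j).smooth) (SM.one (hf.pd k).smooth) (hf.pd k).cpt k
  have e2 := ibp (SM.one ((hf.pd j).pd k).smooth) (SM.one (hf.pd k).smooth) (hf.pd k).cpt j
  have e3 : pd (pd (pd f j) j) k = pd (pd (pd f j) k) j := pd_comm (SM.pd hf.smooth j) j k
  rw [e1, e3, ← e2, pd_comm hf.smooth k j]
  congr 1; ext x; ring

lemma n2_pd2_le {f : E3 → ℝ} (hf : TF f) (j k : Fin 3) : n2 (pd (pd f j) k) ≤ n2 (Lap f) := by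
  apply Real.sqrt_le_sqrt
  have hi : ∀ j k, Integrable (fun x => pd (pd f j) j x * pd (pd f k) k x) volume := fun j k =>
    int_tf_mul ((hf.pd j).pd j).cont ((hf.pd k).pd k)
  have : ∫ x, (Lap f x) ^ 2 = ∑ j, ∑ k, ∫ x, (pd (pd f j) k x) ^ 2 := by
    simp only [ibp2 hf]
    have : ∀ j, ∑ k, ∫ x, pd (pd f j) j x * pd (pd f k) k x = ∫ x, ∑ k, pd (pd f j) j x * pd (pd f k) k x := fun j => by
      rw [integral_finsetSum]; intro k _; exact hi j k
    simp only [this]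
    rw [← integral_finsetSum]
    · congr 1; ext x; unfold Lap; rw [sq, Finset.sum_mul_sum]
    · intro j _; exact integrable_finsetSum _ fun k _ => hi j k
  rw [this]
  have h1 : ∀ j k, 0 ≤ ∫ x, (pd (pd f j) k x) ^ 2 := fun j k => integral_nonneg fun _ => sq_nonneg _
  exact (Finset.single_le_sum (f := fun k => ∫ x, (pd (pd f j) k x) ^ 2) (fun k _ => h1 j k) (Finset.mem_univ k)).trans
    (Finset.single_le_sum (f := fun j => ∑ k, ∫ x, (pd (pd f j) k x) ^ 2) (fun j _ => Finset.sum_nonneg fun k _ => h1 j k) (Finset.mem_univ j))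

def TFS : Submodule ℝ (E3 → ℝ) where
  carrier := {f | TF f}
  add_mem' hf hg := TF.add hf hg
  zero_mem' := TF.zero
  smul_mem' c _ hf := TF.const_mul c hf

lemma Lap_add {f g : E3 → ℝ} (hf : SM f) (hg : SM g) : Lap (fun x => f x + g x) = fun x => Lap f x + Lap g x := by
  ext x; unfold Lap
  rw [← Finset.sum_add_distrib]
  refine Finset.sum_congr rfl fun i _ => ?_
  rw [pd_add hf.diff hg.diff, pd_add (hf.pd i).diff (hg.pd i).diff]

lemma Lap_const_mul {f : E3 → ℝ} (c : ℝ) (hf : SM f) : Lap (fun x => c * f x) = fun x => c * Lap f x := by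
  ext x; unfold Lap
  rw [Finset.mul_sum]
  refine Finset.sum_congr rfl fun i _ => ?_
  rw [pd_const_mul c hf.diff, pd_const_mul c (hf.pd i).diff]

def LapL : TFS →ₗ[ℝ] Lp ℝ 2 (volume : Measure E3) where
  toFun f := (TF.lap f.2).L2.toLp _
  map_add' f g := by
    rw [← MemLp.toLp_add]
    congr 1
    exact Lap_add f.2.smooth g.2.smooth
  map_smul' c f := by
    rw [RingHom.id_apply, ← MemLp.toLp_const_smul]
    congr 1
    exact Lap_const_mul c f.2.smooth

lemma riesz_lap {B : Fin 3 → Fin 3 → E3 → ℝ} (hB : ∀ j k, L2 (B j k)) :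
    ∃ h, L2 h ∧ ∀ χ, TF χ → ∫ x, h x * Lap χ x = ∑ j, ∑ k, ∫ x, B j k x * pd (pd χ j) k x := by
  have hitg : ∀ (f : TFS) j k, Integrable (fun x => B j k x * pd (pd f j) k x) volume := fun f j k =>
    (hB j k).mul_int (TF.pd (TF.pd f.2 j) k).L2
  let l : TFS →ₗ[ℝ] ℝ :=
    { toFun := fun f => ∑ j, ∑ k, ∫ x, B j k x * pd (pd f j) k x
      map_add' := fun f g => by
        rw [← Finset.sum_add_distrib]
        refine Finset.sum_congr rfl fun j _ => ?_
        rw [← Finset.sum_add_distrib]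
        refine Finset.sum_congr rfl fun k _ => ?_
        rw [← integral_add (hitg f j k) (hitg g j k)]
        congr 1; ext x
        have : pd (pd ((f : E3 → ℝ) + (g : E3 → ℝ)) j) k x = pd (pd f j) k x + pd (pd g j) k x := by
          have := pd_add (TF.diff f.2) (TF.diff g.2) j
          rw [show ((f : E3 → ℝ) + (g : E3 → ℝ)) = fun x => (f : E3 → ℝ) x + (g : E3 → ℝ) x from rfl, this,
            pd_add (TF.pd f.2 j).diff (TF.pd g.2 j).diff]
        rw [Submodule.coe_add, this]; ring
      map_smul' := fun c f => by
        rw [RingHom.id_apply, smul_eq_mul, Finset.mul_sum]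
        refine Finset.sum_congr rfl fun j _ => ?_
        rw [Finset.mul_sum]
        refine Finset.sum_congr rfl fun k _ => ?_
        rw [← integral_const_mul]
        congr 1; ext x
        have : pd (pd (c • (f : E3 → ℝ)) j) k x = c * pd (pd f j) k x := by
          have := pd_const_mul c (TF.diff f.2) j
          rw [show (c • (f : E3 → ℝ)) = fun x => c * (f : E3 → ℝ) x from rfl, this,
            pd_const_mul c (TF.pd f.2 j).diff]
        rw [Submodule.coe_smul, this]; ring }
  obtain ⟨h, -, hh⟩ := riesz_abs LapL l (∑ j, ∑ k, n2 (B j k))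
    (Finset.sum_nonneg fun j _ => Finset.sum_nonneg fun k _ => n2_nonneg _) (fun f => by
    show |∑ j, ∑ k, ∫ x, B j k x * pd (pd f j) k x| ≤ _ * ‖(TF.lap f.2).L2.toLp _‖
    rw [norm_toLp, Finset.sum_mul]
    refine (Finset.abs_sum_le_sum_abs _ _).trans (Finset.sum_le_sum fun j _ => ?_)
    rw [Finset.sum_mul]
    refine (Finset.abs_sum_le_sum_abs _ _).trans (Finset.sum_le_sum fun k _ => ?_)
    refine (cs (hB j k) (TF.pd (TF.pd f.2 j) k).L2).trans ?_
    exact mul_le_mul_of_nonneg_left (n2_pd2_le f.2 j k) (n2_nonneg _))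
  refine ⟨h, Lp.memLp h, fun χ hχ => ?_⟩
  have := hh ⟨χ, hχ⟩
  rw [show l ⟨χ, hχ⟩ = ∑ j, ∑ k, ∫ x, B j k x * pd (pd χ j) k x from rfl] at this
  rw [this, show LapL ⟨χ, hχ⟩ = hχ.lap.L2.toLp _ from rfl]
  conv_rhs => rw [← Lp.toLp_coeFn h (Lp.memLp h)]
  rw [inner_toLp]

lemma lemL {B : Fin 3 → Fin 3 → E3 → ℝ} {q : E3 → ℝ} {v : Fin 3 → E3 → ℝ} {M : ℝ}
    (hB : ∀ j k, L2 (B j k)) (hq : VV q) (hv : ∀ i, BM (v i) M)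
    (h : ∀ χ, TF χ → (∑ j, ∑ k, ∫ x, B j k x * pd (pd χ j) k x) + (∫ x, q x * Lap χ x) +
      ∑ i, ∫ x, v i x * pd (Lap χ) i x = 0) :
    ∃ h, L2 h ∧ ∀ χ, TF χ → (∫ x, h x * χ x) + (∫ x, q x * χ x) + ∑ i, ∫ x, v i x * pd χ i x = 0 := by
  obtain ⟨g, hg, hg2⟩ := riesz_lap hB
  refine ⟨g, hg, ?_⟩
  have hV := VV.of_L2 hg
  have hadd : ∀ χ, TF χ → ∫ x, (g x + q x) * χ x = (∫ x, g x * χ x) + (∫ x, q x * χ x) := fun χ hχ => by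
    rw [← integral_add (li_mul_tf hV.li hχ) (li_mul_tf hq.li hχ)]
    congr 1; ext x; ring
  have := liou (hV.add hq) hv (fun χ hχ => by
    rw [hadd _ hχ.lap, hg2 χ hχ]; exact h χ hχ)
  intro χ hχ
  rw [← hadd _ hχ]; exact this χ hχ

lemma pd_Lap_int {f : E3 → ℝ} (hf : LocallyIntegrable f volume) {χ : E3 → ℝ} (hχ : TF χ) (k : Fin 3) :
    ∫ x, f x * pd (Lap χ) k x = ∑ l, ∫ x, f x * pd (pd (pd χ k) l) l x := by
  rw [pd_lap hχ.smooth, ← integral_finsetSum]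
  · congr 1; ext x; unfold Lap; rw [Finset.mul_sum]
  · intro l _; exact li_mul_tf hf (((hχ.pd k).pd l).pd l)

lemma lemG {v : Fin 3 → E3 → ℝ} {M : ℝ} (hv : ∀ i, BM (v i) M)
    {c : Fin 3 → Fin 3 → E3 → ℝ} (hc : ∀ i k, L2 (c i k)) {d : E3 → ℝ} (hd : L2 d)
    (hcurl : ∀ i k χ, TF χ → (∫ x, v i x * pd χ k x) - (∫ x, v k x * pd χ i x) = - ∫ x, c i k x * χ x)
    (hdiv : ∀ χ, TF χ → ∑ i, ∫ x, v i x * pd χ i x = - ∫ x, d x * χ x) :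
    ∃ dv : Fin 3 → Fin 3 → E3 → ℝ, (∀ i k, L2 (dv i k)) ∧ ∀ i k, WD (v i) (dv i k) k := by
  have : ∀ i k, ∃ g, L2 g ∧ WD (v i) g k := by
    intro i k
    have hz : L2 (fun _ => (0:ℝ)) := MemLp.zero'
    have hB1 : ∀ a b, L2 (fun x => (if a = k then c i b x else 0)) := fun a b => by
      by_cases h : a = k <;> simp [h, hc]
    have hB2 : ∀ a b, L2 (fun x => (if a = i ∧ b = k then d x else 0)) := fun a b => by
      by_cases h : a = i ∧ b = k <;> simp only [h, if_true, if_false] <;> [exact hd; exact hz]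
    have hw : ∀ m, BM (fun x => if m = k then v i x else 0) M := fun m => by
      by_cases h : m = k
      · simpa [h] using hv i
      · simp only [h, if_false]; exact ⟨measurable_const, fun x => by simpa using (hv 0).nonneg⟩
    obtain ⟨g, hg, hg2⟩ := lemL (B := fun a b x => (if a = k then c i b x else 0) + (if a = i ∧ b = k then d x else 0))
      (q := fun _ => 0) (v := fun m x => if m = k then v i x else 0) (fun a b => (hB1 a b).add (hB2 a b)) VV.zero hw
      (fun χ hχ => by
        have e1 : ∀ a b, ∫ x, ((if a = k then c i b x else 0) + (if a = i ∧ b = k then d x else 0)) * pd (pd χ a) b x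
            = (if a = k then ∫ x, c i b x * pd (pd χ k) b x else 0) + (if a = i then (if b = k then ∫ x, d x * pd (pd χ i) k x else 0) else 0) := by
          intro a b
          simp only [add_mul]
          rw [integral_add ((hB1 a b).mul_int ((hχ.pd a).pd b).L2) ((hB2 a b).mul_int ((hχ.pd a).pd b).L2)]
          congr 1
          · by_cases h : a = k <;> simp [h]
          · by_cases h : a = i <;> by_cases h' : b = k <;> simp [h, h']
        have e2 : ∀ m, ∫ x, (if m = k then v i x else 0) * pd (Lap χ) m x = if m = k then ∫ x, v i x * pd (Lap χ) k x else 0 := by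
          intro m; by_cases h : m = k <;> simp [h]
        simp only [e1, e2, Finset.sum_add_distrib, zero_mul, integral_zero, add_zero]
        rw [Finset.sum_comm (f := fun a b => if a = k then ∫ x, c i b x * pd (pd χ k) b x else 0)]
        simp only [Finset.sum_ite_eq', Finset.mem_univ, if_true]
        have e3 : (∑ x : Fin 3, ∑ b : Fin 3, if x = i then (if b = k then ∫ x, d x * pd (pd χ i) k x else 0) else 0) =
            ∫ x, d x * pd (pd χ i) k x := by
          rw [Finset.sum_comm]; simp
        rw [e3, pd_Lap_int (hv i).li hχ]
        have e4 : ∀ l, ∫ x, v i x * pd (pd (pd χ k) l) l x =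
            (∫ x, v l x * pd (pd (pd χ i) k) l x) - ∫ x, c i l x * pd (pd χ k) l x := by
          intro l
          have := hcurl i l _ ((hχ.pd k).pd l)
          have e5 : pd (pd (pd χ k) l) i = pd (pd (pd χ i) k) l := by
            rw [pd_comm (SM.pd hχ.smooth k) l i, pd_comm hχ.smooth k i]
          rw [e5] at this; linarith
        simp only [e4, Finset.sum_sub_distrib]
        rw [hdiv _ ((hχ.pd i).pd k)]; ring)
    refine ⟨g, hg, fun χ hχ => ?_⟩
    have := hg2 χ hχ
    have e2 : ∀ m, ∫ x, (if m = k then v i x else 0) * pd χ m x = if m = k then ∫ x, v i x * pd χ k x else 0 := by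
      intro m; by_cases h : m = k <;> simp [h]
    simp only [e2, Finset.sum_ite_eq', Finset.mem_univ, if_true, zero_mul, integral_zero, add_zero] at this
    linarith
  choose dv h1 h2 using this
  exact ⟨dv, h1, h2⟩

/-- mollification scale -/
def eps (n : ℕ) : ℝ := 1 / ((n : ℝ) + 1)
lemma eps_pos (n : ℕ) : 0 < eps n := by unfold eps; positivity
lemma eps_le (n : ℕ) : eps n ≤ 1 := by
  unfold eps; rw [div_le_one (by positivity)]; linarith [(Nat.cast_nonneg n : (0:ℝ) ≤ n)]
lemma eps_lim : Tendsto eps atTop (𝓝 0) := tendsto_one_div_add_atTop_nhds_zero_nat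

/-- mollifier -/
def jm (n : ℕ) : E3 → ℝ := fun x => (∫ t, ct (eps n) t)⁻¹ * ct (eps n) x

lemma int_ct_pos {R : ℝ} (hR : 0 < R) : 0 < ∫ t, ct R t := by
  rw [int_ct hR]; have := int_sg_pos; positivity

lemma jm_tf (n : ℕ) : TF (jm n) := (ct_tf (eps_pos n)).const_mul _
lemma jm_nonneg (n : ℕ) (x : E3) : 0 ≤ jm n x :=
  mul_nonneg (inv_nonneg.2 (int_ct_pos (eps_pos n)).le) (ct_nonneg _ _)
lemma jm_even (n : ℕ) (x : E3) : jm n (-x) = jm n x := by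
  unfold jm ct sg; rw [smul_neg, bmp.neg]
lemma jm_int (n : ℕ) : ∫ x, jm n x = 1 := by
  unfold jm; rw [integral_const_mul, inv_mul_cancel₀ (int_ct_pos (eps_pos n)).ne']
lemma jm_int_abs (n : ℕ) : ∫ x, |jm n x| = 1 := by
  simp only [abs_of_nonneg (jm_nonneg n _), jm_int]
lemma jm_zero (n : ℕ) {x : E3} (hx : 2 ≤ ‖x‖) : jm n x = 0 := by
  unfold jm; rw [ct_zero (eps_pos n) (by linarith [eps_le n]), mul_zero]
lemma pd_jm (n : ℕ) (i : Fin 3) (x : E3) : pd (jm n) i x = (∫ t, ct (eps n) t)⁻¹ * pd (ct (eps n)) i x := by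
  unfold jm; rw [pd_const_mul _ (ct_tf (eps_pos n)).diff]

lemma jm_moment (i : Fin 3) : ∃ C : ℝ, 0 ≤ C ∧ ∀ n, ∫ z, |pd (jm n) i z| * ‖z‖ ≤ C := by
  refine ⟨2 * (∫ x, |pd sg i x|) / (∫ x, sg x), ?_, fun n => ?_⟩
  · have := int_sg_pos
    have h2 : 0 ≤ ∫ x, |pd sg i x| := integral_nonneg fun _ => abs_nonneg _
    positivity
  have he := eps_pos n
  have hI := int_sg_pos
  have h1 : ∀ z, |pd (jm n) i z| * ‖z‖ ≤ (2 * eps n * (∫ t, ct (eps n) t)⁻¹) * |pd (ct (eps n)) i z| := by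
    intro z
    rw [pd_jm, abs_mul, abs_of_pos (inv_pos.2 (int_ct_pos he))]
    have := (inv_pos.2 (int_ct_pos he)).le
    by_cases hz : 2 * eps n < ‖z‖
    · rw [pd_ct_zero he hz]; simp
    · have h3 := not_lt.1 hz
      have : 0 ≤ (∫ t, ct (eps n) t)⁻¹ * |pd (ct (eps n)) i z| := by positivity
      nlinarith
  have h2 := integral_mono_of_nonneg (μ := volume) (Eventually.of_forall fun z => by positivity)
    (((ct_tf he).pd i).integrable.abs.const_mul _) (Eventually.of_forall h1)
  refine h2.trans (le_of_eq ?_)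
  rw [integral_const_mul, int_pd_ct he, int_ct he]
  field_simp

def bmpn (n : ℕ) : ContDiffBump (0 : E3) := ⟨eps n, 2 * eps n, eps_pos n, by linarith [eps_pos n]⟩

lemma bmpn_eq (n : ℕ) (x : E3) : (bmpn n) x = ct (eps n) x := by
  unfold ct sg
  rw [ContDiffBump.apply, ContDiffBump.apply]
  have h1 : (bmpn n).rOut / (bmpn n).rIn = 2 := by
    show 2 * eps n / eps n = 2
    field_simp [(eps_pos n).ne']
  have h2 : bmp.rOut / bmp.rIn = 2 := by show (2:ℝ) / 1 = 2; norm_num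
  rw [h1, h2]
  simp [bmpn, bmp]

lemma moll_ae {f : E3 → ℝ} (hf : LocallyIntegrable f volume) :
    ∀ᵐ x, Tendsto (fun n => Cv f (jm n) x) atTop (𝓝 (f x)) := by
  have h := ContDiffBump.ae_convolution_tendsto_right_of_locallyIntegrable (μ := volume) (φ := bmpn)
    (l := atTop) (K := 2) (g := f) (by
      have := eps_lim.const_mul 2
      rw [mul_zero] at this; exact this) (Eventually.of_forall fun n => le_rfl) hf
  filter_upwards [h] with x hx
  refine hx.congr fun n => ?_
  rw [convolution_eq_swap]
  unfold Cv
  congr 1; ext t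
  have : (bmpn n).normed volume (x - t) = jm n (x - t) := by
    rw [ContDiffBump.normed_def]
    unfold jm
    simp only [bmpn_eq, div_eq_inv_mul]
  rw [this]; simp [mul_comm]

lemma Cv_BM {f : E3 → ℝ} {M : ℝ} (hf : BM f M) (n : ℕ) : BM (Cv f (jm n)) M :=
  ⟨(Cv_smooth hf.li (jm_tf n)).continuous.measurable, fun x => by
    have := Cv_bd_BM hf (jm_tf n) x
    rwa [jm_int_abs, mul_one] at this⟩

lemma Cv_even {f j : E3 → ℝ} (hj : ∀ x, j (-x) = j x) (x : E3) : Cv f j x = ∫ t, f t * j (t - x) := by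
  unfold Cv; congr 1; ext t; rw [← hj, neg_sub]

lemma swap {f g j : E3 → ℝ} {M : ℝ} (hf : BM f M) (hg : Integrable g volume) (hj : TF j)
    (he : ∀ x, j (-x) = j x) : ∫ x, Cv f j x * g x = ∫ x, f x * Cv g j x := by
  have h1 : Integrable (fun p : E3 × E3 => g p.2 * j (p.1 - p.2)) (volume.prod volume) := by
    have := hg.convolution_integrand (ContinuousLinearMap.lsmul ℝ ℝ) hj.integrable
    simpa using this
  have h2 : Integrable (fun p : E3 × E3 => f p.1 * (g p.2 * j (p.1 - p.2))) (volume.prod volume) := by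
    refine h1.bdd_mul (c := M) ?_ (Eventually.of_forall fun p => hf.bd _)
    exact (hf.meas.comp measurable_fst).aestronglyMeasurable
  have e1 : ∀ x, f x * Cv g j x = ∫ t, f x * (g t * j (x - t)) := fun x => by
    unfold Cv; rw [integral_const_mul]
  simp only [e1]
  rw [integral_integral_swap (f := fun x t => f x * (g t * j (x - t))) h2]
  congr 1; ext x
  rw [Cv_even he, ← integral_mul_const]
  congr 1; ext t; ring

lemma moll_lim {f g : E3 → ℝ} {M : ℝ} (hf : BM f M) (hg : Integrable g volume) :
    Tendsto (fun n => ∫ x, Cv f (jm n) x * g x) atTop (𝓝 (∫ x, f x * g x)) := by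
  refine tendsto_integral_of_dominated_convergence (fun x => M * |g x|) ?_ (hg.abs.const_mul M) ?_ ?_
  · intro n; exact ((Cv_BM hf n).mul_int hg).aestronglyMeasurable
  · intro n; refine Eventually.of_forall fun x => ?_
    rw [Real.norm_eq_abs, abs_mul]
    exact mul_le_mul_of_nonneg_right ((Cv_BM hf n).bd x) (abs_nonneg _)
  · filter_upwards [moll_ae hf.li] with x hx
    exact hx.mul_const _

lemma BM.of_tf {g : E3 → ℝ} (hg : TF g) : ∃ J, BM g J := by
  obtain ⟨J, -, hJ⟩ := hg.bdd; exact ⟨J, hg.cont.measurable, hJ⟩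

lemma BM.mul {f g : E3 → ℝ} {M N : ℝ} (hf : BM f M) (hg : BM g N) : BM (fun x => f x * g x) (M * N) :=
  ⟨hf.meas.mul hg.meas, fun x => by
    rw [abs_mul]; exact mul_le_mul (hf.bd x) (hg.bd x) (abs_nonneg _) hf.nonneg⟩

lemma BM.integrable {f : E3 → ℝ} {M r : ℝ} (hf : BM f M) (hr : 0 < r) (h0 : ∀ x, r < ‖x‖ → f x = 0) :
    Integrable f volume := by
  have := hf.mul_int (ct_tf hr).integrable
  refine this.congr (Eventually.of_forall fun x => ?_)
  simp only
  by_cases hx : r < ‖x‖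
  · rw [h0 x hx, zero_mul]
  · rw [ct_one hr (not_lt.1 hx), mul_one]

/-- localisation of a mollification -/
lemma Cv_local {d : E3 → ℝ} {r : ℝ} (hr : 0 < r) (n : ℕ) {x : E3} (hx : ‖x‖ ≤ r) :
    Cv d (jm n) x = Cv (fun t => ct (r + 2) t * d t) (jm n) x := by
  unfold Cv; congr 1; ext t
  by_cases h : 2 ≤ ‖x - t‖
  · rw [jm_zero n h]; simp
  · have h2 : ‖t‖ ≤ r + 2 := by
      have := norm_sub_norm_le t x
      rw [norm_sub_rev] at this; linarith
    show _ = ct (r + 2) t * d t * jm n (x - t)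
    rw [ct_one (by positivity) h2, one_mul]

lemma moll_lim2 {F d : E3 → ℝ} {M r : ℝ} (hF : BM F M) (hr : 0 < r) (h0 : ∀ x, r < ‖x‖ → F x = 0)
    (hd : LocallyIntegrable d volume) :
    Tendsto (fun n => ∫ x, F x * Cv d (jm n) x) atTop (𝓝 (∫ x, F x * d x)) := by
  have hi : Integrable (fun t => ct (r + 2) t * d t) volume := by
    have := li_mul_tf hd (ct_tf (by positivity : 0 < r + 2))
    simpa [mul_comm] using this
  have e1 : ∀ n, ∫ x, F x * Cv d (jm n) x = ∫ x, Cv F (jm n) x * (ct (r + 2) x * d x) := fun n => by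
    rw [swap hF hi (jm_tf n) (jm_even n)]
    congr 1; ext x
    by_cases hx : r < ‖x‖
    · rw [h0 x hx, zero_mul, zero_mul]
    · rw [Cv_local hr n (not_lt.1 hx)]
  have e2 : ∫ x, F x * d x = ∫ x, F x * (ct (r + 2) x * d x) := by
    congr 1; ext x
    by_cases hx : r < ‖x‖
    · rw [h0 x hx, zero_mul, zero_mul]
    · rw [ct_one (by positivity) (by linarith [not_lt.1 hx]), one_mul]
  simp only [e1]; rw [e2]
  exact moll_lim hF hi

lemma ae_eq_of_tf {f g : E3 → ℝ} (hf : LocallyIntegrable f volume) (hg : LocallyIntegrable g volume)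
    (h : ∀ χ, TF χ → ∫ x, f x * χ x = ∫ x, g x * χ x) : ∀ᵐ x, f x = g x := by
  refine ae_eq_of_integral_contDiff_smul_eq hf hg fun χ h1 h2 => ?_
  have := h χ ⟨h1, h2⟩
  simpa [smul_eq_mul, mul_comm] using this

def InclL : TFS →ₗ[ℝ] Lp ℝ 2 (volume : Measure E3) where
  toFun f := (TF.L2 f.2).toLp _
  map_add' f g := by
    rw [← MemLp.toLp_add]
    rfl
  map_smul' c f := by
    rw [RingHom.id_apply, ← MemLp.toLp_const_smul]
    rfl

/-- a locally integrable function which is `L²`-bounded by duality is in `L²` -/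
lemma L2_of_dual {D : E3 → ℝ} (hD : LocallyIntegrable D volume) {C : ℝ} (hC : 0 ≤ C)
    (h : ∀ χ, TF χ → |∫ x, D x * χ x| ≤ C * n2 χ) : L2 D ∧ n2 D ≤ C := by
  let l : TFS →ₗ[ℝ] ℝ :=
    { toFun := fun f => ∫ x, D x * (f : E3 → ℝ) x
      map_add' := fun f g => by
        rw [← integral_add (li_mul_tf hD f.2) (li_mul_tf hD g.2)]
        congr 1; ext x; simp; ring
      map_smul' := fun c f => by
        rw [RingHom.id_apply, smul_eq_mul, ← integral_const_mul]
        congr 1; ext x; simp; ring }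
  obtain ⟨g, hgn, hg⟩ := riesz_abs InclL l C hC (fun f => by
    show |∫ x, D x * (f : E3 → ℝ) x| ≤ C * ‖(TF.L2 f.2).toLp _‖
    rw [norm_toLp]; exact h _ f.2)
  have hg2 := Lp.memLp g
  have hae : ∀ᵐ x, D x = g x := by
    refine ae_eq_of_tf hD (hg2.locallyIntegrable (by norm_num)) fun χ hχ => ?_
    have := hg ⟨χ, hχ⟩
    rw [show l ⟨χ, hχ⟩ = ∫ x, D x * χ x from rfl, show InclL ⟨χ, hχ⟩ = hχ.L2.toLp _ from rfl] at this
    rw [this]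
    conv_lhs => rw [← Lp.toLp_coeFn g hg2]
    rw [inner_toLp]
  have hn : n2 D = n2 g := by
    unfold n2; congr 1
    apply integral_congr_ae
    filter_upwards [hae] with x hx; rw [hx]
  refine ⟨hg2.ae_eq (hae.mono fun x hx => hx.symm), ?_⟩
  rw [hn, ← norm_toLp hg2, Lp.toLp_coeFn]; exact hgn

lemma fderiv_bd {W : E3 → ℝ} {x : E3} {K : ℝ} (h : ∑ k, |pd W k x| ≤ K) : ‖fderiv ℝ W x‖ ≤ K := by
  have hK : 0 ≤ K := (Finset.sum_nonneg fun _ _ => abs_nonneg _).trans h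
  refine ContinuousLinearMap.opNorm_le_bound _ hK fun z => ?_
  have hz : z = ∑ k, z k • EuclideanSpace.single k (1:ℝ) := by
    ext i
    simp [Finset.sum_apply, Pi.single_apply]
  have : fderiv ℝ W x z = ∑ k, z k * pd W k x := by
    conv_lhs => rw [hz]
    rw [map_sum]; simp [pd]
  rw [this]
  calc ‖∑ k, z k * pd W k x‖ ≤ ∑ k, ‖z k * pd W k x‖ := norm_sum_le _ _
    _ ≤ ∑ k, |pd W k x| * ‖z‖ := Finset.sum_le_sum fun k _ => by
        rw [norm_mul, mul_comm]
        exact mul_le_mul_of_nonneg_left (PiLp.norm_apply_le z k) (norm_nonneg _)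
    _ ≤ K * ‖z‖ := by rw [← Finset.sum_mul]; exact mul_le_mul_of_nonneg_right h (norm_nonneg _)

lemma n2_comp_sub (ψ : E3 → ℝ) (x : E3) : n2 (fun t => ψ (x - t)) = n2 ψ := by
  unfold n2; rw [integral_sub_left_eq_self (fun t => ψ t ^ 2) volume x]
lemma n2_comp_sub' (ψ : E3 → ℝ) (x : E3) : n2 (fun t => ψ (t - x)) = n2 ψ := by
  unfold n2; rw [integral_sub_right_eq_self (fun t => ψ t ^ 2) x]

lemma BM.sub_shift {v : E3 → ℝ} {M : ℝ} (hv : BM v M) (z : E3) : BM (fun y => v y - v (y - z)) (M + M) :=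
  ⟨hv.meas.sub (hv.meas.comp (measurable_id.sub_const z)), fun x =>
    (abs_sub _ _).trans (add_le_add (hv.bd _) (hv.bd _))⟩

lemma transl {v : E3 → ℝ} {M : ℝ} (hv : BM v M) {d : Fin 3 → E3 → ℝ} (hd : ∀ k, L2 (d k))
    (hwd : ∀ k, WD v (d k) k) (z : E3) :
    L2 (fun y => v y - v (y - z)) ∧ n2 (fun y => v y - v (y - z)) ≤ (∑ k, n2 (d k)) * ‖z‖ := by
  have hK0 : 0 ≤ ∑ k, n2 (d k) := Finset.sum_nonneg fun k _ => n2_nonneg _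
  refine L2_of_dual (hv.sub_shift z).li (by positivity) fun ψ hψ => ?_
  have hj := hψ.comp_sub 0
  set j : E3 → ℝ := fun t => ψ (0 - t) with hjdef
  set W := Cv v j with hW
  have hWs : SM W := Cv_smooth hv.li hj
  have h1 : ∀ x, ‖fderiv ℝ W x‖ ≤ (∑ k, n2 (d k)) * n2 ψ := fun x => by
    apply fderiv_bd
    rw [Finset.sum_mul]
    refine Finset.sum_le_sum fun k _ => ?_
    rw [pd_Cv_WD hv.li hj (hwd k)]
    have := cs (hd k) (hj.comp_sub x).L2
    rw [n2_comp_sub j x, hjdef, n2_comp_sub ψ 0] at this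
    exact this
  have h2 := Convex.norm_image_sub_le_of_norm_fderiv_le (𝕜 := ℝ) (f := W) (s := univ) (x := -z) (y := 0)
    (fun x _ => hWs.diff x) (fun x _ => h1 x) convex_univ (mem_univ _) (mem_univ _)
  rw [zero_sub, neg_neg] at h2
  have e1 : W 0 = ∫ t, v t * ψ t := by
    rw [hW]; unfold Cv; congr 1; ext t; simp [hjdef]
  have e2 : W (-z) = ∫ t, v (t - z) * ψ t := by
    rw [hW]; unfold Cv
    rw [← integral_sub_right_eq_self (fun t => v t * j (-z - t)) z]
    congr 1; ext t; simp [hjdef]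
  have hv' : BM (fun t => v (t - z)) M := ⟨hv.meas.comp (measurable_id.sub_const z), fun x => hv.bd _⟩
  have e3 : ∫ x, (v x - v (x - z)) * ψ x = W 0 - W (-z) := by
    rw [e1, e2, ← integral_sub (hv.mul_int hψ.integrable) (hv'.mul_int hψ.integrable)]
    congr 1; ext x; ring
  rw [e3]
  refine h2.trans (le_of_eq ?_)
  ring

lemma int_pd_zero {χ : E3 → ℝ} (hχ : TF χ) (i : Fin 3) : ∫ x, pd χ i x = 0 := by
  have := ibp (f := fun _ => (1:ℝ)) contDiff_const (SM.one hχ.smooth) hχ.cpt i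
  simpa [pd] using this

lemma L2.bm_mul {f g : E3 → ℝ} {M : ℝ} (hf : BM f M) (hg : L2 g) : L2 (fun x => f x * g x) := by
  refine MemLp.of_le_mul (c := M) hg (hf.ae.mul hg.1) (Eventually.of_forall fun x => ?_)
  rw [norm_mul]; exact mul_le_mul_of_nonneg_right (hf.bd x) (norm_nonneg _)

lemma n2_bm_mul {f g : E3 → ℝ} {M : ℝ} (hf : BM f M) (hg : L2 g) : n2 (fun x => f x * g x) ≤ M * n2 g := by
  have hM := hf.nonneg
  have : M * n2 g = Real.sqrt (∫ x, M ^ 2 * (g x) ^ 2) := by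
    rw [integral_const_mul, Real.sqrt_mul (sq_nonneg M), Real.sqrt_sq hM]; rfl
  rw [this]
  apply Real.sqrt_le_sqrt
  refine integral_mono (L2.bm_mul hf hg).integrable_sq (hg.integrable_sq.const_mul _) fun x => ?_
  simp only
  rw [mul_pow]
  exact mul_le_mul_of_nonneg_right (sq_le_sq' (by linarith [abs_le.1 (hf.bd x)]) (abs_le.1 (hf.bd x)).2) (sq_nonneg _)

set_option maxHeartbeats 1000000 in
/-- commutator bound -/
lemma comm_bd {ρ v : E3 → ℝ} {M N : ℝ} (hρ : BM ρ M) (hv : BM v N) {d : Fin 3 → E3 → ℝ}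
    (hd : ∀ k, L2 (d k)) (hwd : ∀ k, WD v (d k) k) (i : Fin 3) :
    ∃ C : ℝ, 0 ≤ C ∧ ∀ n F, TF F → |(∫ y, ρ y * v y * Cv (pd F i) (jm n) y) -
      ∫ x, Cv ρ (jm n) x * (v x * pd F i x)| ≤ C * n2 F := by
  obtain ⟨C0, hC0, hmom⟩ := jm_moment i
  set K := ∑ k, n2 (d k) with hK
  have hK0 : 0 ≤ K := Finset.sum_nonneg fun k _ => n2_nonneg _
  have hM := hρ.nonneg
  refine ⟨M * n2 (d i) + M * K * C0, by have := n2_nonneg (d i); positivity, fun n F hF => ?_⟩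
  have hj := jm_tf n
  set j := jm n with hjdef
  have hvF : Integrable (fun x => v x * pd F i x) volume := hv.mul_int (hF.pd i).integrable
  have hdF : Integrable (fun x => d i x * F x) volume := (hd i).mul_int hF.L2
  rw [swap hρ hvF hj (jm_even n)]
  -- pointwise identity
  have hpt : ∀ y, v y * Cv (pd F i) j y - Cv (fun x => v x * pd F i x) j y =
      Cv (fun x => d i x * F x) j y + ∫ z, (v y - v (y - z)) * (pd j i z * F (y - z)) := by
    intro y
    have hχ : TF (fun t => j (y - t) * F t) := TF.mul_left (hj.comp_sub y).smooth hF
    have hpd : ∀ t, pd (fun t => j (y - t) * F t) i t = - pd j i (y - t) * F t + j (y - t) * pd F i t := fun t => by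
      rw [pd_mul (hj.comp_sub y).diff hF.diff, pd_comp_sub hj.diff]
    have h1 := hwd i _ hχ
    have h2 := int_pd_zero hχ i
    have hsub : ∫ z, (v y - v (y - z)) * (pd j i z * F (y - z)) = ∫ t, (v y - v t) * (pd j i (y - t) * F t) := by
      rw [← integral_sub_left_eq_self (fun z => (v y - v (y - z)) * (pd j i z * F (y - z))) volume y]
      congr 1; ext t; simp
    have iA : Integrable (fun t => pd j i (y - t) * F t) volume :=
      (TF.mul_left ((hj.pd i).comp_sub y).smooth hF).integrable
    have iB : Integrable (fun t => j (y - t) * pd F i t) volume :=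
      (TF.mul_left (hj.comp_sub y).smooth (hF.pd i)).integrable
    have iA' := hv.mul_int iA
    have iB' := hv.mul_int iB
    have e1 : ∫ t, v t * pd (fun t => j (y - t) * F t) i t =
        - (∫ t, v t * (pd j i (y - t) * F t)) + ∫ t, v t * (j (y - t) * pd F i t) := by
      have iAn : Integrable (fun t => -(v t * (pd j i (y - t) * F t))) volume := iA'.neg
      rw [← integral_neg, ← integral_add iAn iB']
      congr 1; ext t; rw [hpd]; ring
    have e2 : ∫ t, pd (fun t => j (y - t) * F t) i t =
        - (∫ t, pd j i (y - t) * F t) + ∫ t, j (y - t) * pd F i t := by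
      have iAn : Integrable (fun t => -(pd j i (y - t) * F t)) volume := iA.neg
      rw [← integral_neg, ← integral_add iAn iB]
      congr 1; ext t; rw [hpd]; ring
    have e3 : ∫ t, (v y - v t) * (pd j i (y - t) * F t) =
        v y * (∫ t, pd j i (y - t) * F t) - ∫ t, v t * (pd j i (y - t) * F t) := by
      rw [← integral_const_mul, ← integral_sub (iA.const_mul _) iA']
      congr 1; ext t; ring
    have e4 : Cv (pd F i) j y = ∫ t, j (y - t) * pd F i t := by
      unfold Cv; congr 1; ext t; ring
    have e5 : Cv (fun x => v x * pd F i x) j y = ∫ t, v t * (j (y - t) * pd F i t) := by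
      unfold Cv; congr 1; ext t; ring
    have e6 : Cv (fun x => d i x * F x) j y = ∫ t, d i t * (j (y - t) * F t) := by
      unfold Cv; congr 1; ext t; ring
    rw [hsub, e3, e4, e5, e6]
    rw [e1] at h1; rw [e2] at h2
    have h3 : ∫ t, pd j i (y - t) * F t = ∫ t, j (y - t) * pd F i t := by linarith
    rw [h3]; linarith
  -- integrability
  have hconvi : Integrable (fun p : E3 × E3 => pd j i p.2 * F (p.1 - p.2)) (volume.prod volume) := by
    have := (hj.pd i).integrable.convolution_integrand (ContinuousLinearMap.lsmul ℝ ℝ) hF.integrable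
    simpa using this
  have hprod : Integrable (fun p : E3 × E3 => ρ p.1 * (v p.1 - v (p.1 - p.2)) * (pd j i p.2 * F (p.1 - p.2)))
      (volume.prod volume) := by
    refine hconvi.bdd_mul (c := M * (N + N)) ?_ (Eventually.of_forall fun p => ?_)
    · exact ((hρ.meas.comp measurable_fst).mul ((hv.meas.comp measurable_fst).sub
        (hv.meas.comp (measurable_fst.sub measurable_snd)))).aestronglyMeasurable
    · rw [norm_mul]
      exact mul_le_mul (hρ.bd _) ((hv.sub_shift p.2).bd p.1) (norm_nonneg _) hM
  have hS1 : Integrable (fun y => ρ y * Cv (fun x => d i x * F x) j y) volume := by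
    refine hρ.mul_int ?_
    rw [Cv_eq]
    exact hdF.integrable_convolution _ hj.integrable
  have hS2 : Integrable (fun y => ρ y * ∫ z, (v y - v (y - z)) * (pd j i z * F (y - z))) volume := by
    refine hprod.integral_prod_left.congr (Eventually.of_forall fun y => ?_)
    simp only [mul_assoc, integral_const_mul]
  have hS3 : Integrable (fun y => ρ y * v y * Cv (pd F i) j y) volume := by
    refine (hρ.mul hv).mul_int ?_
    rw [Cv_eq]
    exact (hF.pd i).integrable.integrable_convolution _ hj.integrable
  have hS4 : Integrable (fun y => ρ y * Cv (fun x => v x * pd F i x) j y) volume := by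
    refine hρ.mul_int ?_
    rw [Cv_eq]
    exact hvF.integrable_convolution _ hj.integrable
  have hsplit : (∫ y, ρ y * v y * Cv (pd F i) j y) - ∫ x, ρ x * Cv (fun x => v x * pd F i x) j x =
      (∫ y, ρ y * Cv (fun x => d i x * F x) j y) +
      ∫ y, ρ y * ∫ z, (v y - v (y - z)) * (pd j i z * F (y - z)) := by
    rw [← integral_sub hS3 hS4, ← integral_add hS1 hS2]
    congr 1; ext y
    rw [← mul_add, ← hpt y]; ring
  rw [hsplit]
  have b1 : |∫ y, ρ y * Cv (fun x => d i x * F x) j y| ≤ M * n2 (d i) * n2 F := by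
    rw [← swap hρ hdF hj (jm_even n)]
    have e : ∫ x, Cv ρ j x * (d i x * F x) = ∫ x, (Cv ρ j x * d i x) * F x := by
      congr 1; ext x; ring
    rw [e]
    have hb := Cv_BM hρ n
    refine (cs (L2.bm_mul hb (hd i)) hF.L2).trans ?_
    exact mul_le_mul_of_nonneg_right (n2_bm_mul hb (hd i)) (n2_nonneg _)
  have b2 : |∫ y, ρ y * ∫ z, (v y - v (y - z)) * (pd j i z * F (y - z))| ≤ M * K * C0 * n2 F := by
    have e : ∫ y, ρ y * ∫ z, (v y - v (y - z)) * (pd j i z * F (y - z)) =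
        ∫ z, ∫ y, ρ y * (v y - v (y - z)) * (pd j i z * F (y - z)) := by
      rw [← integral_integral_swap (f := fun y z => ρ y * (v y - v (y - z)) * (pd j i z * F (y - z))) hprod]
      congr 1; ext y; rw [← integral_const_mul]; congr 1; ext z; ring
    rw [e]
    have hin : ∀ z, |∫ y, ρ y * (v y - v (y - z)) * (pd j i z * F (y - z))| ≤ (M * K * n2 F) * (|pd j i z| * ‖z‖) := by
      intro z
      have hFz : L2 (fun y => F (y - z)) := by
        have := (hF.comp_add (-z)).L2
        simpa [sub_eq_add_neg] using this
      have e2 : ∫ y, ρ y * (v y - v (y - z)) * (pd j i z * F (y - z)) =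
          pd j i z * ∫ y, (ρ y * (v y - v (y - z))) * F (y - z) := by
        rw [← integral_const_mul]; congr 1; ext y; ring
      obtain ⟨t1, t2⟩ := transl hv hd hwd z
      rw [e2, abs_mul]
      have b := cs (L2.bm_mul hρ t1) hFz
      rw [n2_comp_sub'] at b
      have b' := n2_bm_mul hρ t1
      have b'' : n2 (fun y => ρ y * (v y - v (y - z))) ≤ M * (K * ‖z‖) := b'.trans (mul_le_mul_of_nonneg_left t2 hM)
      calc |pd j i z| * |∫ y, (ρ y * (v y - v (y - z))) * F (y - z)|
          ≤ |pd j i z| * ((M * (K * ‖z‖)) * n2 F) := by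
            refine mul_le_mul_of_nonneg_left (b.trans ?_) (abs_nonneg _)
            exact mul_le_mul_of_nonneg_right b'' (n2_nonneg _)
        _ = _ := by ring
    have hmi : Integrable (fun z => |pd j i z| * ‖z‖) volume := by
      have h1 : Continuous (fun z => |pd j i z| * ‖z‖) := by
        have := (hj.pd i).cont; fun_prop
      exact h1.integrable_of_hasCompactSupport (hj.pd i).abs_cpt.mul_right
    rw [← Real.norm_eq_abs]
    refine (norm_integral_le_of_norm_le (hmi.const_mul (M * K * n2 F)) (Eventually.of_forall hin)).trans ?_
    rw [integral_const_mul]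
    have := mul_le_mul_of_nonneg_left (hmom n) (by have := n2_nonneg F; positivity : 0 ≤ M * K * n2 F)
    linarith
  refine (abs_add_le _ _).trans ?_
  linarith

lemma loc_grad {u : Fin 3 → E3 → ℝ} {N : ℝ} (hu : ∀ i, BM (u i) N)
    {c : Fin 3 → Fin 3 → E3 → ℝ} (hc : ∀ i k, L2 (c i k)) {D : E3 → ℝ}
    (hcurl : ∀ i k χ, TF χ → (∫ x, u i x * pd χ k x) - (∫ x, u k x * pd χ i x) = - ∫ x, c i k x * χ x)
    (hdiv : ∀ χ, TF χ → ∑ i, ∫ x, u i x * pd χ i x = - ∫ x, D x * χ x)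
    {s : E3 → ℝ} (hs : TF s) (hD : L2 (fun x => s x * D x)) :
    ∃ dv : Fin 3 → Fin 3 → E3 → ℝ, (∀ i k, L2 (dv i k)) ∧ ∀ i k, WD (fun x => s x * u i x) (dv i k) k := by
  obtain ⟨J, hJ⟩ := BM.of_tf hs
  have hv : ∀ i, BM (fun x => s x * u i x) (J * N) := fun i => hJ.mul (hu i)
  have hup : ∀ i k, L2 (fun x => u i x * pd s k x) := fun i k => L2.bm_mul (hu i) (hs.pd k).L2
  -- basic product identity
  have key : ∀ i k χ, TF χ → ∫ x, (s x * u i x) * pd χ k x =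
      (∫ x, u i x * pd (fun y => s y * χ y) k x) - ∫ x, (u i x * pd s k x) * χ x := by
    intro i k χ hχ
    rw [← integral_sub ((hu i).mul_int ((TF.mul_left hs.smooth hχ).pd k).integrable)
      ((hup i k).mul_int hχ.L2)]
    congr 1; ext x; rw [pd_mul hs.diff hχ.diff]; ring
  refine lemG hv (c := fun i k x => s x * c i k x + (u i x * pd s k x - u k x * pd s i x))
    (fun i k => (L2.bm_mul hJ (hc i k)).add ((hup i k).sub (hup k i)))
    (d := fun x => s x * D x + ∑ i, u i x * pd s i x)
    (hD.add (memLp_finset_sum _ fun i _ => hup i i)) ?_ ?_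
  · intro i k χ hχ
    rw [key i k χ hχ, key k i χ hχ]
    have h := hcurl i k _ (TF.mul_left hs.smooth hχ)
    have e : ∫ x, (s x * c i k x + (u i x * pd s k x - u k x * pd s i x)) * χ x =
        (∫ x, c i k x * (s x * χ x)) + ((∫ x, (u i x * pd s k x) * χ x) - ∫ x, (u k x * pd s i x) * χ x) := by
      have ii : Integrable (fun x => u i x * pd s k x * χ x - u k x * pd s i x * χ x) volume :=
        ((hup i k).mul_int hχ.L2).sub ((hup k i).mul_int hχ.L2)
      rw [← integral_sub ((hup i k).mul_int hχ.L2) ((hup k i).mul_int hχ.L2),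
        ← integral_add ((hc i k).mul_int (TF.mul_left hs.smooth hχ).L2) ii]
      congr 1; ext x; ring
    rw [e]; linarith
  · intro χ hχ
    rw [Finset.sum_congr rfl fun i _ => key i i χ hχ, Finset.sum_sub_distrib]
    have h := hdiv _ (TF.mul_left hs.smooth hχ)
    have e : ∫ x, (s x * D x + ∑ i, u i x * pd s i x) * χ x =
        (∫ x, D x * (s x * χ x)) + ∑ i, ∫ x, (u i x * pd s i x) * χ x := by
      rw [← integral_finsetSum _ fun i _ => (hup i i).mul_int hχ.L2, ← integral_add]
      · congr 1; ext x; rw [add_mul, Finset.sum_mul]; ring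
      · refine (hD.mul_int hχ.L2).congr (Eventually.of_forall fun x => ?_); simp only; ring
      · exact integrable_finset_sum _ fun i _ => (hup i i).mul_int hχ.L2
    rw [e]; linarith

lemma cont_bd {k : ℝ → ℝ} (hk : Continuous k) (M : ℝ) : ∃ K, 0 ≤ K ∧ ∀ s, |s| ≤ M → |k s| ≤ K := by
  obtain ⟨K, hK⟩ := isCompact_Icc.exists_bound_of_continuousOn (s := Icc (-M) M) hk.continuousOn
  exact ⟨|K|, abs_nonneg _, fun s hs => (hK s (abs_le.1 hs)).trans (le_abs_self _)⟩

lemma BM.comp {f : E3 → ℝ} {M : ℝ} (hf : BM f M) {k : ℝ → ℝ} (hk : Continuous k) : ∃ K, BM (fun x => k (f x)) K := by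
  obtain ⟨K, -, h⟩ := cont_bd hk M
  exact ⟨K, hk.measurable.comp hf.meas, fun x => h _ (hf.bd x)⟩

lemma moll_comp {ρ w : E3 → ℝ} {M : ℝ} (hρ : BM ρ M) (hw : Integrable w volume) {k : ℝ → ℝ} (hk : Continuous k) :
    Tendsto (fun n => ∫ x, w x * k (Cv ρ (jm n) x)) atTop (𝓝 (∫ x, w x * k (ρ x))) := by
  obtain ⟨K, hK0, hK⟩ := cont_bd hk M
  refine tendsto_integral_of_dominated_convergence (fun x => K * |w x|) ?_ (hw.abs.const_mul K) ?_ ?_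
  · intro n
    exact hw.aestronglyMeasurable.mul (hk.measurable.comp (Cv_BM hρ n).meas).aestronglyMeasurable
  · intro n; refine Eventually.of_forall fun x => ?_
    rw [Real.norm_eq_abs, abs_mul, mul_comm]
    exact mul_le_mul_of_nonneg_right (hK _ ((Cv_BM hρ n).bd x)) (abs_nonneg _)
  · filter_upwards [moll_ae hρ.li] with x hx
    exact ((hk.tendsto _).comp hx).const_mul _

lemma SM.poly {R : E3 → ℝ} (hR : SM R) (b : Polynomial ℝ) : SM (fun x => b.eval (R x)) :=
  (by
    have := Polynomial.contDiff_aeval (𝕜 := ℝ) b ((⊤ : ℕ∞) : WithTop ℕ∞)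
    simpa only [Polynomial.coe_aeval_eq_eval] using this : ContDiff ℝ ((⊤ : ℕ∞) : WithTop ℕ∞) fun s : ℝ => b.eval s).comp hR

lemma pd_poly {R : E3 → ℝ} (hR : SM R) (b : Polynomial ℝ) (i : Fin 3) :
    pd (fun x => b.eval (R x)) i = fun x => b.derivative.eval (R x) * pd R i x := by
  ext x
  have h := (b.hasDerivAt (R x)).comp_hasFDerivAt x (hR.diff x).hasFDerivAt
  unfold pd
  have h2 : fderiv ℝ (fun x => b.eval (R x)) x = _ := h.fderiv
  rw [h2]; simp

lemma TF.Cv {F j : E3 → ℝ} (hF : TF F) (hj : TF j) : TF (Cv F j) :=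
  ⟨Cv_smooth hF.cont.locallyIntegrable hj, by rw [Cv_eq]; exact hF.cpt.convolution _ hj.cpt⟩

lemma Cv_supp {F : E3 → ℝ} {r : ℝ} (h : ∀ x, r < ‖x‖ → F x = 0) (n : ℕ) {x : E3} (hx : r + 2 < ‖x‖) :
    Cv F (jm n) x = 0 := by
  unfold Cv
  rw [← integral_zero E3 ℝ (μ := volume)]
  congr 1; ext t
  by_cases h1 : r < ‖t‖
  · rw [h t h1, zero_mul]
  · rw [jm_zero, mul_zero]
    have := norm_sub_norm_le x t
    linarith

set_option maxHeartbeats 1000000 in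
lemma renorm {ρ : E3 → ℝ} {v : Fin 3 → E3 → ℝ} {M N : ℝ} (hρ : BM ρ M) (hv : ∀ i, BM (v i) N)
    {dv : Fin 3 → Fin 3 → E3 → ℝ} (hdv : ∀ i k, L2 (dv i k)) (hwd : ∀ i k, WD (v i) (dv i k) k)
    {r : ℝ} (hmass : ∀ F, TF F → (∀ x, r + 2 < ‖x‖ → F x = 0) → ∑ i, ∫ x, ρ x * v i x * pd F i x = 0)
    {φ : E3 → ℝ} (hφ : TF φ) (hφr : ∀ x, r < ‖x‖ → φ x = 0) (b : Polynomial ℝ) :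
    ∫ x, ((∑ i, dv i i x) * φ x) * (ρ x * b.derivative.eval (ρ x) - b.eval (ρ x)) =
      ∫ x, (∑ i, v i x * pd φ i x) * b.eval (ρ x) := by
  choose C hC0 hC using fun i => comm_bd hρ (hv i) (hdv i) (hwd i) i
  set R : ℕ → E3 → ℝ := fun n => Cv ρ (jm n) with hRdef
  have hR : ∀ n, SM (R n) := fun n => Cv_smooth hρ.li (jm_tf n)
  have hRB : ∀ n, BM (R n) M := fun n => Cv_BM hρ n
  let L : ℕ → (E3 → ℝ) → ℝ := fun n F => ∑ i, ∫ x, R n x * (v i x * pd F i x)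
  have hitg : ∀ n F i, TF F → Integrable (fun x => R n x * (v i x * pd F i x)) volume := fun n F i hF =>
    (hRB n).mul_int ((hv i).mul_int (hF.pd i).integrable)
  set CC := ∑ i, C i with hCC
  have hCC0 : 0 ≤ CC := Finset.sum_nonneg fun i _ => hC0 i
  have hLb : ∀ n F, TF F → (∀ x, r < ‖x‖ → F x = 0) → |L n F| ≤ CC * n2 F := by
    intro n F hF hFr
    have h0 : ∑ i, ∫ x, ρ x * v i x * Cv (pd F i) (jm n) x = 0 := by
      have := hmass _ (hF.Cv (jm_tf n)) fun x hx => Cv_supp hFr n hx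
      rw [← this]
      refine Finset.sum_congr rfl fun i _ => ?_
      rw [pd_Cv_WD (g := pd F i) hF.cont.locallyIntegrable (jm_tf n)]
      intro χ hχ
      exact ibp (SM.one hF.smooth) (SM.one hχ.smooth) hχ.cpt i
    have e : L n F = -∑ i, ((∫ x, ρ x * v i x * Cv (pd F i) (jm n) x) - ∫ x, R n x * (v i x * pd F i x)) := by
      rw [Finset.sum_sub_distrib, h0]; simp [L]
    rw [e, abs_neg, hCC, Finset.sum_mul]
    exact (Finset.abs_sum_le_sum_abs _ _).trans (Finset.sum_le_sum fun i _ => hC i n F hF)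
  have hLsub : ∀ n F G, TF F → TF G → L n (fun x => F x - G x) = L n F - L n G := by
    intro n F G hF hG
    simp only [L]
    rw [← Finset.sum_sub_distrib]
    refine Finset.sum_congr rfl fun i _ => ?_
    rw [← integral_sub (hitg n F i hF) (hitg n G i hG)]
    congr 1; ext x; rw [pd_sub hF.diff hG.diff]; ring
  have hLlim : ∀ F, TF F → (∀ x, r < ‖x‖ → F x = 0) → Tendsto (fun n => L n F) atTop (𝓝 0) := by
    intro F hF hFr
    rw [← hmass F hF fun x hx => hFr x (by linarith)]
    refine tendsto_finset_sum _ fun i _ => ?_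
    have := moll_lim hρ ((hv i).mul_int (hF.pd i).integrable)
    simpa only [mul_assoc] using this
  -- test functions
  set b' := b.derivative with hb'
  set g : ℕ → E3 → ℝ := fun n x => φ x * b'.eval (R n x) with hg
  have hgT : ∀ n, TF (g n) := fun n => TF.mul_right hφ ((hR n).poly b')
  have hgr : ∀ n x, r < ‖x‖ → g n x = 0 := fun n x hx => by simp [hg, hφr x hx]
  set g0 : E3 → ℝ := fun x => φ x * b'.eval (ρ x) with hg0
  obtain ⟨K, hK⟩ := hρ.comp b'.continuous
  have hg0L : L2 g0 := by
    have := L2.bm_mul hK hφ.L2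
    simpa only [hg0, mul_comm] using this
  have hφ2 : Integrable (fun x => φ x ^ 2) volume := hφ.L2.integrable_sq
  have ha : Tendsto (fun n => ∫ x, (g n x - g0 x) ^ 2) atTop (𝓝 0) := by
    have l1 := moll_comp hρ hφ2 (k := fun s => b'.eval s ^ 2) (b'.continuous.pow 2)
    have i2 : Integrable (fun x => b'.eval (ρ x) * φ x ^ 2) volume := hK.mul_int hφ2
    have l2 := moll_comp hρ i2 b'.continuous
    have l3 := (l1.sub (l2.const_mul 2)).add_const (∫ x, g0 x ^ 2)
    have e0 : (∫ x, φ x ^ 2 * b'.eval (ρ x) ^ 2) - 2 * (∫ x, b'.eval (ρ x) * φ x ^ 2 * b'.eval (ρ x)) + ∫ x, g0 x ^ 2 = 0 := by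
      have : ∫ x, b'.eval (ρ x) * φ x ^ 2 * b'.eval (ρ x) = ∫ x, g0 x ^ 2 := by congr 1; ext x; simp only [hg0]; ring
      have h2 : ∫ x, φ x ^ 2 * b'.eval (ρ x) ^ 2 = ∫ x, g0 x ^ 2 := by congr 1; ext x; simp only [hg0]; ring
      rw [this, h2]; ring
    rw [e0] at l3
    refine l3.congr fun n => ?_
    obtain ⟨K', hK'⟩ := (hRB n).comp b'.continuous
    have j1 : Integrable (fun x => φ x ^ 2 * b'.eval (R n x) ^ 2) volume := by
      refine ((hgT n).L2.integrable_sq).congr (Eventually.of_forall fun x => ?_); simp only [hg]; ring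
    have j2 : Integrable (fun x => b'.eval (ρ x) * φ x ^ 2 * b'.eval (R n x)) volume := by
      refine ((hgT n).L2.mul_int hg0L).congr (Eventually.of_forall fun x => ?_); simp only [hg, hg0]; ring
    have j3 : Integrable (fun x => φ x ^ 2 * b'.eval (R n x) ^ 2 - 2 * (b'.eval (ρ x) * φ x ^ 2 * b'.eval (R n x))) volume :=
      j1.sub (j2.const_mul 2)
    rw [← integral_const_mul, ← integral_sub j1 (j2.const_mul 2), ← integral_add j3 hg0L.integrable_sq]
    congr 1; ext x; simp only [hg, hg0]; ring
  have hmain : Tendsto (fun n => L n (g n)) atTop (𝓝 0) := by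
    rw [Metric.tendsto_atTop]
    intro ε hε
    set δ := (ε / (4 * (CC + 1))) ^ 2 with hδ
    have hδ0 : 0 < δ := by positivity
    obtain ⟨m, hm⟩ := Metric.tendsto_atTop.1 ha δ hδ0
    obtain ⟨m', hm'⟩ := Metric.tendsto_atTop.1 (hLlim (g m) (hgT m) (hgr m)) (ε / 2) (by positivity)
    refine ⟨max m m', fun n hn => ?_⟩
    have a1 := hm n (le_of_max_le_left hn)
    have a2 := hm m le_rfl
    have a3 := hm' n (le_of_max_le_right hn)
    rw [Real.dist_eq, sub_zero] at a1 a2 a3 ⊢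
    have a1' := (abs_lt.1 a1).2
    have a2' := (abs_lt.1 a2).2
    have b1 : n2 (fun x => g n x - g m x) ≤ 2 * (ε / (4 * (CC + 1))) := by
      refine Real.sqrt_le_iff.2 ⟨by positivity, ?_⟩
      have i1 := ((hgT n).L2.sub hg0L).integrable_sq
      have i2 := ((hgT m).L2.sub hg0L).integrable_sq
      calc ∫ x, (g n x - g m x) ^ 2 ≤ ∫ x, (2 * (g n x - g0 x) ^ 2 + 2 * (g m x - g0 x) ^ 2) := by
            refine integral_mono ((hgT n).sub (hgT m)).L2.integrable_sq ((i1.const_mul 2).add (i2.const_mul 2)) fun x => ?_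
            simp only
            nlinarith [sq_nonneg (g n x - g0 x + (g m x - g0 x))]
        _ = 2 * (∫ x, (g n x - g0 x) ^ 2) + 2 * ∫ x, (g m x - g0 x) ^ 2 := by
            rw [← integral_const_mul, ← integral_const_mul]
            exact integral_add (i1.const_mul 2) (i2.const_mul 2)
        _ ≤ 4 * δ := by linarith
        _ = _ := by rw [hδ]; ring
    have b2 := hLb n (fun x => g n x - g m x) ((hgT n).sub (hgT m)) fun x hx => by rw [hgr n x hx, hgr m x hx, sub_zero]
    rw [hLsub n _ _ (hgT n) (hgT m)] at b2
    have b3 : CC * n2 (fun x => g n x - g m x) < ε / 2 := by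
      refine lt_of_le_of_lt (mul_le_mul_of_nonneg_left b1 hCC0) ?_
      rw [show CC * (2 * (ε / (4 * (CC + 1)))) = (ε / 2) * (CC / (CC + 1)) by field_simp; ring]
      have : CC / (CC + 1) < 1 := by rw [div_lt_one (by positivity)]; linarith
      nlinarith
    have : L n (g n) = (L n (g n) - L n (g m)) + L n (g m) := by ring
    rw [this]
    refine lt_of_le_of_lt (abs_add_le _ _) ?_
    linarith
  -- identity
  have hw1 : Integrable (fun x => (∑ i, dv i i x) * φ x) volume := by
    have : L2 (fun x => ∑ i, dv i i x) := memLp_finset_sum _ fun i _ => hdv i i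
    exact this.mul_int hφ.L2
  have hw2 : Integrable (fun x => ∑ i, v i x * pd φ i x) volume :=
    integrable_finset_sum _ fun i _ => (hv i).mul_int (hφ.pd i).integrable
  have hk : Continuous (fun s : ℝ => s * b'.eval s - b.eval s) := (continuous_id.mul b'.continuous).sub b.continuous
  have l1 := moll_comp hρ hw1 hk
  have l2 := moll_comp hρ hw2 b.continuous
  have hid : ∀ n, L n (g n) = (∫ x, (∑ i, v i x * pd φ i x) * b.eval (R n x)) -
      ∫ x, ((∑ i, dv i i x) * φ x) * (R n x * b'.eval (R n x) - b.eval (R n x)) := by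
    intro n
    set kp : Polynomial ℝ := Polynomial.X * b' - b with hkp
    have hχ : TF (fun x => φ x * kp.eval (R n x)) := TF.mul_right hφ ((hR n).poly kp)
    have e1 : ∀ i, ∫ x, R n x * (v i x * pd (g n) i x) =
        (∫ x, (v i x * pd φ i x) * b.eval (R n x)) - ∫ x, dv i i x * (φ x * kp.eval (R n x)) := by
      intro i
      have hb2 : TF (fun x => pd φ i x * b.eval (R n x)) := TF.mul_right (hφ.pd i) ((hR n).poly b)
      have hi1 : Integrable (fun x => (v i x * pd φ i x) * b.eval (R n x)) volume := by
        refine ((hv i).mul_int hb2.integrable).congr (Eventually.of_forall fun x => ?_); simp only; ring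
      have hi2 := (hv i).mul_int (hχ.pd i).integrable
      have := hwd i i _ hχ
      rw [sub_eq_add_neg, ← this, ← integral_add hi1 hi2]
      congr 1; ext x
      rw [hg, pd_mul hφ.diff ((hR n).poly b').diff, pd_mul hφ.diff ((hR n).poly kp).diff, pd_poly (hR n), pd_poly (hR n), hkp]
      simp only [Polynomial.derivative_sub, Polynomial.derivative_mul, Polynomial.derivative_X, Polynomial.eval_sub,
        Polynomial.eval_add, Polynomial.eval_mul, Polynomial.eval_X, Polynomial.eval_one, ← hb']
      ring
    simp only [L]
    rw [Finset.sum_congr rfl fun i _ => e1 i, Finset.sum_sub_distrib, ← integral_finsetSum, ← integral_finsetSum]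
    · congr 1
      · congr 1; ext x; rw [Finset.sum_mul]
      · congr 1; ext x; rw [← Finset.sum_mul, hkp]; simp; ring
    · intro i _; exact (hdv i i).mul_int hχ.L2
    · intro i _
      have hb2 : TF (fun x => pd φ i x * b.eval (R n x)) := TF.mul_right (hφ.pd i) ((hR n).poly b)
      refine ((hv i).mul_int hb2.integrable).congr (Eventually.of_forall fun x => ?_); simp only; ring
  have l3 := l2.sub l1
  have := tendsto_nhds_unique (l3.congr fun n => (hid n).symm) hmain
  linarith

lemma pd_zero_out {F : E3 → ℝ} {r : ℝ} (h : ∀ x, r < ‖x‖ → F x = 0) {x : E3} (hx : r < ‖x‖) (i : Fin 3) :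
    pd F i x = 0 := by
  have : F =ᶠ[𝓝 x] fun _ => 0 := by
    filter_upwards [(isOpen_lt continuous_const continuous_norm).mem_nhds hx] with y hy using h y hy
  unfold pd; rw [this.fderiv_eq]; simp

lemma poly_anti (P : Polynomial ℝ) : ∃ Q : Polynomial ℝ, Q.derivative = P := by
  induction P using Polynomial.induction_on' with
  | add p q hp hq =>
    obtain ⟨a, ha⟩ := hp; obtain ⟨b, hb⟩ := hq
    exact ⟨a + b, by rw [Polynomial.derivative_add, ha, hb]⟩
  | monomial n a =>
    refine ⟨Polynomial.monomial (n + 1) (a / (n + 1)), ?_⟩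
    rw [Polynomial.derivative_monomial]
    have : (n : ℝ) + 1 ≠ 0 := by positivity
    simp only [Nat.add_sub_cancel]; congr 1; push_cast; field_simp

lemma ct_lim (x : E3) : Tendsto (fun n : ℕ => ct ((n : ℝ) + 1) x) atTop (𝓝 1) := by
  refine tendsto_const_nhds.congr' ?_
  obtain ⟨m, hm⟩ := exists_nat_ge ‖x‖
  filter_upwards [eventually_ge_atTop m] with n hn
  rw [ct_one (by positivity)]
  have : (m : ℝ) ≤ n := by exact_mod_cast hn
  linarith

lemma ct_int_lim {w : E3 → ℝ} (hw : Integrable w volume) :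
    Tendsto (fun n : ℕ => ∫ x, ct ((n : ℝ) + 1) x * w x) atTop (𝓝 (∫ x, w x)) := by
  refine tendsto_integral_of_dominated_convergence (fun x => |w x|) ?_ hw.abs ?_ ?_
  · intro n; exact (ct_tf (by positivity)).cont.aestronglyMeasurable.mul hw.aestronglyMeasurable
  · intro n; refine Eventually.of_forall fun x => ?_
    rw [Real.norm_eq_abs, abs_mul, abs_of_nonneg (ct_nonneg _ _)]
    exact mul_le_of_le_one_left (abs_nonneg _) (ct_le_one _ _)
  · refine Eventually.of_forall fun x => ?_
    simpa using (ct_lim x).mul_const (w x)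

lemma pdct_int_lim {w : E3 → ℝ} (hw : Integrable w volume) (i : Fin 3) :
    Tendsto (fun n : ℕ => ∫ x, pd (ct ((n : ℝ) + 1)) i x * w x) atTop (𝓝 0) := by
  obtain ⟨K, hK0, hK⟩ := exists_bd_pd_ct
  have hlim : Tendsto (fun n : ℕ => K * (∫ x, |w x|) * (1 / ((n : ℝ) + 1))) atTop (𝓝 0) := by
    simpa using tendsto_one_div_add_atTop_nhds_zero_nat.const_mul (K * ∫ x, |w x|)
  refine squeeze_zero_norm (fun n => ?_) hlim
  refine (norm_integral_le_of_norm_le (hw.abs.const_mul (K / ((n : ℝ) + 1))) (Eventually.of_forall fun x => ?_)).trans ?_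
  · rw [Real.norm_eq_abs, abs_mul]
    exact mul_le_mul_of_nonneg_right (hK _ (by positivity) i x) (abs_nonneg _)
  · rw [integral_const_mul]; apply le_of_eq; ring

lemma L2.of_bi {f : E3 → ℝ} {M : ℝ} (hf : BM f M) (hi : Integrable f volume) : L2 f := by
  refine (memLp_two_iff_integrable_sq hf.ae).2 ?_
  refine (hf.mul_int hi).congr (Eventually.of_forall fun x => ?_)
  simp only; ring

section
variable {ρ : E3 → ℝ} {u : Fin 3 → E3 → ℝ} {M N : ℝ}

lemma press_poly (hρ : BM ρ M) (hρi : Integrable ρ volume) (hu : ∀ i, BM (u i) N)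
    (hmass : ∀ F, TF F → ∑ i, ∫ x, ρ x * u i x * pd F i x = 0)
    {c : Fin 3 → Fin 3 → E3 → ℝ} (hc : ∀ i k, L2 (c i k)) {D : E3 → ℝ}
    (hcurl : ∀ i k χ, TF χ → (∫ x, u i x * pd χ k x) - (∫ x, u k x * pd χ i x) = - ∫ x, c i k x * χ x)
    (hdiv : ∀ χ, TF χ → ∑ i, ∫ x, u i x * pd χ i x = - ∫ x, D x * χ x)
    (hDl : LocallyIntegrable D volume)
    (hDs : ∀ s, TF s → L2 (fun x => s x * D x)) (hDi : Integrable (fun x => ρ x * D x) volume)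
    (P : Polynomial ℝ) : ∫ x, ρ x * D x * (ρ x * P.eval (ρ x)) = 0 := by
  obtain ⟨Q, hQ⟩ := poly_anti P
  set b : Polynomial ℝ := Polynomial.X * Q with hb
  have hkid : ∀ s : ℝ, s * b.derivative.eval s - b.eval s = s * (s * P.eval s) := fun s => by
    simp only [hb, Polynomial.derivative_mul, Polynomial.derivative_X, hQ, Polynomial.eval_add, Polynomial.eval_mul,
      Polynomial.eval_X, Polynomial.eval_one]; ring
  have hbe : ∀ s : ℝ, b.eval s = s * Q.eval s := fun s => by simp [hb]
  obtain ⟨K, hK⟩ := hρ.comp (Q.continuous)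
  obtain ⟨K2, hK2⟩ := hρ.comp (continuous_id.mul P.continuous)
  have hW : Integrable (fun x => ρ x * D x * (ρ x * P.eval (ρ x))) volume := by
    refine (hK2.mul_int hDi).congr (Eventually.of_forall fun x => ?_); simp only [Pi.mul_apply, id]; ring
  have hbi : Integrable (fun x => b.eval (ρ x)) volume := by
    refine (hK.mul_int hρi).congr (Eventually.of_forall fun x => ?_); simp only [hbe]; ring
  have hid : ∀ n : ℕ, ∫ x, ct ((n : ℝ) + 1) x * (ρ x * D x * (ρ x * P.eval (ρ x))) =
      ∑ i, ∫ x, pd (ct ((n : ℝ) + 1)) i x * (u i x * b.eval (ρ x)) := by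
    intro n
    set R : ℝ := (n : ℝ) + 1 with hR
    have hR0 : 0 < R := by positivity
    have hR1 : 0 < 2 * R + 3 := by positivity
    have hs := ct_tf hR1
    have hφ := ct_tf hR0
    obtain ⟨dv, h1, h2⟩ := loc_grad hu hc hcurl hdiv hs (hDs _ hs)
    obtain ⟨J, hJ⟩ := BM.of_tf hs
    have hone : ∀ F : E3 → ℝ, (∀ x, 2 * R + 2 < ‖x‖ → F x = 0) → ∀ x, ct (2 * R + 3) x * F x = F x := by
      intro F hF x
      by_cases hx : 2 * R + 2 < ‖x‖
      · rw [hF x hx, mul_zero]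
      · rw [ct_one hR1 (by linarith), one_mul]
    have hr := renorm hρ (fun i => hJ.mul (hu i)) h1 h2 (r := 2 * R) (fun F hF hF0 => by
      rw [← hmass F hF]
      refine Finset.sum_congr rfl fun i _ => ?_
      congr 1; ext x
      have := hone (pd F i) (fun x hx => pd_zero_out hF0 hx i) x
      linear_combination (ρ x * u i x) * this) hφ (fun x hx => ct_zero hR0 hx.le) b
    have hae : ∀ᵐ x, (∑ i, dv i i x) * ct R x = D x * ct R x := by
      have hL : L2 (fun x => ∑ i, dv i i x) := memLp_finset_sum _ fun i _ => h1 i i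
      refine ae_eq_of_tf (hL.mul_int hφ.L2).locallyIntegrable (li_mul_tf hDl hφ).locallyIntegrable fun χ hχ => ?_
      have hφχ := TF.mul_left hφ.smooth hχ
      have e1 := hdiv _ hφχ
      have e2 : ∑ i, ∫ x, u i x * pd (fun x => ct R x * χ x) i x = - ∫ x, (∑ i, dv i i x) * (ct R x * χ x) := by
        have : ∀ i, ∫ x, u i x * pd (fun x => ct R x * χ x) i x = - ∫ x, dv i i x * (ct R x * χ x) := by
          intro i
          rw [← h2 i i _ hφχ]
          congr 1; ext x
          have := hone (pd (fun x => ct R x * χ x) i) (fun x hx => pd_zero_out (r := 2 * R)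
            (fun y hy => by rw [ct_zero hR0 hy.le, zero_mul]) (by linarith) i) x
          linear_combination (- u i x) * this
        rw [Finset.sum_congr rfl fun i _ => this i, Finset.sum_neg_distrib, ← integral_finsetSum]
        · congr 2; ext x; rw [Finset.sum_mul]
        · intro i _; exact (h1 i i).mul_int hφχ.L2
      simp only [mul_assoc]
      linarith
    have e3 : ∫ x, ((∑ i, dv i i x) * ct R x) * (ρ x * b.derivative.eval (ρ x) - b.eval (ρ x)) =
        ∫ x, ct R x * (ρ x * D x * (ρ x * P.eval (ρ x))) := by
      refine integral_congr_ae ?_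
      filter_upwards [hae] with x hx
      rw [hx, hkid]; ring
    rw [← e3, hr, ← integral_finsetSum]
    · congr 1; ext x
      rw [Finset.sum_mul]
      refine Finset.sum_congr rfl fun i _ => ?_
      have := hone (pd (ct R) i) (fun x hx => pd_ct_zero hR0 (by linarith) i) x
      linear_combination (u i x * b.eval (ρ x)) * this
    · intro i _
      obtain ⟨J', hJ'⟩ := BM.of_tf (hφ.pd i)
      exact hJ'.mul_int ((hu i).mul_int hbi)
  have l1 := ct_int_lim hW
  have l2 : Tendsto (fun n : ℕ => ∑ i, ∫ x, pd (ct ((n : ℝ) + 1)) i x * (u i x * b.eval (ρ x))) atTop (𝓝 (∑ i : Fin 3, (0:ℝ))) :=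
    tendsto_finset_sum _ fun i _ => pdct_int_lim ((hu i).mul_int hbi) i
  simp only [hid] at l1
  have := tendsto_nhds_unique l1 l2
  simpa using this

lemma press_cont (hρ : BM ρ M) (hρ0 : ∀ x, 0 ≤ ρ x) {D : E3 → ℝ} (hDi : Integrable (fun x => ρ x * D x) volume)
    (hP : ∀ P : Polynomial ℝ, ∫ x, ρ x * D x * (ρ x * P.eval (ρ x)) = 0)
    {f : ℝ → ℝ} (hf : Continuous f) : ∫ x, ρ x * D x * (ρ x * f (ρ x)) = 0 := by
  obtain ⟨K, hK⟩ := hρ.comp (continuous_id.mul hf)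
  have hi : Integrable (fun x => ρ x * D x * (ρ x * f (ρ x))) volume := by
    refine (hK.mul_int hDi).congr (Eventually.of_forall fun x => ?_); simp only [Pi.mul_apply, id]; ring
  set B := ∫ x, |ρ x * (ρ x * D x)| with hB
  have hiB := (hρ.mul_int hDi).abs
  have hB0 : 0 ≤ B := integral_nonneg fun _ => abs_nonneg _
  have key : ∀ ε > 0, |∫ x, ρ x * D x * (ρ x * f (ρ x))| ≤ ε * B := by
    intro ε hε
    obtain ⟨P, hPe⟩ := exists_polynomial_near_of_continuousOn 0 M f hf.continuousOn ε hε
    obtain ⟨K2, hK2⟩ := hρ.comp (continuous_id.mul P.continuous)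
    have hi2 : Integrable (fun x => ρ x * D x * (ρ x * P.eval (ρ x))) volume := by
      refine (hK2.mul_int hDi).congr (Eventually.of_forall fun x => ?_); simp only [Pi.mul_apply, id]; ring
    rw [← sub_zero (∫ x, ρ x * D x * (ρ x * f (ρ x))), ← hP P, ← integral_sub hi hi2, hB, ← integral_const_mul,
      ← Real.norm_eq_abs]
    refine norm_integral_le_of_norm_le (hiB.const_mul ε) (Eventually.of_forall fun x => ?_)
    have h1 := hPe (ρ x) ⟨hρ0 x, (le_abs_self _).trans (hρ.bd x)⟩
    rw [abs_sub_comm] at h1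
    rw [show ρ x * D x * (ρ x * f (ρ x)) - ρ x * D x * (ρ x * P.eval (ρ x)) = (f (ρ x) - P.eval (ρ x)) * (ρ x * (ρ x * D x)) by ring,
      norm_mul]
    exact mul_le_mul_of_nonneg_right h1.le (norm_nonneg _)
  by_contra hne
  have hpos : 0 < |∫ x, ρ x * D x * (ρ x * f (ρ x))| := abs_pos.2 hne
  set A := |∫ x, ρ x * D x * (ρ x * f (ρ x))|
  have := key (A / (2 * (B + 1))) (by positivity)
  have h2 : A / (2 * (B + 1)) * B ≤ A / 2 := by
    rw [div_mul_eq_mul_div, div_le_div_iff₀ (by positivity) (by positivity)]; nlinarith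
  linarith

lemma L2_eLp {f : E3 → ℝ} (hf : L2 f) : eLpNorm f 2 volume = ENNReal.ofReal (n2 f) := by
  rw [← norm_toLp hf, Lp.norm_toLp, ENNReal.ofReal_toReal hf.2.ne]

lemma press_L2 (hρ : BM ρ M) (hρ0 : ∀ x, 0 ≤ ρ x) (hρi : Integrable ρ volume)
    {p : ℝ → ℝ} (hp : Continuous p) (hp0 : p 0 = 0) (hpn : ∀ s, 0 ≤ p s) {h : E3 → ℝ} (hh : L2 h)
    (hf : ∀ f : ℝ → ℝ, Continuous f → ∫ x, ρ x * (h x + p (ρ x)) * (ρ x * f (ρ x)) = 0) :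
    L2 (fun x => p (ρ x)) ∧ ∫ x, p (ρ x) * (h x + p (ρ x)) = 0 := by
  have hρL := L2.of_bi hρ hρi
  obtain ⟨K, hK⟩ := hρ.comp hp
  let f : ℕ → ℝ → ℝ := fun n s => p s / (s ^ 2 + 1 / ((n:ℝ) + 1))
  have hpos : ∀ (n : ℕ) (s : ℝ), 0 < s ^ 2 + 1 / ((n:ℝ) + 1) := fun n s => by positivity
  have hfc : ∀ n, Continuous (f n) := fun n => hp.div (by fun_prop) fun s => (hpos n s).ne'
  let ψ : ℕ → E3 → ℝ := fun n x => ρ x * (ρ x * f n (ρ x))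
  have hψL : ∀ n, L2 (ψ n) := fun n => by
    obtain ⟨K2, hK2⟩ := hρ.comp (continuous_id.mul (hfc n))
    refine (memLp_congr_ae (Eventually.of_forall fun x => ?_)).1 (L2.bm_mul hK2 hρL)
    simp only [ψ, Pi.mul_apply, id]; ring
  have hψ0 : ∀ n x, 0 ≤ ψ n x := fun n x => by
    have := hpn (ρ x); have := hρ0 x; have := hpos n (ρ x); simp only [ψ, f]; positivity
  have hψle : ∀ n x, ψ n x ≤ p (ρ x) := fun n x => by
    have h1 := hpos n (ρ x)
    have : ψ n x = p (ρ x) * (ρ x ^ 2 / (ρ x ^ 2 + 1 / ((n:ℝ) + 1))) := by simp only [ψ, f]; ring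
    rw [this]
    refine mul_le_of_le_one_right (hpn _) ?_
    rw [div_le_one h1]; have : (0:ℝ) < 1 / ((n:ℝ) + 1) := by positivity
    linarith
  have hψlim : ∀ x, Tendsto (fun n => ψ n x) atTop (𝓝 (p (ρ x))) := by
    intro x
    by_cases hx : ρ x = 0
    · simp only [ψ, hx, hp0, zero_mul]; exact tendsto_const_nhds
    · have h1 : Tendsto (fun n : ℕ => ρ x ^ 2 + 1 / ((n:ℝ) + 1)) atTop (𝓝 (ρ x ^ 2 + 0)) :=
        tendsto_one_div_add_atTop_nhds_zero_nat.const_add _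
      have h2 : Tendsto (fun n : ℕ => p (ρ x) * ρ x ^ 2 / (ρ x ^ 2 + 1 / ((n:ℝ) + 1))) atTop (𝓝 (p (ρ x) * ρ x ^ 2 / (ρ x ^ 2 + 0))) :=
        tendsto_const_nhds.div h1 (by positivity)
      rw [add_zero, mul_div_assoc, div_self (by positivity), mul_one] at h2
      refine h2.congr fun n => ?_
      simp only [ψ, f]; ring
  have hψq : ∀ n, Integrable (fun x => ψ n x * p (ρ x)) volume := fun n => by
    obtain ⟨K2, hK2⟩ := hρ.comp ((continuous_id.mul (hfc n)).mul hp)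
    refine (hK2.mul_int hρi).congr (Eventually.of_forall fun x => ?_)
    simp only [ψ, Pi.mul_apply, id]; ring
  have hzero : ∀ n, (∫ x, ψ n x * h x) + ∫ x, ψ n x * p (ρ x) = 0 := fun n => by
    rw [← integral_add ((hψL n).mul_int hh) (hψq n), ← hf (f n) (hfc n)]
    congr 1; ext x; simp only [ψ]; ring
  have hn2 : ∀ n, n2 (ψ n) ≤ n2 h := fun n => by
    have h1 : n2 (ψ n) ^ 2 ≤ ∫ x, ψ n x * p (ρ x) := by
      rw [n2_sq]
      refine integral_mono (hψL n).integrable_sq (hψq n) fun x => ?_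
      simp only [sq]; exact mul_le_mul_of_nonneg_left (hψle n x) (hψ0 n x)
    have h2 := (abs_le.1 (cs (hψL n) hh)).1
    have h3 := hzero n
    by_contra hlt
    push Not at hlt
    have := n2_nonneg h
    nlinarith
  have hq : L2 (fun x => p (ρ x)) := by
    refine ⟨hK.ae, lt_of_le_of_lt (Lp.eLpNorm_lim_le_liminf_eLpNorm (fun n => (hψL n).1) _ (Eventually.of_forall hψlim)) ?_⟩
    refine lt_of_le_of_lt (b := ENNReal.ofReal (n2 h)) ?_ ENNReal.ofReal_lt_top
    refine liminf_le_of_le (by isBoundedDefault) fun b hb => ?_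
    obtain ⟨n, hn⟩ := hb.exists
    refine hn.trans ?_
    rw [L2_eLp (hψL n)]
    exact ENNReal.ofReal_le_ofReal (hn2 n)
  refine ⟨hq, ?_⟩
  have hsum : L2 (fun x => h x + p (ρ x)) := hh.add hq
  have lim : Tendsto (fun n => ∫ x, ψ n x * (h x + p (ρ x))) atTop (𝓝 (∫ x, p (ρ x) * (h x + p (ρ x)))) := by
    refine tendsto_integral_of_dominated_convergence (fun x => |p (ρ x) * (h x + p (ρ x))|) ?_ (hq.mul_int hsum).abs ?_ ?_
    · intro n; exact (hψL n).1.mul hsum.1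
    · intro n; refine Eventually.of_forall fun x => ?_
      rw [Real.norm_eq_abs, abs_mul (ψ n x), abs_mul (p (ρ x)), abs_of_nonneg (hψ0 n x), abs_of_nonneg (hpn _)]
      exact mul_le_mul_of_nonneg_right (hψle n x) (abs_nonneg _)
    · exact Eventually.of_forall fun x => (hψlim x).mul_const _
  refine tendsto_nhds_unique lim ?_
  refine tendsto_const_nhds.congr fun n => ?_
  rw [← hf (f n) (hfc n)]
  congr 1; ext x; simp only [ψ]; ring
end

section
variable {ρ q : E3 → ℝ} {u : Fin 3 → E3 → ℝ} {M N : ℝ}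

lemma BuL2 (hρ : BM ρ M) (hρi : Integrable ρ volume) (hu : ∀ i, BM (u i) N) (i j : Fin 3) :
    L2 (fun x => ρ x * u i x * u j x) := by
  have := L2.bm_mul ((hu i).mul (hu j)) (L2.of_bi hρ hρi)
  refine (memLp_congr_ae (Eventually.of_forall fun x => ?_)).1 this
  ring

lemma pd_Lap_c (hu : ∀ i, BM (u i) N) {χ : E3 → ℝ} (hχ : TF χ) (i k : Fin 3) :
    ∑ a, ∫ x, u a x * pd (pd (pd χ k) i) a x = ∑ a, ∫ x, u a x * pd (pd (pd χ i) k) a x := by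
  rw [pd_comm hχ.smooth]

lemma div_id {μ lam : ℝ} (hν : 0 < μ + lam) (hρ : BM ρ M) (hρi : Integrable ρ volume) (hu : ∀ i, BM (u i) N) (hq : VV q)
    (hmom : ∀ i χ, TF χ → (∑ j, ∫ x, ρ x * u i x * u j x * pd χ j x) + (∫ x, q x * pd χ i x) +
      μ * (∫ x, u i x * Lap χ x) + lam * ∑ a, ∫ x, u a x * pd (pd χ i) a x = 0) :
    ∃ h, L2 h ∧ ∀ χ, TF χ → ∑ i, ∫ x, u i x * pd χ i x = - ∫ x, ((μ + lam)⁻¹ * (h x + q x)) * χ x := by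
  have hv : ∀ i, BM (fun x => (μ + lam) * u i x) ((μ + lam) * N) := fun i =>
    ⟨measurable_const.mul (hu i).meas, fun x => by
      rw [abs_mul, abs_of_pos hν]; exact mul_le_mul_of_nonneg_left ((hu i).bd x) hν.le⟩
  obtain ⟨h, hh, hE⟩ := lemL (B := fun i j x => ρ x * u i x * u j x) (BuL2 hρ hρi hu) hq hv fun χ hχ => by
    have h1 := Finset.sum_congr (rfl : (Finset.univ : Finset (Fin 3)) = Finset.univ) fun i _ => hmom i (pd χ i) (hχ.pd i)
    rw [Finset.sum_add_distrib, Finset.sum_add_distrib, Finset.sum_add_distrib, Finset.sum_const_zero, ← Finset.mul_sum, ← Finset.mul_sum] at h1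
    have e1 : ∫ x, q x * Lap χ x = ∑ i, ∫ x, q x * pd (pd χ i) i x := by
      rw [← integral_finsetSum _ fun i _ => li_mul_tf hq.li ((hχ.pd i).pd i)]
      congr 1; ext x; unfold Lap; rw [Finset.mul_sum]
    have e2 : ∑ i, ∫ x, u i x * Lap (pd χ i) x = ∑ i, ∫ x, u i x * pd (Lap χ) i x :=
      Finset.sum_congr rfl fun i _ => by rw [pd_lap hχ.smooth]
    have e3 : ∑ i, ∑ a, ∫ x, u a x * pd (pd (pd χ i) i) a x = ∑ i, ∫ x, u i x * pd (Lap χ) i x := by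
      rw [Finset.sum_comm]
      refine Finset.sum_congr rfl fun a _ => ?_
      rw [← integral_finsetSum _ fun i _ => li_mul_tf (hu a).li (((hχ.pd i).pd i).pd a)]
      congr 1; ext x
      rw [← Finset.mul_sum]
      have := congrFun (pd_sum (f := fun i => pd (pd χ i) i) (fun i => ((hχ.pd i).pd i).diff) a) x
      unfold Lap; rw [this]
    have e4 : ∑ i, ∫ x, (μ + lam) * u i x * pd (Lap χ) i x = (μ + lam) * ∑ i, ∫ x, u i x * pd (Lap χ) i x := by
      rw [Finset.mul_sum]; refine Finset.sum_congr rfl fun i _ => ?_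
      rw [← integral_const_mul]; simp only [mul_assoc]
    rw [e1, e4]
    rw [e2, e3] at h1
    linarith
  refine ⟨h, hh, fun χ hχ => ?_⟩
  have h1 := hE χ hχ
  have e4 : ∑ i, ∫ x, (μ + lam) * u i x * pd χ i x = (μ + lam) * ∑ i, ∫ x, u i x * pd χ i x := by
    rw [Finset.mul_sum]; refine Finset.sum_congr rfl fun i _ => ?_
    rw [← integral_const_mul]; simp only [mul_assoc]
  have e5 : ∫ x, ((μ + lam)⁻¹ * (h x + q x)) * χ x = (μ + lam)⁻¹ * ((∫ x, h x * χ x) + ∫ x, q x * χ x) := by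
    rw [← integral_add (hh.mul_int hχ.L2) (li_mul_tf hq.li hχ), ← integral_const_mul]
    congr 1; ext x; ring
  rw [e4] at h1; rw [e5]
  have : (μ + lam)⁻¹ * (μ + lam) = 1 := inv_mul_cancel₀ hν.ne'
  linear_combination (μ + lam)⁻¹ * h1 - (∑ i, ∫ x, u i x * pd χ i x) * this

lemma curl_id {μ lam : ℝ} (hμ : 0 < μ) (hρ : BM ρ M) (hρi : Integrable ρ volume) (hu : ∀ i, BM (u i) N)
    (hmom : ∀ i χ, TF χ → (∑ j, ∫ x, ρ x * u i x * u j x * pd χ j x) + (∫ x, q x * pd χ i x) +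
      μ * (∫ x, u i x * Lap χ x) + lam * ∑ a, ∫ x, u a x * pd (pd χ i) a x = 0) (i k : Fin 3) :
    ∃ c, L2 c ∧ ∀ χ, TF χ → (∫ x, u i x * pd χ k x) - (∫ x, u k x * pd χ i x) = - ∫ x, c x * χ x := by
  let e : Fin 3 → Fin 3 → ℝ := fun a b => if a = b then 1 else 0
  have he : ∀ a b, |e a b| ≤ 1 := fun a b => by simp only [e]; split_ifs <;> simp
  have hv : ∀ a, BM (fun x => μ * (e a k * u i x - e a i * u k x)) (μ * (N + N)) := fun a =>
    ⟨measurable_const.mul ((measurable_const.mul (hu i).meas).sub (measurable_const.mul (hu k).meas)), fun x => by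
      rw [abs_mul, abs_of_pos hμ]; refine mul_le_mul_of_nonneg_left ?_ hμ.le
      refine (abs_sub _ _).trans (add_le_add ?_ ?_)
      · rw [abs_mul]; exact (mul_le_of_le_one_left (abs_nonneg _) (he _ _)).trans ((hu i).bd x)
      · rw [abs_mul]; exact (mul_le_of_le_one_left (abs_nonneg _) (he _ _)).trans ((hu k).bd x)⟩
  have hsum : ∀ (b : Fin 3) (f : Fin 3 → ℝ), ∑ a, e a b * f a = f b := fun b f => by simp [e]
  have hvid : ∀ ψ, TF ψ → ∑ a, ∫ x, μ * (e a k * u i x - e a i * u k x) * pd ψ a x =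
      μ * ((∫ x, u i x * pd ψ k x) - ∫ x, u k x * pd ψ i x) := by
    intro ψ hψ
    have : ∀ a, ∫ x, μ * (e a k * u i x - e a i * u k x) * pd ψ a x =
        e a k * (μ * ∫ x, u i x * pd ψ a x) - e a i * (μ * ∫ x, u k x * pd ψ a x) := by
      intro a
      have i1 := (hu i).mul_int (hψ.pd a).integrable
      have i2 := (hu k).mul_int (hψ.pd a).integrable
      rw [← integral_const_mul, ← integral_const_mul, ← integral_const_mul, ← integral_const_mul,
        ← integral_sub ((i1.const_mul _).const_mul _) ((i2.const_mul _).const_mul _)]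
      congr 1; ext x; ring
    rw [Finset.sum_congr rfl fun a _ => this a, Finset.sum_sub_distrib, hsum, hsum]; ring
  obtain ⟨h, hh, hE⟩ := lemL (q := fun _ => 0) (B := fun j l x => e j k * (ρ x * u i x * u l x) - e j i * (ρ x * u k x * u l x))
    (fun j l => ((BuL2 hρ hρi hu i l).const_mul _).sub ((BuL2 hρ hρi hu k l).const_mul _)) VV.zero hv fun χ hχ => by
    rw [hvid _ hχ.lap]
    have h1 := hmom i _ (hχ.pd k)
    have h2 := hmom k _ (hχ.pd i)
    rw [← pd_lap hχ.smooth] at h1 h2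
    rw [pd_Lap_c hu hχ i k, pd_comm hχ.smooth k i] at h1
    have e1 : ∑ j, ∑ l, ∫ x, (e j k * (ρ x * u i x * u l x) - e j i * (ρ x * u k x * u l x)) * pd (pd χ j) l x =
        (∑ l, ∫ x, ρ x * u i x * u l x * pd (pd χ k) l x) - ∑ l, ∫ x, ρ x * u k x * u l x * pd (pd χ i) l x := by
      have : ∀ j, ∑ l, ∫ x, (e j k * (ρ x * u i x * u l x) - e j i * (ρ x * u k x * u l x)) * pd (pd χ j) l x =
        e j k * (∑ l, ∫ x, ρ x * u i x * u l x * pd (pd χ j) l x) - e j i * ∑ l, ∫ x, ρ x * u k x * u l x * pd (pd χ j) l x := by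
        intro j
        rw [Finset.mul_sum, Finset.mul_sum, ← Finset.sum_sub_distrib]
        refine Finset.sum_congr rfl fun l _ => ?_
        have i1 := (BuL2 hρ hρi hu i l).mul_int ((hχ.pd j).pd l).L2
        have i2 := (BuL2 hρ hρi hu k l).mul_int ((hχ.pd j).pd l).L2
        rw [← integral_const_mul, ← integral_const_mul, ← integral_sub (i1.const_mul _) (i2.const_mul _)]
        congr 1; ext x; ring
      rw [Finset.sum_congr rfl fun a _ => this a, Finset.sum_sub_distrib, hsum, hsum]
    rw [e1]
    simp only [zero_mul, integral_zero]
    linarith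
  refine ⟨fun x => μ⁻¹ * h x, hh.const_mul _, fun χ hχ => ?_⟩
  have h1 := hE χ hχ
  rw [hvid _ hχ] at h1
  simp only [zero_mul, integral_zero] at h1
  simp only [mul_assoc]
  rw [integral_const_mul]
  have : μ⁻¹ * μ = 1 := inv_mul_cancel₀ hμ.ne'
  linear_combination μ⁻¹ * h1 - ((∫ x, u i x * pd χ k x) - (∫ x, u k x * pd χ i x)) * this

/-- convective term -/
lemma convA (hρ : BM ρ M) (hu : ∀ i, BM (u i) N)
    (hmass : ∀ F, TF F → ∑ i, ∫ x, ρ x * u i x * pd F i x = 0)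
    {f : E3 → ℝ} {d : Fin 3 → E3 → ℝ} {Nf : ℝ} (hf : BM f Nf) (hd : ∀ k, L2 (d k)) (hwd : ∀ k, WD f (d k) k)
    {g : E3 → ℝ} (hg : TF g) {r : ℝ} (hr : 0 < r) (hgr : ∀ x, r < ‖x‖ → g x = 0) :
    ∑ j, ((∫ x, (ρ x * u j x * g x) * d j x) + ∫ x, f x * (ρ x * u j x * pd g j x)) = 0 := by
  obtain ⟨J, hJ⟩ := BM.of_tf hg
  have hdl : ∀ j, LocallyIntegrable (d j) volume := fun j => (hd j).locallyIntegrable (by norm_num)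
  have hB : ∀ j, BM (fun x => ρ x * u j x * g x) (M * N * J) := fun j => (hρ.mul (hu j)).mul hJ
  have l1 := fun j => moll_lim2 (hB j) hr (fun x hx => by rw [hgr x hx, mul_zero]) (hdl j)
  have i2 : ∀ j, Integrable (fun x => ρ x * u j x * pd g j x) volume := fun j => (hρ.mul (hu j)).mul_int (hg.pd j).integrable
  have l2 := fun j => moll_lim hf (i2 j)
  have l3 := tendsto_finset_sum Finset.univ fun j _ => (l1 j).add (l2 j)
  refine tendsto_nhds_unique l3 (tendsto_const_nhds.congr fun n => ?_)
  have hs := Cv_smooth hf.li (jm_tf n)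
  rw [← hmass _ (TF.mul_left hs hg)]
  refine Finset.sum_congr rfl fun j _ => ?_
  have hsd := Cv_smooth (hdl j) (jm_tf n)
  have i1 : Integrable (fun x => ρ x * u j x * g x * Cv (d j) (jm n) x) volume := by
    refine ((hρ.mul (hu j)).mul_int (TF.mul_left hsd hg).integrable).congr (Eventually.of_forall fun x => ?_)
    simp only; ring
  rw [← integral_add i1 ((Cv_BM hf n).mul_int (i2 j))]
  congr 1; ext x
  rw [pd_mul hs.diff hg.diff, pd_Cv_WD hf.li (jm_tf n) (hwd j)]; ring

lemma conv0 (hρ : BM ρ M) (hρi : Integrable ρ volume) (hu : ∀ i, BM (u i) N)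
    (hmass : ∀ F, TF F → ∑ i, ∫ x, ρ x * u i x * pd F i x = 0)
    {f : E3 → ℝ} {d : Fin 3 → E3 → ℝ} {Nf : ℝ} (hf : BM f Nf) (hd : ∀ k, L2 (d k)) (hwd : ∀ k, WD f (d k) k) :
    ∑ j, ∫ x, (ρ x * f x * u j x) * d j x = 0 := by
  have hdl : ∀ j, LocallyIntegrable (d j) volume := fun j => (hd j).locallyIntegrable (by norm_num)
  have hρL := L2.of_bi hρ hρi
  have hBr : ∀ j, BM (fun x => ρ x * u j x) (M * N) := fun j => hρ.mul (hu j)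
  have hi : ∀ j, Integrable (fun x => (ρ x * f x * u j x) * d j x) volume := fun j => by
    refine (L2.bm_mul ((hu j).mul hf) hρL).mul_int (hd j) |>.congr (Eventually.of_forall fun x => ?_)
    simp only; ring
  have hi2 : ∀ j, Integrable (fun x => u j x * (f x * f x) * ρ x) volume := fun j =>
    ((hu j).mul (hf.mul hf)).mul_int hρi
  have step : ∀ n : ℕ, ∑ j, (2 * (∫ x, ct ((n:ℝ) + 1) x * ((ρ x * f x * u j x) * d j x)) +
      ∫ x, pd (ct ((n:ℝ) + 1)) j x * (u j x * (f x * f x) * ρ x)) = 0 := by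
    intro n
    set R : ℝ := (n:ℝ) + 1 with hR
    have hR0 : 0 < R := by positivity
    have hs := ct_tf hR0
    obtain ⟨J, hJ⟩ := BM.of_tf hs
    have w1 : ∀ j, Integrable (fun x => (ρ x * u j x * ct R x) * d j x) volume := fun j => by
      refine (hBr j).mul_int (hs.L2.mul_int (hd j)) |>.congr (Eventually.of_forall fun x => ?_)
      simp only; ring
    have w2 : ∀ j, Integrable (fun x => f x * (ρ x * u j x * pd (ct R) j x)) volume := fun j =>
      hf.mul_int ((hBr j).mul_int (hs.pd j).integrable)
    have hBF : ∀ j, BM (fun x => f x * (ρ x * u j x * ct R x)) (Nf * (M * N * J)) := fun j => hf.mul ((hBr j).mul hJ)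
    have l1 := fun j => moll_lim hf (w1 j)
    have l2 := fun j => moll_lim hf (w2 j)
    have l3 := fun j => moll_lim2 (r := 2 * R) (hBF j) (by positivity) (fun x hx => by rw [ct_zero hR0 hx.le]; ring) (hdl j)
    have l4 := tendsto_finset_sum Finset.univ fun j _ => (l1 j).add ((l2 j).add (l3 j))
    have h0 := tendsto_nhds_unique l4 (tendsto_const_nhds.congr (f₁ := fun _ => (0:ℝ)) fun m => ?_)
    · rw [← h0]
      refine Finset.sum_congr rfl fun j _ => ?_
      have a1 : ∫ x, f x * (ρ x * u j x * ct R x * d j x) = ∫ x, ct R x * ((ρ x * f x * u j x) * d j x) := by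
        congr 1; ext x; ring
      have a2 : ∫ x, f x * (ρ x * u j x * ct R x) * d j x = ∫ x, ct R x * ((ρ x * f x * u j x) * d j x) := by
        congr 1; ext x; ring
      have a3 : ∫ x, f x * (f x * (ρ x * u j x * pd (ct R) j x)) = ∫ x, pd (ct R) j x * (u j x * (f x * f x) * ρ x) := by
        congr 1; ext x; ring
      rw [a1, a2, a3]; ring
    · have hsm := Cv_smooth hf.li (jm_tf m)
      have hA := convA hρ hu hmass hf hd hwd (TF.mul_right hs hsm) (r := 2 * R) (by positivity)
        (fun x hx => by rw [ct_zero hR0 hx.le, zero_mul])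
      rw [← hA]
      refine Finset.sum_congr rfl fun j _ => ?_
      have hsd := Cv_smooth (hdl j) (jm_tf m)
      have b3 : Integrable (fun x => f x * (ρ x * u j x * ct R x) * Cv (d j) (jm m) x) volume := by
        refine ((hf.mul (hBr j)).mul_int (TF.mul_right hs hsd).integrable).congr (Eventually.of_forall fun x => ?_)
        simp only; ring
      rw [← integral_add ((Cv_BM hf m).mul_int (w2 j)) b3]
      congr 1
      · congr 1; ext x; ring
      · congr 1; ext x
        rw [pd_mul hs.diff hsm.diff, pd_Cv_WD hf.li (jm_tf m) (hwd j)]; ring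
  have l := tendsto_finset_sum Finset.univ fun j _ => ((ct_int_lim (hi j)).const_mul 2).add (pdct_int_lim (hi2 j) j)
  have := tendsto_nhds_unique l (tendsto_const_nhds.congr fun n => (step n).symm)
  simp only [add_zero] at this
  rw [← Finset.mul_sum] at this
  linarith
end

abbrev HH := PiLp 2 (fun _ : Fin 3 => Lp ℝ 2 (volume : Measure E3))

def mkH (f : Fin 3 → E3 → ℝ) (hf : ∀ i, L2 (f i)) : HH := WithLp.toLp 2 fun i => (hf i).toLp (f i)

lemma inner_mkH {f g : Fin 3 → E3 → ℝ} (hf : ∀ i, L2 (f i)) (hg : ∀ i, L2 (g i)) :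
    inner ℝ (mkH f hf) (mkH g hg) = ∑ i, ∫ x, f i x * g i x := by
  rw [PiLp.inner_apply]
  exact Finset.sum_congr rfl fun i _ => inner_toLp (hf i) (hg i)

def gradL : TFS →ₗ[ℝ] HH where
  toFun f := mkH (fun i => pd (f : E3 → ℝ) i) fun i => (TF.pd f.2 i).L2
  map_add' f g := by
    unfold mkH
    refine PiLp.ext fun i => ?_
    show (TF.pd (f+g).2 i).L2.toLp _ = (TF.pd f.2 i).L2.toLp (pd (f:E3→ℝ) i) + (TF.pd g.2 i).L2.toLp (pd (g:E3→ℝ) i)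
    rw [← MemLp.toLp_add]
    congr 1
    exact pd_add (TF.diff f.2) (TF.diff g.2) i
  map_smul' c f := by
    unfold mkH
    refine PiLp.ext fun i => ?_
    show (TF.pd (c • f).2 i).L2.toLp _ = c • (TF.pd f.2 i).L2.toLp (pd (f:E3→ℝ) i)
    rw [← MemLp.toLp_const_smul]
    congr 1
    exact pd_const_mul c (TF.diff f.2) i

lemma inner_Lp_tf (T : Lp ℝ 2 (volume : Measure E3)) {χ : E3 → ℝ} (hχ : L2 χ) :
    inner ℝ T (hχ.toLp χ) = ∫ x, T x * χ x := by
  have hT : L2 (T : E3 → ℝ) := Lp.memLp T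
  rw [← inner_toLp hT hχ, Lp.toLp_coeFn]

lemma closed_curl {T : HH} (hT : T ∈ (LinearMap.range gradL).topologicalClosure) {χ : E3 → ℝ} (hχ : TF χ) (j k : Fin 3) :
    (∫ x, T j x * pd χ k x) = ∫ x, T k x * pd χ j x := by
  rw [← inner_Lp_tf _ (hχ.pd k).L2, ← inner_Lp_tf _ (hχ.pd j).L2]
  have hcl : IsClosed {T : HH | inner ℝ (T j) ((hχ.pd k).L2.toLp _) = inner ℝ (T k) ((hχ.pd j).L2.toLp _)} := by
    refine isClosed_eq ?_ ?_ <;> fun_prop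
  have hsub : ((LinearMap.range gradL : Submodule ℝ HH) : Set HH) ⊆
      {T : HH | inner ℝ (T j) ((hχ.pd k).L2.toLp _) = inner ℝ (T k) ((hχ.pd j).L2.toLp _)} := by
    rintro _ ⟨f, rfl⟩
    have hf : TF (f : E3 → ℝ) := f.2
    have e1 : inner ℝ ((gradL f) j) ((hχ.pd k).L2.toLp _) = ∫ x, pd (f : E3 → ℝ) j x * pd χ k x := inner_toLp (hf.pd j).L2 _
    have e2 : inner ℝ ((gradL f) k) ((hχ.pd j).L2.toLp _) = ∫ x, pd (f : E3 → ℝ) k x * pd χ j x := inner_toLp (hf.pd k).L2 _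
    show _ = _
    rw [e1, e2]
    have h1 := ibp (SM.one hf.smooth) (SM.one (hχ.pd k).smooth) (hχ.pd k).cpt j
    have h2 := ibp (SM.one hf.smooth) (SM.one (hχ.pd j).smooth) (hχ.pd j).cpt k
    rw [pd_comm hχ.smooth] at h1
    linarith
  exact closure_minimal hsub hcl hT

lemma lemE {A dw : Fin 3 → E3 → ℝ} {w : E3 → ℝ} {M : ℝ} (hA : ∀ j, L2 (A j)) (hd : ∀ j, L2 (dw j)) (hw : BM w M)
    (hwd : ∀ j, WD w (dw j) j) (hz : ∀ χ, TF χ → ∑ j, ∫ x, A j x * pd χ j x = 0) :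
    ∑ j, ∫ x, A j x * dw j x = 0 := by
  set K : Submodule ℝ HH := (LinearMap.range gradL).topologicalClosure with hK
  haveI : CompleteSpace K := (Submodule.isClosed_topologicalClosure _).completeSpace_coe
  obtain ⟨y, hy, z, hz', hyz⟩ := K.exists_add_mem_mem_orthogonal (mkH dw hd)
  -- z vanishes
  have hzL : ∀ k, L2 (z k : E3 → ℝ) := fun k => Lp.memLp _
  have hzdiv : ∀ χ, TF χ → ∑ j, ∫ x, z j x * pd χ j x = 0 := by
    intro χ hχ
    have hm : gradL ⟨χ, hχ⟩ ∈ K := subset_closure ⟨_, rfl⟩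
    have h1 := (Submodule.mem_orthogonal' K z).1 hz' _ hm
    rw [PiLp.inner_apply] at h1
    rw [← h1]
    exact Finset.sum_congr rfl fun j _ => (inner_Lp_tf (z j) (hχ.pd j).L2).symm
  have hdcurl : ∀ χ, TF χ → ∀ j k, ∫ x, dw j x * pd χ k x = ∫ x, dw k x * pd χ j x := by
    intro χ hχ j k
    have h1 := hwd j _ (hχ.pd k)
    have h2 := hwd k _ (hχ.pd j)
    rw [pd_comm hχ.smooth] at h1
    linarith
  have hzcurl : ∀ χ, TF χ → ∀ j k, ∫ x, z j x * pd χ k x = ∫ x, z k x * pd χ j x := by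
    intro χ hχ j k
    have hc := closed_curl hy hχ j k
    rw [← inner_Lp_tf _ (hχ.pd k).L2, ← inner_Lp_tf _ (hχ.pd j).L2] at hc ⊢
    have hzz : z = mkH dw hd - y := by rw [hyz]; abel
    have d1 : inner ℝ ((mkH dw hd) j) ((hχ.pd k).L2.toLp _) = ∫ x, dw j x * pd χ k x := inner_toLp (hd j) _
    have d2 : inner ℝ ((mkH dw hd) k) ((hχ.pd j).L2.toLp _) = ∫ x, dw k x * pd χ j x := inner_toLp (hd k) _
    rw [hzz]
    simp only [PiLp.sub_apply, inner_sub_left]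
    rw [d1, d2, hc, hdcurl χ hχ j k]
  have hz0 : z = 0 := by
    refine PiLp.ext fun k => ?_
    show z k = 0
    have hlap : ∀ χ, TF χ → ∫ x, z k x * Lap χ x = 0 := by
      intro χ hχ
      have e : ∫ x, z k x * Lap χ x = ∑ j, ∫ x, z k x * pd (pd χ j) j x := by
        rw [← integral_finsetSum _ fun j _ => (hzL k).mul_int ((hχ.pd j).pd j).L2]
        congr 1; ext x; unfold Lap; rw [Finset.mul_sum]
      rw [e, ← hzdiv _ (hχ.pd k)]
      refine Finset.sum_congr rfl fun j _ => ?_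
      rw [hzcurl _ (hχ.pd j) k j, pd_comm hχ.smooth]
    have hli := liou (v := fun _ _ => 0) (M := 0) (VV.of_L2 (hzL k)) (fun i => ⟨measurable_const, fun x => by simp⟩)
      (fun χ hχ => by simp [hlap χ hχ])
    have hae := ae_eq_of_tf (g := fun _ => 0) ((hzL k).locallyIntegrable (by norm_num)) (locallyIntegrable_const 0)
      (fun χ hχ => by have := hli χ hχ; simpa using this)
    exact (Lp.eq_zero_iff_ae_eq_zero).2 hae
  rw [hz0, add_zero] at hyz
  rw [← inner_mkH hA hd, hyz]
  have hcl : IsClosed {T : HH | inner ℝ (mkH A hA) T = 0} := isClosed_eq (by fun_prop) continuous_const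
  have hsub : ((LinearMap.range gradL : Submodule ℝ HH) : Set HH) ⊆ {T : HH | inner ℝ (mkH A hA) T = 0} := by
    rintro _ ⟨f, rfl⟩
    have hf : TF (f : E3 → ℝ) := f.2
    show inner ℝ (mkH A hA) (mkH (fun i => pd (f : E3 → ℝ) i) fun i => (hf.pd i).L2) = 0
    rw [inner_mkH]; exact hz _ hf
  exact closure_minimal hsub hcl hy

section
variable {ρ q : E3 → ℝ} {u : Fin 3 → E3 → ℝ} {M N : ℝ}

lemma energy {μ lam : ℝ} (hμ : 0 < μ) (hlam : 0 ≤ lam) (hρ : BM ρ M) (hρi : Integrable ρ volume) (hu : ∀ i, BM (u i) N)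
    (hmass : ∀ F, TF F → ∑ i, ∫ x, ρ x * u i x * pd F i x = 0)
    (hmom : ∀ i χ, TF χ → (∑ j, ∫ x, ρ x * u i x * u j x * pd χ j x) + (∫ x, q x * pd χ i x) +
      μ * (∫ x, u i x * Lap χ x) + lam * ∑ a, ∫ x, u a x * pd (pd χ i) a x = 0)
    {c : Fin 3 → Fin 3 → E3 → ℝ} (hc : ∀ i k, L2 (c i k)) {D : E3 → ℝ} (hD : L2 D) (hq : L2 q)
    (hcurl : ∀ i k χ, TF χ → (∫ x, u i x * pd χ k x) - (∫ x, u k x * pd χ i x) = - ∫ x, c i k x * χ x)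
    (hdiv : ∀ χ, TF χ → ∑ i, ∫ x, u i x * pd χ i x = - ∫ x, D x * χ x)
    (hqD : ∫ x, q x * D x = 0) : ∃ C : Fin 3 → ℝ, ∀ i, ∀ᵐ x, u i x = C i := by
  obtain ⟨du, hdu, hwd⟩ := lemG hu hc hD hcurl hdiv
  have hDsum : L2 (fun x => ∑ i, du i i x) := memLp_finset_sum _ fun i _ => hdu i i
  have hae : ∀ᵐ x, ∑ i, du i i x = D x := by
    refine ae_eq_of_tf (hDsum.locallyIntegrable (by norm_num)) (hD.locallyIntegrable (by norm_num)) fun χ hχ => ?_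
    have h1 := hdiv χ hχ
    have e : ∑ i, ∫ x, u i x * pd χ i x = - ∫ x, (∑ i, du i i x) * χ x := by
      rw [Finset.sum_congr rfl fun i _ => hwd i i χ hχ, Finset.sum_neg_distrib,
        ← integral_finsetSum _ fun i _ => (hdu i i).mul_int hχ.L2]
      simp only [Finset.sum_mul]
    linarith
  let e : Fin 3 → Fin 3 → ℝ := fun a b => if a = b then 1 else 0
  have hsum : ∀ (b : Fin 3) (f : Fin 3 → ℝ), ∑ a, e b a * f a = f b := fun b f => by simp [e]
  have hqD' : L2 (fun x => q x - lam * D x) := hq.sub (hD.const_mul lam)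
  let A : Fin 3 → Fin 3 → E3 → ℝ := fun i j x => ρ x * u i x * u j x - μ * du i j x + e i j * (q x - lam * D x)
  have hB := BuL2 hρ hρi hu
  have hA : ∀ i j, L2 (A i j) := fun i j => ((hB i j).sub ((hdu i j).const_mul μ)).add (hqD'.const_mul _)
  have hAint : ∀ i (g : Fin 3 → E3 → ℝ), (∀ j, L2 (g j)) → ∑ j, ∫ x, A i j x * g j x =
      (∑ j, ∫ x, ρ x * u i x * u j x * g j x) - μ * (∑ j, ∫ x, du i j x * g j x) + ∫ x, (q x - lam * D x) * g i x := by
    intro i g hg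
    rw [← hsum i (fun j => ∫ x, (q x - lam * D x) * g j x), Finset.mul_sum, ← Finset.sum_sub_distrib, ← Finset.sum_add_distrib]
    refine Finset.sum_congr rfl fun j _ => ?_
    have i1 := (hB i j).mul_int (hg j)
    have i2 := ((hdu i j).mul_int (hg j)).const_mul μ
    have i3 := (hqD'.mul_int (hg j)).const_mul (e i j)
    have i4 : Integrable (fun x => ρ x * u i x * u j x * g j x - μ * (du i j x * g j x)) volume := i1.sub i2
    rw [← integral_const_mul, ← integral_const_mul, ← integral_sub i1 i2, ← integral_add i4 i3]
    congr 1; ext x; simp only [A]; ring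
  have hz : ∀ i χ, TF χ → ∑ j, ∫ x, A i j x * pd χ j x = 0 := by
    intro i χ hχ
    rw [hAint i (fun j => pd χ j) fun j => (hχ.pd j).L2]
    have h1 := hmom i χ hχ
    have e1 : ∫ x, u i x * Lap χ x = - ∑ j, ∫ x, du i j x * pd χ j x := by
      have : ∫ x, u i x * Lap χ x = ∑ j, ∫ x, u i x * pd (pd χ j) j x := by
        rw [← integral_finsetSum _ fun j _ => li_mul_tf (hu i).li ((hχ.pd j).pd j)]
        congr 1; ext x; unfold Lap; rw [Finset.mul_sum]
      rw [this, ← Finset.sum_neg_distrib]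
      exact Finset.sum_congr rfl fun j _ => hwd i j _ (hχ.pd j)
    have e2 := hdiv _ (hχ.pd i)
    have e3 : ∫ x, (q x - lam * D x) * pd χ i x = (∫ x, q x * pd χ i x) - lam * ∫ x, D x * pd χ i x := by
      rw [← integral_const_mul, ← integral_sub (hq.mul_int (hχ.pd i).L2) ((hD.mul_int (hχ.pd i).L2).const_mul lam)]
      congr 1; ext x; ring
    rw [e1, e2] at h1
    rw [e3]; linarith
  have hE : ∀ i, ∑ j, ∫ x, A i j x * du i j x = 0 := fun i => lemE (hA i) (hdu i) (hu i) (hwd i) (hz i)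
  have hconv : ∀ i, ∑ j, ∫ x, ρ x * u i x * u j x * du i j x = 0 := fun i =>
    conv0 hρ hρi hu hmass (hu i) (hdu i) (hwd i)
  have hE2 : ∀ i, μ * (∑ j, ∫ x, du i j x ^ 2) = ∫ x, (q x - lam * D x) * du i i x := by
    intro i
    have h1 := hE i
    rw [hAint i (fun j => du i j) fun j => hdu i j, hconv i] at h1
    simp only [sq]; linarith
  have hE3 : ∑ i, ∫ x, (q x - lam * D x) * du i i x = - (lam * ∫ x, D x ^ 2) := by
    rw [← integral_finsetSum _ fun i _ => hqD'.mul_int (hdu i i)]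
    have : ∫ x, ∑ i, (q x - lam * D x) * du i i x = ∫ x, (q x * D x - lam * D x ^ 2) := by
      refine integral_congr_ae ?_
      filter_upwards [hae] with x hx
      rw [← Finset.mul_sum, hx]; ring
    rw [this, integral_sub (hq.mul_int hD) (hD.integrable_sq.const_mul lam), hqD, integral_const_mul]; ring
  have hE4 : μ * ∑ i, ∑ j, ∫ x, du i j x ^ 2 ≤ 0 := by
    rw [Finset.mul_sum, Finset.sum_congr rfl fun i _ => hE2 i, hE3]
    have : 0 ≤ ∫ x, D x ^ 2 := integral_nonneg fun _ => sq_nonneg _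
    have := mul_nonneg hlam this
    linarith
  have hnn : ∀ i j, 0 ≤ ∫ x, du i j x ^ 2 := fun i j => integral_nonneg fun _ => sq_nonneg _
  have hE5 : ∀ i j, ∫ x, du i j x ^ 2 = 0 := by
    intro i j
    have h1 : ∑ i, ∑ j, ∫ x, du i j x ^ 2 ≤ 0 := by
      by_contra hlt; push Not at hlt; have := mul_pos hμ hlt; linarith
    have h2 : ∑ j, ∫ x, du i j x ^ 2 ≤ ∑ i, ∑ j, ∫ x, du i j x ^ 2 :=
      Finset.single_le_sum (f := fun i => ∑ j, ∫ x, du i j x ^ 2) (fun i _ => Finset.sum_nonneg fun j _ => hnn i j) (Finset.mem_univ i)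
    have h3 : ∫ x, du i j x ^ 2 ≤ ∑ j, ∫ x, du i j x ^ 2 :=
      Finset.single_le_sum (f := fun j => ∫ x, du i j x ^ 2) (fun j _ => hnn i j) (Finset.mem_univ j)
    exact le_antisymm (by linarith) (hnn i j)
  have hdu0 : ∀ i j, ∀ᵐ x, du i j x = 0 := by
    intro i j
    have := (integral_eq_zero_iff_of_nonneg (fun x => sq_nonneg (du i j x)) (hdu i j).integrable_sq).1 (hE5 i j)
    filter_upwards [this] with x hx
    simpa using hx
  have hconst : ∀ i n x, Cv (u i) (jm n) x = Cv (u i) (jm n) 0 := by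
    intro i n x
    refine const_of_pd (Cv_smooth (hu i).li (jm_tf n)).diff (fun k y => ?_) x 0
    rw [pd_Cv_WD (hu i).li (jm_tf n) (hwd i k)]
    unfold Cv
    rw [← integral_zero E3 ℝ (μ := volume)]
    refine integral_congr_ae ?_
    filter_upwards [hdu0 i k] with t ht
    rw [ht, zero_mul]
  have : ∀ i, ∃ C, ∀ᵐ x, u i x = C := by
    intro i
    have h1 := moll_ae (hu i).li
    obtain ⟨x0, hx0⟩ := h1.exists
    refine ⟨u i x0, ?_⟩
    filter_upwards [h1] with x hx
    refine tendsto_nhds_unique hx (hx0.congr fun n => ?_)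
    rw [hconst i n x0, hconst i n x]
  choose C hC using this
  exact ⟨C, hC⟩

lemma final {C : Fin 3 → ℝ} (hρi : Integrable ρ volume) (hC : C ≠ 0)
    (hmass : ∀ F, TF F → ∑ i, ∫ x, ρ x * C i * pd F i x = 0) : ∀ᵐ x, ρ x = 0 := by
  refine ae_eq_of_tf hρi.locallyIntegrable (locallyIntegrable_const 0) fun φ hφ => ?_
  set c : E3 := WithLp.toLp 2 C with hc
  have hc0 : c ≠ 0 := fun h => hC (by
    have := congrArg (WithLp.ofLp) h
    simpa [hc] using this)
  have hci : ∀ i, c i = C i := fun i => rfl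
  have hfd : ∀ x, fderiv ℝ φ x c = ∑ i, C i * pd φ i x := by
    intro x
    have h1 : c = ∑ i, C i • EuclideanSpace.single i (1:ℝ) := by
      ext i
      fin_cases i <;> simp [Fin.sum_univ_three, hci, Pi.single_apply]
    conv_lhs => rw [h1]
    rw [map_sum]
    refine Finset.sum_congr rfl fun i _ => ?_
    rw [map_smul, smul_eq_mul]; rfl
  have hbd : ∃ B, ∀ x, |∑ i, C i * pd φ i x| ≤ B := by
    have : TF (fun x => ∑ i, C i * pd φ i x) := TF.sum fun i => (hφ.pd i).const_mul (C i)
    obtain ⟨B, -, hB⟩ := this.bdd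
    exact ⟨B, hB⟩
  obtain ⟨B, hB⟩ := hbd
  let I : ℝ → ℝ := fun t => ∫ x, ρ x * φ (x + t • c)
  have hmeasF : ∀ t : ℝ, Continuous fun x : E3 => φ (x + t • c) := fun t => hφ.cont.comp (by fun_prop)
  obtain ⟨J, hJ0, hJ⟩ := hφ.bdd
  have hIi : ∀ t, Integrable (fun x => ρ x * φ (x + t • c)) volume := fun t => by
    have hb : BM (fun x => φ (x + t • c)) J := ⟨(hmeasF t).measurable, fun x => hJ _⟩
    refine (hb.mul_int hρi).congr (Eventually.of_forall fun x => ?_); simp only; ring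
  have hder : ∀ t, HasDerivAt I 0 t := by
    intro t
    have hcd : Continuous fun x : E3 => ∑ i, C i * pd φ i (x + t • c) := by
      have := fun i => (hφ.pd i).cont
      fun_prop
    have h1 := (hasDerivAt_integral_of_dominated_loc_of_deriv_le (μ := (volume : Measure E3)) (F := fun t x => ρ x * φ (x + t • c))
      (F' := fun t x => ρ x * ∑ i, C i * pd φ i (x + t • c)) (x₀ := t) (bound := fun x => |ρ x| * B) (s := univ) univ_mem
      (Eventually.of_forall fun t => (hIi t).aestronglyMeasurable) (hIi t)
      (hρi.aestronglyMeasurable.mul hcd.aestronglyMeasurable)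
      (Eventually.of_forall fun x s _ => by
        rw [Real.norm_eq_abs, abs_mul]; exact mul_le_mul_of_nonneg_left (hB _) (abs_nonneg _))
      (hρi.abs.mul_const B)
      (Eventually.of_forall fun x s _ => by
        have h2 : HasDerivAt (fun s : ℝ => x + s • c) c s := by
          simpa using ((hasDerivAt_id s).smul_const c).const_add x
        have h3 := (hφ.diff (x + s • c)).hasFDerivAt.comp_hasDerivAt s h2
        rw [hfd] at h3
        exact h3.const_mul _)).2
    have h0 : ∫ x, ρ x * ∑ i, C i * pd φ i (x + t • c) = 0 := by
      have hT := hφ.comp_add (t • c)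
      rw [← hmass _ hT, ← integral_finsetSum]
      · congr 1; ext x
        rw [Finset.mul_sum]
        refine Finset.sum_congr rfl fun i _ => ?_
        rw [pd_comp_add]; ring
      · intro i _
        have hb := (BM.of_tf ((hT.pd i).const_mul (C i)))
        obtain ⟨J', hb⟩ := hb
        refine (hb.mul_int hρi).congr (Eventually.of_forall fun x => ?_); simp only; ring
    rw [h0] at h1
    exact h1
  have hconst : ∀ t, I t = I 0 := fun t =>
    is_const_of_deriv_eq_zero (fun t => (hder t).differentiableAt) (fun t => (hder t).deriv) t 0
  have hlim : Tendsto (fun n : ℕ => I n) atTop (𝓝 (∫ x : E3, (0:ℝ))) := by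
    refine tendsto_integral_of_dominated_convergence (fun x => J * |ρ x|) (fun n => (hIi n).aestronglyMeasurable)
      (hρi.abs.const_mul J) (fun n => Eventually.of_forall fun x => ?_) (Eventually.of_forall fun x => ?_)
    · rw [Real.norm_eq_abs, abs_mul, mul_comm]; exact mul_le_mul_of_nonneg_right (hJ _) (abs_nonneg _)
    · obtain ⟨r, hr⟩ := hφ.cpt.isBounded.subset_closedBall 0
      have hz : ∀ y : E3, r < ‖y‖ → φ y = 0 := fun y hy => by
        by_contra hne
        have := hr (subset_tsupport _ hne)
        rw [mem_closedBall_zero_iff] at this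
        linarith
      have hcn : 0 < ‖c‖ := norm_pos_iff.2 hc0
      obtain ⟨m, hm⟩ := exists_nat_gt ((r + ‖x‖) / ‖c‖)
      refine tendsto_const_nhds.congr' ?_
      filter_upwards [eventually_ge_atTop m] with n hn
      rw [hz, mul_zero]
      have hmn : (m : ℝ) ≤ n := by exact_mod_cast hn
      have h1 : r + ‖x‖ < n * ‖c‖ := by
        rw [div_lt_iff₀ hcn] at hm
        exact hm.trans_le (mul_le_mul_of_nonneg_right hmn hcn.le)
      have h2 : ‖(n : ℝ) • c‖ = n * ‖c‖ := by rw [norm_smul]; simp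
      have h3 := norm_sub_norm_le ((n : ℝ) • c) (-x)
      rw [norm_neg, sub_neg_eq_add, add_comm _ x] at h3
      linarith
  have h2 := tendsto_nhds_unique (hlim.congr (f₂ := fun _ : ℕ => I 0) fun n => hconst (n:ℝ)) tendsto_const_nhds
  simp only [integral_zero] at h2
  have h3 : I 0 = ∫ x, ρ x * φ x := by simp [I]
  rw [← h3, ← h2]; simp
end

lemma vv_press {ρ : E3 → ℝ} {M : ℝ} (hρ : BM ρ M) (hρ0 : ∀ x, 0 ≤ ρ x) (hρi : Integrable ρ volume)
    {p : ℝ → ℝ} (hp : Continuous p) (hp0 : p 0 = 0) : VV (fun x => p (ρ x)) := by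
  obtain ⟨K, hK⟩ := hρ.comp hp
  refine ⟨hK.li, fun ε hε => ?_⟩
  obtain ⟨δ, hδ, h⟩ := Metric.continuous_iff.1 hp 0 ε hε
  refine ⟨fun x => K / δ * ρ x, hρi.const_mul _, Eventually.of_forall fun x => ?_⟩
  have hK0 := hK.nonneg
  by_cases hx : ρ x < δ
  · have h1 := h (ρ x) (by rw [Real.dist_eq, sub_zero, abs_of_nonneg (hρ0 x)]; exact hx)
    rw [hp0, Real.dist_eq, sub_zero] at h1
    have : 0 ≤ K / δ * ρ x := mul_nonneg (by positivity) (hρ0 x)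
    simp only; linarith
  · push Not at hx
    have h1 := hK.bd x
    have h2 : K ≤ K / δ * ρ x := by
      have := mul_le_mul_of_nonneg_left hx (div_nonneg hK0 hδ.le)
      rwa [div_mul_cancel₀ _ hδ.ne'] at this
    simp only at h1 ⊢; linarith

lemma core {ρ : E3 → ℝ} {u : Fin 3 → E3 → ℝ} {M N μ lam : ℝ} (hμ : 0 < μ) (hlam : 0 ≤ lam)
    (hρ : BM ρ M) (hρ0 : ∀ x, 0 ≤ ρ x) (hρi : Integrable ρ volume) (hu : ∀ i, BM (u i) N)
    {p : ℝ → ℝ} (hp : Continuous p) (hp0 : p 0 = 0) (hpn : ∀ s, 0 ≤ p s)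
    (hmass : ∀ F, TF F → ∑ i, ∫ x, ρ x * u i x * pd F i x = 0)
    (hmom : ∀ i χ, TF χ → (∑ j, ∫ x, ρ x * u i x * u j x * pd χ j x) + (∫ x, p (ρ x) * pd χ i x) +
      μ * (∫ x, u i x * Lap χ x) + lam * ∑ a, ∫ x, u a x * pd (pd χ i) a x = 0) :
    ∃ C : Fin 3 → ℝ, ∀ i, ∀ᵐ x, u i x = C i := by
  have hν : 0 < μ + lam := by linarith
  have hVV := vv_press hρ hρ0 hρi hp hp0
  obtain ⟨K, hK⟩ := hρ.comp hp
  obtain ⟨h, hh, hdiv⟩ := div_id hν hρ hρi hu hVV hmom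
  choose c hc hcurl using fun i k => curl_id hμ hρ hρi hu hmom i k
  have hρL := L2.of_bi hρ hρi
  have hDl : LocallyIntegrable (fun x => (μ + lam)⁻¹ * (h x + p (ρ x))) volume :=
    ((hh.locallyIntegrable (by norm_num)).add hK.li).smul (μ + lam)⁻¹
  have hDs : ∀ s, TF s → L2 (fun x => s x * ((μ + lam)⁻¹ * (h x + p (ρ x)))) := by
    intro s hs
    obtain ⟨J, hJ⟩ := BM.of_tf hs
    have h1 := ((L2.bm_mul hJ hh).add (L2.bm_mul hK hs.L2)).const_mul (μ + lam)⁻¹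
    refine h1.congr_norm (hs.cont.aestronglyMeasurable.mul hDl.aestronglyMeasurable) (Eventually.of_forall fun x => ?_)
    simp only [Pi.add_apply]
    congr 1; ring
  have hDi : Integrable (fun x => ρ x * ((μ + lam)⁻¹ * (h x + p (ρ x)))) volume := by
    have h1 := ((hρL.mul_int hh).add (hK.mul_int hρi)).const_mul (μ + lam)⁻¹
    refine h1.congr (Eventually.of_forall fun x => ?_)
    simp only [Pi.add_apply]; ring
  have hP := press_poly hρ hρi hu hmass hc hcurl hdiv hDl hDs hDi
  have hf : ∀ f : ℝ → ℝ, Continuous f → ∫ x, ρ x * (h x + p (ρ x)) * (ρ x * f (ρ x)) = 0 := by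
    intro f hf
    have h1 := press_cont hρ hρ0 hDi hP hf
    have h2 : ∫ x, ρ x * ((μ + lam)⁻¹ * (h x + p (ρ x))) * (ρ x * f (ρ x)) =
        (μ + lam)⁻¹ * ∫ x, ρ x * (h x + p (ρ x)) * (ρ x * f (ρ x)) := by
      rw [← integral_const_mul]; congr 1; ext x; ring
    rw [h2] at h1
    exact (mul_eq_zero.1 h1).resolve_left (inv_ne_zero hν.ne')
  obtain ⟨hq, hqD⟩ := press_L2 hρ hρ0 hρi hp hp0 hpn hh hf
  refine energy hμ hlam hρ hρi hu hmass hmom hc ((hh.add hq).const_mul (μ + lam)⁻¹) hq hcurl hdiv ?_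
  have h2 : ∫ x, p (ρ x) * ((μ + lam)⁻¹ * (h x + p (ρ x))) = (μ + lam)⁻¹ * ∫ x, p (ρ x) * (h x + p (ρ x)) := by
    rw [← integral_const_mul]; congr 1; ext x; ring
  exact h2.trans (by rw [hqD, mul_zero])

lemma clamp {f : E3 → ℝ} (hf : AEMeasurable f volume) {M : ℝ} (hM : 0 ≤ M) (hb : ∀ᵐ x, |f x| ≤ M) :
    ∃ g, BM g M ∧ ∀ᵐ x, f x = g x := by
  refine ⟨fun x => max (-M) (min (hf.mk f x) M), ⟨measurable_const.max (hf.measurable_mk.min measurable_const), fun x => ?_⟩, ?_⟩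
  · rw [abs_le]
    exact ⟨le_max_left _ _, max_le (by linarith) (min_le_right _ _)⟩
  · filter_upwards [hb, hf.ae_eq_mk] with x h1 h2
    rw [← h2, min_eq_left (abs_le.1 h1).2, max_eq_right (abs_le.1 h1).1]

lemma ae_bd {F : Type*} [NormedAddCommGroup F] {f : E3 → F} (hf : MemLp f ⊤ volume) : ∃ M : ℝ, 0 ≤ M ∧ ∀ᵐ x, ‖f x‖ ≤ M := by
  refine ⟨(eLpNorm f ⊤ volume).toReal, ENNReal.toReal_nonneg, ?_⟩
  have h := ae_le_eLpNormEssSup (f := f) (μ := (volume : Measure E3))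
  rw [← eLpNorm_exponent_top] at h
  filter_upwards [h] with x hx
  rw [← toReal_enorm]
  exact ENNReal.toReal_mono hf.2.ne hx

theorem main_aux
    (μ η : ℝ) (hμ : 0 < μ) (hη : 0 ≤ η)
    (p : ℝ → ℝ)
    (hp_cont : ContinuousOn p (Ici 0)) (hp0 : p 0 = 0)
    (hp_nonneg : ∀ s, 0 ≤ s → 0 ≤ p s)
    (ρ : E3 → ℝ) (u : E3 → Fin 3 → ℝ)
    (hsol : VeryWeakSolution μ η p (fun _ => 0) (fun _ => fun _ => 0) ρ u)
    (hρ1 : MemLp ρ 1 volume) (hρ_top : MemLp ρ ⊤ volume)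
    (hu_top : MemLp u ⊤ volume) :
    ∃ c : Fin 3 → ℝ, (∀ᵐ x, u x = c) ∧ (c = 0 ∨ ∀ᵐ x, ρ x = 0) := by
  obtain ⟨M, hM, hMb⟩ := ae_bd hρ_top
  obtain ⟨N, hN, hNb⟩ := ae_bd hu_top
  obtain ⟨r0, hr0, hr0e⟩ := clamp hsol.aemeas_ρ hM hMb
  obtain ⟨r, hr, hrn, hre⟩ : ∃ r, BM r M ∧ (∀ x, 0 ≤ r x) ∧ ∀ᵐ x, ρ x = r x := by
    refine ⟨fun x => |r0 x|, ⟨hr0.meas.abs, fun x => by rw [abs_abs]; exact hr0.bd x⟩, fun x => abs_nonneg _, ?_⟩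
    filter_upwards [hr0e, hsol.ρ_nonneg] with x h1 h2
    rw [← h1, abs_of_nonneg h2]
  have hri : Integrable r volume := (memLp_one_iff_integrable.1 hρ1).congr hre
  have hum : ∀ i, ∃ g, BM g N ∧ ∀ᵐ x, u x i = g x := fun i =>
    clamp (f := fun x => u x i) ((measurable_pi_apply i).comp_aemeasurable hsol.aemeas_u) hN (by
      filter_upwards [hNb] with x hx
      exact (norm_le_pi_norm (u x) i).trans hx)
  choose v hv hve using hum
  have hve' : ∀ᵐ x, ∀ i, u x i = v i x := ae_all_iff.2 hve
  let pt : ℝ → ℝ := fun s => p (max s 0)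
  have hpt : Continuous pt := by
    refine ContinuousOn.comp_continuous hp_cont (by fun_prop) fun s => mem_Ici.2 (le_max_right _ _)
  have hpt0 : pt 0 = 0 := by simp [pt, hp0]
  have hptn : ∀ s, 0 ≤ pt s := fun s => hp_nonneg _ (le_max_right _ _)
  obtain ⟨K, hK⟩ := hr.comp hpt
  have hmass : ∀ F, TF F → ∑ i, ∫ x, r x * v i x * pd F i x = 0 := by
    intro F hF
    rw [← hsol.mass F hF.smooth hF.cpt, ← integral_finsetSum _ fun i _ => (hr.mul (hv i)).mul_int (hF.pd i).integrable]
    refine integral_congr_ae ?_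
    filter_upwards [hre, hve'] with x h1 h2
    rw [Finset.mul_sum]
    refine Finset.sum_congr rfl fun i _ => ?_
    rw [h1, h2 i]; ring
  have hmom : ∀ i χ, TF χ → (∑ j, ∫ x, r x * v i x * v j x * pd χ j x) + (∫ x, pt (r x) * pd χ i x) +
      μ * (∫ x, v i x * Lap χ x) + (μ / 3 + η) * ∑ a, ∫ x, v a x * pd (pd χ i) a x = 0 := by
    intro i χ hχ
    let e : Fin 3 → ℝ := fun a => if a = i then 1 else 0
    have hsum : ∀ f : Fin 3 → ℝ, ∑ a, e a * f a = f i := fun f => by simp [e]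
    let φ : E3 → Fin 3 → ℝ := fun y a => e a * χ y
    have hφa : ∀ a, (fun y => φ y a) = fun y => e a * χ y := fun a => rfl
    have hpd : ∀ a j, pd (fun y => φ y a) j = fun x => e a * pd χ j x := fun a j => pd_const_mul (e a) hχ.diff j
    have hφ2 : ContDiff ℝ 2 φ := contDiff_pi.2 fun a => contDiff_const.mul (hχ.smooth.of_le (by norm_cast))
    have hφc : HasCompactSupport φ := by
      refine hχ.cpt.mono fun x hx => ?_
      contrapose! hx
      have : χ x = 0 := by simpa using hx
      simp only [Function.mem_support, not_not]
      ext a; simp [φ, this]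
    have key := hsol.momentum φ hφ2 hφc
    have hlap : ∀ a x, lap φ a x = e a * Lap χ x := by
      intro a x
      unfold lap Lap
      rw [Finset.mul_sum]
      refine Finset.sum_congr rfl fun j _ => ?_
      rw [hpd, pd_const_mul (e a) (hχ.pd j).diff]
    have hgd : ∀ a x, gradDivg φ a x = pd (pd χ i) a x := by
      intro a x
      unfold gradDivg
      congr 1
      ext y
      simp only [hpd]
      exact hsum fun j => pd χ j y
    have hitg : ∀ j, Integrable (fun x => r x * v i x * v j x * pd χ j x) volume := fun j =>
      ((hr.mul (hv i)).mul (hv j)).mul_int (hχ.pd j).integrable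
    have hitgq : Integrable (fun x => pt (r x) * pd χ i x) volume := hK.mul_int (hχ.pd i).integrable
    have hintL : Integrable (fun x => v i x * Lap χ x) volume := (hv i).mul_int hχ.lap.integrable
    have hintG : ∀ a, Integrable (fun x => v a x * pd (pd χ i) a x) volume := fun a =>
      (hv a).mul_int ((hχ.pd i).pd a).integrable
    have eL : ∫ x, ((∑ i, ∑ j, ρ x * u x i * u x j * tgrad φ x i j) + p (ρ x) * (∑ i, tgrad φ x i i)) =
        (∑ j, ∫ x, r x * v i x * v j x * pd χ j x) + (∫ x, pt (r x) * pd χ i x) := by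
      rw [← integral_finsetSum _ fun j _ => hitg j, ← integral_add (integrable_finset_sum _ fun j _ => hitg j) hitgq]
      refine integral_congr_ae ?_
      filter_upwards [hre, hve'] with x h1 h2
      have t : ∀ a j, tgrad φ x a j = e a * pd χ j x := fun a j => by unfold tgrad; rw [hpd]
      simp only [t, h2, h1]
      have hp1 : pt (r x) = p (r x) := by simp only [pt]; rw [max_eq_left (hrn x)]
      rw [hsum fun j => pd χ j x, hp1, ← hsum fun a => ∑ j, r x * v a x * v j x * pd χ j x]
      congr 1
      refine Finset.sum_congr rfl fun a _ => ?_
      rw [Finset.mul_sum]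
      refine Finset.sum_congr rfl fun j _ => ?_
      ring
    have eR : ∫ x, ∑ i, (μ * lap φ i x + (μ / 3 + η) * gradDivg φ i x) * u x i =
        μ * (∫ x, v i x * Lap χ x) + (μ / 3 + η) * ∑ a, ∫ x, v a x * pd (pd χ i) a x := by
      rw [← integral_finsetSum _ fun j _ => hintG j, ← integral_const_mul, ← integral_const_mul,
        ← integral_add (hintL.const_mul _) ((integrable_finset_sum _ fun j _ => hintG j).const_mul _)]
      refine integral_congr_ae ?_
      filter_upwards [hve'] with x h2
      simp only [hlap, hgd, h2]
      rw [← hsum fun a => v a x * Lap χ x, Finset.mul_sum, Finset.mul_sum, ← Finset.sum_add_distrib]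
      refine Finset.sum_congr rfl fun a _ => ?_
      ring
    rw [eL, eR] at key
    simp only [mul_zero, zero_mul, Finset.sum_const_zero, integral_zero] at key
    linarith
  obtain ⟨C, hC⟩ := core hμ (by positivity) hr hrn hri hv hpt hpt0 hptn hmass hmom
  have hC' : ∀ᵐ x, ∀ i, v i x = C i := ae_all_iff.2 hC
  refine ⟨C, ?_, ?_⟩
  · filter_upwards [hve', hC'] with x h1 h2
    ext i; rw [h1, h2]
  · by_cases h0 : C = 0
    · exact Or.inl h0
    right
    have := final hri h0 fun F hF => by
      rw [← hmass F hF]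
      refine Finset.sum_congr rfl fun i _ => integral_congr_ae ?_
      filter_upwards [hC'] with x hx
      rw [hx i]
    filter_upwards [this, hre] with x h1 h2
    rw [h2, h1]

/-- **Theorem 3, part 1.** Let `(ρ, u)` be a very weak solution on `ℝ³` with potential `G = 0`,
where `p` is continuous with `p(0) = 0`, `p ≥ 0`, and `C¹` on `(0,∞)`. If
`ρ ∈ L¹ ∩ L^∞(ℝ³)` and `u ∈ L^∞(ℝ³)`, then `u` equals a constant vector `u_∞` a.e.;
moreover, either `u_∞ = 0` or `ρ = 0` a.e. -/
theorem liouville_very_weak_no_force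
    (μ η : ℝ) (hμ : 0 < μ) (hη : 0 ≤ η)
    (p p' : ℝ → ℝ)
    (hp_cont : ContinuousOn p (Ici 0)) (hp0 : p 0 = 0)
    (hp_nonneg : ∀ s, 0 ≤ s → 0 ≤ p s)
    (hp_deriv : ∀ s, 0 < s → HasDerivAt p (p' s) s)
    (hp'_cont : ContinuousOn p' (Ioi 0))
    (ρ : E3 → ℝ) (u : E3 → Fin 3 → ℝ)
    (hsol : VeryWeakSolution μ η p (fun _ => 0) (fun _ => fun _ => 0) ρ u)
    (hρ1 : MemLp ρ 1 volume) (hρ_top : MemLp ρ ⊤ volume)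
    (hu_top : MemLp u ⊤ volume) :
    ∃ c : Fin 3 → ℝ, (∀ᵐ x, u x = c) ∧ (c = 0 ∨ ∀ᵐ x, ρ x = 0) := by
  exact main_aux μ η hμ hη p hp_cont hp0 hp_nonneg ρ u hsol hρ1 hρ_top hu_top
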